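/- arXiv:1303.5333 — 14 statements merged into one kernel-verified Lean document; each statement's English description precedes it below -/
import Mathlib

section
/- Let Z be a unique factorization domain, let n ≥ 2 be an integer, and let f ∈ Z[X] be irreducible in Z[X] with positive degree m, leading coefficient a, and nonzero constant coefficient b. Say that condition C(m', a', b', n) holds (for m' ∈ ℕ, a', b' ∈ Z) if for every prime number p dividing n and every unit u ∈ Zˣ, at least one of the following is true: (A) u·a' is not a p-th power in Z; (B) (−1)^{m'}·u·b' is not a p-th power in Z, and moreover if 4 divides n then u·b' is not a square in Z. If C(m, a, b, n) holds or C(m, b, a, n) holds, then f(X^n) is irreducible in Z[X]. -/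
open Polynomial

/-- Condition C(m, a, b, n): for each prime `p` dividing `n` and each unit `u`,
either `u·a` is not a `p`-th power, or (`(-1)^m·u·b` is not a `p`-th power and,
if `4 ∣ n`, `u·b` is not a square). -/
def CondC {Z : Type*} [CommRing Z] (m : ℕ) (a b : Z) (n : ℕ) : Prop :=
  ∀ p : ℕ, p.Prime → p ∣ n → ∀ u : Zˣ,
    (¬ ∃ c : Z, (u : Z) * a = c ^ p) ∨
      ((¬ ∃ c : Z, (-1 : Z) ^ m * (u : Z) * b = c ^ p) ∧
        (4 ∣ n → ¬ ∃ c : Z, (u : Z) * b = c ^ 2))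


theorem capelli' {K : Type*} [Field K] {n : ℕ} (hn : n ≠ 0) {a : K}
    (ha : ∀ p : ℕ, p.Prime → p ∣ n → ∀ b : K, b ^ p ≠ a)
    (h4 : 4 ∣ n → ∀ b : K, b ^ 2 ≠ -a) :
    Irreducible (X ^ n - C a) := by
  induction n using induction_on_primes generalizing K a with
  | zero => simp at hn
  | one => simpa using irreducible_X_sub_C a
  | prime_mul p n hp IH =>
    rw [mul_comm]
    apply X_pow_mul_sub_C_irreducible
      (X_pow_sub_C_irreducible_of_prime hp (ha p hp (dvd_mul_right _ _)))
    intro E _ _ x hx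
    have hint : IsIntegral K x := not_not.mp fun h ↦ by
      simpa only [degree_zero, degree_X_pow_sub_C hp.pos,
        WithBot.natCast_ne_bot] using congr_arg degree (hx.symm.trans (dif_neg h))
    have hN : Algebra.norm K (IntermediateField.AdjoinSimple.gen K x) = (-1) ^ p * (-a) := by
      rw [← IntermediateField.adjoin.powerBasis_gen hint,
        Algebra.PowerBasis.norm_gen_eq_coeff_zero_minpoly]
      simp [IntermediateField.minpoly_gen, hx, hp.ne_zero.symm]
    have hfr : Module.finrank K (IntermediateField.adjoin K {x}) = p := by
      rw [IntermediateField.adjoin.finrank hint, hx, natDegree_X_pow_sub_C]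
    have hN' : Algebra.norm K (-IntermediateField.AdjoinSimple.gen K x) = -a := by
      have : (-1 : IntermediateField.adjoin K {x}) = algebraMap K _ (-1) := by simp
      rw [← neg_one_mul, map_mul, hN, this, Algebra.norm_algebraMap, hfr, ← mul_assoc, ← mul_pow]
      simp
    apply IH (right_ne_zero_of_mul hn)
    · intro q hq hqn b hb
      have h1 : (Algebra.norm K b) ^ q = (-1) ^ p * (-a) := by rw [← map_pow, hb, hN]
      rcases hp.eq_two_or_odd' with rfl | hodd
      · simp at h1
        rcases hq.eq_two_or_odd' with rfl | hq'
        · exact h4 (mul_dvd_mul_left 2 hqn) _ h1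
        · exact ha q hq (dvd_mul_of_dvd_right hqn _) (-Algebra.norm K b) (by
            rw [hq'.neg_pow, h1, neg_neg])
      · rw [hodd.neg_one_pow] at h1
        exact ha q hq (dvd_mul_of_dvd_right hqn _) (Algebra.norm K b) (by rw [h1]; ring)
    · intro h b hb
      exact h4 (dvd_mul_of_dvd_right h _) (Algebra.norm K b) (by rw [← map_pow, hb, hN'])

noncomputable def RR {R : Type*} [CommRing R] (p m : ℕ) (c : R[X]) : R[X] :=
  resultant (c.map C) (X ^ p - C X) m p

theorem RR_map {R S : Type*} [CommRing R] [CommRing S] (φ : R →+* S) (p m : ℕ) (c : R[X]) :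
    RR p m (c.map φ) = (RR p m c).map φ := by
  unfold RR
  rw [← coe_mapRingHom φ, ← resultant_map_map]
  congr 1
  · rw  [map_map, coe_mapRingHom, map_map]; congr 1; ext; simp
  · simp

theorem RR_mul {R : Type*} [CommRing R] [IsDomain R] (p : ℕ) (c d : R[X])
    (hc : c ≠ 0) (hd : d ≠ 0) :
    RR p (c * d).natDegree (c * d) = RR p c.natDegree c * RR p d.natDegree d := by
  unfold RR
  have := resultant_mul_left (c.map C) (d.map C) (X ^ p - C (X : R[X])) p (by simp [natDegree_X_pow_sub_C])
  rw [natDegree_map_eq_of_injective C_injective, natDegree_map_eq_of_injective C_injective] at this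
  rw [natDegree_mul hc hd, Polynomial.map_mul, this]

theorem RR_closed {F : Type*} [Field F] [IsAlgClosed F] {p : ℕ} (hp : p ≠ 0) (c : F[X]) (hc : c ≠ 0) :
    (RR p c.natDegree c).natDegree = c.natDegree ∧
    (RR p c.natDegree c).leadingCoeff = (-1) ^ c.natDegree * c.leadingCoeff ^ p := by
  induction h : c.natDegree generalizing c with
  | zero =>
    obtain ⟨a, rfl⟩ := natDegree_eq_zero.1 h
    simp only [RR, Polynomial.map_C, resultant_C_zero_left, ← C_pow]
    simp
  | succ k ih =>
    obtain ⟨r, hr⟩ := IsAlgClosed.exists_root c (by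
      intro h0; rw [natDegree_eq_of_degree_eq_some (n := 0) h0] at h; omega)
    obtain ⟨d, rfl⟩ := dvd_iff_isRoot.2 hr
    have hd : d ≠ 0 := right_ne_zero_of_mul hc
    have hk : d.natDegree = k := by
      rw [natDegree_mul (X_sub_C_ne_zero r) hd, natDegree_X_sub_C] at h; omega
    have h1 : RR p (X - C r).natDegree (X - C r) = - (X - C (r ^ p)) := by
      have := resultant_X_sub_C_pow_left (C r) (X ^ p - C (X : F[X])) 1 p
        (by simp [natDegree_X_pow_sub_C])
      have e : (X - C r).map C = X - C (C r : F[X]) := by simp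
      rw [RR, natDegree_X_sub_C, e]
      rw [pow_one] at this
      rw [this]
      simp
    obtain ⟨i1, i2⟩ := ih d hd hk
    have hne : RR p k d ≠ 0 := by
      intro h0; rw [h0] at i2; simp [hd] at i2
    rw [← h, RR_mul _ _ _ (X_sub_C_ne_zero r) hd, h1, h, hk]
    refine ⟨?_, ?_⟩
    · rw [natDegree_mul (neg_ne_zero.2 (X_sub_C_ne_zero _)) hne, natDegree_neg, natDegree_X_sub_C,
        i1, add_comm]
    · rw [leadingCoeff_mul, i2, leadingCoeff_neg, leadingCoeff_X_sub_C, leadingCoeff_mul,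
        leadingCoeff_X_sub_C]; ring

theorem RR_domain {R : Type*} [CommRing R] [IsDomain R] {p : ℕ} (hp : p ≠ 0) (c : R[X]) (hc : c ≠ 0) :
    (RR p c.natDegree c).natDegree = c.natDegree ∧
    (RR p c.natDegree c).leadingCoeff = (-1) ^ c.natDegree * c.leadingCoeff ^ p := by
  let φ : R →+* AlgebraicClosure (FractionRing R) :=
    (algebraMap (FractionRing R) _).comp (algebraMap R (FractionRing R))
  have hφ : Function.Injective φ := 
    (algebraMap (FractionRing R) _).injective.comp (IsFractionRing.injective R _)
  have := RR_closed hp (c.map φ) ((Polynomial.map_ne_zero_iff hφ).2 hc)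
  rw [natDegree_map_eq_of_injective hφ, RR_map, natDegree_map_eq_of_injective hφ,
    leadingCoeff_map_of_injective hφ, leadingCoeff_map_of_injective hφ] at this
  refine ⟨this.1, hφ ?_⟩
  simpa using this.2

theorem RR_ne_zero {R : Type*} [CommRing R] [IsDomain R] {p m : ℕ} (hp : p ≠ 0) (c : R[X])
    (hc : c ≠ 0) (hm : c.natDegree ≤ m) : RR p m c ≠ 0 := by
  have h0 : RR p c.natDegree c ≠ 0 := by
    intro h
    have := (RR_domain hp c hc).2
    rw [h] at this; simp [hc] at this
  obtain ⟨k, rfl⟩ := Nat.exists_eq_add_of_le hm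
  unfold RR at *
  rw [resultant_add_left_deg _ _ _ _ _ (by simp [natDegree_map_eq_of_injective C_injective])]
  refine mul_ne_zero (mul_ne_zero (by simp) ?_) h0
  simp [coeff_X_pow, coeff_C, hp]

theorem RR_prim {R : Type*} [CommRing R] [IsDomain R] [UniqueFactorizationMonoid R]
    {p : ℕ} (hp : p ≠ 0) (c : R[X]) (hc : c.IsPrimitive) : (RR p c.natDegree c).IsPrimitive := by
  have hc0 := hc.ne_zero
  have key : ∀ q : R, Prime q → ¬ C q ∣ RR p c.natDegree c := by
    intro q hq hdvd
    have hP : (Ideal.span {q}).IsPrime := (Ideal.span_singleton_prime hq.ne_zero).2 hq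
    have hz : ∀ d : R[X], d.map (Ideal.Quotient.mk (Ideal.span {q})) = 0 ↔ C q ∣ d := by
      intro d
      rw [C_dvd_iff_dvd_coeff, Polynomial.ext_iff]
      simp [Ideal.Quotient.eq_zero_iff_mem, Ideal.mem_span_singleton]
    have h1 := RR_ne_zero (R := R ⧸ Ideal.span {q}) (m := c.natDegree) hp
      (c.map (Ideal.Quotient.mk (Ideal.span {q}))) (by
        rw [Ne, hz]; intro h; exact hq.not_isUnit (hc q h)) natDegree_map_le
    rw [RR_map, Ne, hz] at h1
    exact h1 hdvd
  intro r hr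
  by_contra hu
  by_cases h0 : r = 0
  · subst h0
    rw [map_zero, zero_dvd_iff] at hr
    exact RR_ne_zero hp c hc0 le_rfl hr
  obtain ⟨q, hq, hqr⟩ := WfDvdMonoid.exists_irreducible_factor hu h0
  exact key q hq.prime ((map_dvd C hqr).trans hr)

theorem RR_coeff_zero {R : Type*} [CommRing R] {p m : ℕ} (hp : p ≠ 0) (c : R[X])
    (hm : c.natDegree ≤ m) : (RR p m c).coeff 0 = (-1) ^ (m * p) * c.coeff 0 ^ p := by
  rw [← resultant_X_pow_right c m p hm, ← constantCoeff_apply]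
  unfold RR
  rw [← resultant_map_map, map_map]
  congr 1
  · convert c.map_id
    ext; simp
  · simp

theorem RR_root {R S : Type*} [CommRing R] [CommRing S] [Algebra R S] {p m : ℕ} (hp : p ≠ 0)
    (c : R[X]) (hm : c.natDegree ≤ m) (b : S) (hb : aeval b c = 0) :
    aeval (b ^ p) (RR p m c) = 0 := by
  nontriviality S
  have : Nontrivial R := (algebraMap R S).domain_nontrivial
  obtain ⟨P, Q, -, -, h⟩ := exists_mul_add_mul_eq_C_resultant (m := m) (n := p) (c.map C)
    (X ^ p - C (X : R[X])) (by simpa [natDegree_map_eq_of_injective C_injective])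
    (by simp [natDegree_X_pow_sub_C]) (Or.inr hp)
  have := congrArg (eval₂ (aeval (b ^ p) : R[X] →ₐ[R] S).toRingHom b) h
  rw [eval₂_add, eval₂_mul, eval₂_mul, eval₂_C, eval₂_map] at this
  have h2 : eval₂ ((aeval (b ^ p) : R[X] →ₐ[R] S).toRingHom.comp C) b c = 0 := by
    rw [← hb, aeval_def]; congr 1; ext; simp
  rw [h2] at this
  simpa [RR] using this.symm

theorem key {Z K L : Type*} [CommRing Z] [IsDomain Z] [UniqueFactorizationMonoid Z]
    [Field K] [Field L] [Algebra Z K] [IsFractionRing Z K] [Algebra K L] [Algebra Z L]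
    [IsScalarTower Z K L] [FiniteDimensional K L]
    {f : Z[X]} (hf : Irreducible f) (hdeg : 0 < f.natDegree)
    (hfr : Module.finrank K L = f.natDegree) {p : ℕ} (hp : p ≠ 0) (b : L)
    (hb : aeval (b ^ p) f = 0) :
    ∃ u : Zˣ, (∃ c : Z, (u : Z) * f.coeff 0 = c ^ p) ∧
      ∃ c : Z, (-1) ^ f.natDegree * (u : Z) * f.leadingCoeff = c ^ p := by
  let _ : NormalizedGCDMonoid Z := Nonempty.some inferInstance
  have hfp : f.IsPrimitive := hf.isPrimitive hdeg.ne'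
  have hfK := (hfp.irreducible_iff_irreducible_map_fraction_map (K := K)).1 hf
  -- primitive polynomial of b
  obtain ⟨g, hgp, hgd, hgb⟩ : ∃ g : Z[X], g.IsPrimitive ∧ g.natDegree ≤ f.natDegree ∧
      aeval b g = 0 := by
    have hbi : IsIntegral K b := IsIntegral.of_finite K b
    set q := IsLocalization.integerNormalization (nonZeroDivisors Z) (minpoly K b) with hq
    have h1 : aeval b q = 0 := IsLocalization.integerNormalization_aeval_eq_zero _ _ (minpoly.aeval K b)
    have hq0 : q ≠ 0 := by
      rw [hq, Ne, IsFractionRing.integerNormalization_eq_zero_iff]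
      exact minpoly.ne_zero hbi
    have hqd : q.natDegree ≤ (minpoly K b).natDegree := by
      rw [natDegree_le_iff_coeff_eq_zero]
      intro N hN
      obtain ⟨s, -, hs⟩ := IsLocalization.integerNormalization_spec (nonZeroDivisors Z) (minpoly K b)
      have := congrArg (fun t => coeff t N) hs
      apply IsFractionRing.injective Z K
      simp [coeff_eq_zero_of_natDegree_lt hN] at this
      simpa [hq] using this
    refine ⟨q.primPart, q.isPrimitive_primPart, ?_, ?_⟩
    · rw [natDegree_primPart, ← hfr]
      exact hqd.trans (minpoly.natDegree_le b)
    · exact eval₂_primPart_eq_zero (by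
        change Function.Injective (algebraMap Z L)
        rw [IsScalarTower.algebraMap_eq Z K L]
        exact (algebraMap K L).injective.comp (IsFractionRing.injective Z K)) hq0 h1
  set h := RR p g.natDegree g with hh
  have hroot : aeval (b ^ p) h = 0 := RR_root hp g le_rfl b hgb
  have hprim : h.IsPrimitive := RR_prim hp g hgp
  obtain ⟨hnd, hlc⟩ := RR_domain hp g hgp.ne_zero
  have h0 := RR_coeff_zero hp g le_rfl
  rw [← hh] at hnd hlc h0
  have hdvd : f ∣ h := by
    rw [hfp.dvd_iff_fraction_map_dvd_fraction_map K]
    have e := minpoly.eq_of_irreducible (x := b ^ p) hfK (by simpa using hb)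
    refine (Dvd.intro _ e).trans (minpoly.dvd K _ (by simpa using hroot))
  obtain ⟨w, hw⟩ := hdvd
  have hw0 : w ≠ 0 := by rintro rfl; exact hprim.ne_zero (by simpa using hw)
  have hnd2 := congrArg natDegree hw
  rw [natDegree_mul hf.ne_zero hw0, hnd] at hnd2
  obtain ⟨v, rfl⟩ := natDegree_eq_zero.1 (show w.natDegree = 0 by omega)
  obtain ⟨u, rfl⟩ := hprim v ⟨f, by rw [hw, mul_comm]⟩
  have hgm : g.natDegree = f.natDegree := by simpa using hnd2
  refine ⟨u, ⟨(-1) ^ f.natDegree * g.coeff 0, ?_⟩, ⟨g.leadingCoeff, ?_⟩⟩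
  · rw [mul_pow, ← pow_mul, ← hgm, ← h0, hw, coeff_mul_C, mul_comm]
  · have : f.leadingCoeff * u = (-1) ^ f.natDegree * g.leadingCoeff ^ p := by
      rw [← hgm, ← hlc, hw, leadingCoeff_mul, leadingCoeff_C]
    rw [mul_assoc, mul_comm (u : Z), this, ← mul_assoc, ← mul_pow]
    simp


theorem irr_neg {Z : Type*} [CommRing Z] {f : Z[X]} (hf : Irreducible f) :
    Irreducible (f.comp (-X)) := by
  have h : ∀ q : Z[X], q.comp (-X) = algEquivAevalNegX q := by
    intro q; simp [algEquivAevalNegX, comp, aeval_def]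
  rw [h]
  exact (MulEquiv.irreducible_iff (algEquivAevalNegX (R := Z))).2 hf

theorem stmt0 {Z : Type*} [CommRing Z] [IsDomain Z] [UniqueFactorizationMonoid Z]
    {n : ℕ} (hn : 2 ≤ n) {f : Polynomial Z} (hf : Irreducible f)
    (hdeg : 0 < f.natDegree) (hb : f.coeff 0 ≠ 0)
    (hC : CondC f.natDegree f.leadingCoeff (f.coeff 0) n ∨
          CondC f.natDegree (f.coeff 0) f.leadingCoeff n) :
    Irreducible (f.comp (X ^ n)) := by
  let _ : NormalizedGCDMonoid Z := Nonempty.some inferInstance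
  let K := FractionRing Z
  have hfp : f.IsPrimitive := hf.isPrimitive hdeg.ne'
  have hinj := IsFractionRing.injective Z K
  have hfK := (hfp.irreducible_iff_irreducible_map_fraction_map (K := K)).1 hf
  have hprim : (f.comp (X ^ n)).IsPrimitive := by
    intro r hr
    apply hfp r
    rw [C_dvd_iff_dvd_coeff] at hr ⊢
    intro i
    have := hr (i * n)
    rwa [← expand_eq_comp_X_pow, coeff_expand_mul (by omega)] at this
  apply hprim.irreducible_of_irreducible_map_of_injective hinj
  set F := f.map (algebraMap Z K) with hF
  have hF0 : F ≠ 0 := hfK.ne_zero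
  set F1 := F * C F.leadingCoeff⁻¹ with hF1
  have hu : IsUnit (C F.leadingCoeff⁻¹) := by
    rw [isUnit_C]; exact (inv_ne_zero (leadingCoeff_ne_zero.2 hF0)).isUnit
  have hF1irr : Irreducible F1 := (irreducible_mul_isUnit hu).2 hfK
  have hmon : F1.Monic := monic_mul_leadingCoeff_inv hF0
  have hnd : F1.natDegree = f.natDegree := by
    rw [hF1, natDegree_mul_C (inv_ne_zero (leadingCoeff_ne_zero.2 hF0)), hF,
      natDegree_map_eq_of_injective hinj]
  have main : Irreducible (F1.comp (X ^ n)) := by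
    apply irreducible_comp hmon (monic_X_pow n) hF1irr
    intro E _ _ x hx
    rw [Polynomial.map_pow, map_X]
    have hint : IsIntegral K x := by
      by_contra h
      exact hF1irr.ne_zero (hx.symm.trans (minpoly.eq_zero h))
    letI : Algebra Z (IntermediateField.adjoin K {x}) :=
      ((algebraMap K (IntermediateField.adjoin K {x})).comp (algebraMap Z K)).toAlgebra
    haveI : IsScalarTower Z K (IntermediateField.adjoin K {x}) :=
      IsScalarTower.of_algebraMap_eq fun _ => rfl
    have hfd : FiniteDimensional K (IntermediateField.adjoin K {x}) :=
      IntermediateField.adjoin.finiteDimensional hint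
    have hfr : Module.finrank K (IntermediateField.adjoin K {x}) = f.natDegree := by
      rw [IntermediateField.adjoin.finrank hint, hx, hnd]
    have hroot : aeval (IntermediateField.AdjoinSimple.gen K x) f = 0 := by
      have h1 := minpoly.aeval K (IntermediateField.AdjoinSimple.gen K x)
      rw [IntermediateField.minpoly_gen, hx, hF1, map_mul, aeval_C, mul_eq_zero] at h1
      rcases h1 with h1 | h1
      · simpa [hF] using h1
      · simp [hF0] at h1
    apply capelli' (by omega)
    · intro p hp hpn b hbp
      obtain ⟨u, ⟨c, hc⟩, ⟨d, hd⟩⟩ := key (K := K) hf hdeg hfr hp.ne_zero b (by rw [hbp, hroot])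
      rcases hC with hC | hC
      · rcases hC p hp hpn ((-1) ^ f.natDegree * u) with h | ⟨h, -⟩
        · exact h ⟨d, by simpa using hd⟩
        · refine h ⟨c, ?_⟩
          rw [← hc]
          push_cast
          rw [← mul_assoc, ← mul_pow]
          simp
      · rcases hC p hp hpn u with h | ⟨h, -⟩
        · exact h ⟨c, hc⟩
        · exact h ⟨d, hd⟩
    · intro h4 b hb2
      have hnd' : (f.comp (-X)).natDegree = f.natDegree := by simp [natDegree_comp]
      obtain ⟨u, ⟨c, hc⟩, ⟨d, hd⟩⟩ := key (K := K) (irr_neg hf) (by rwa [hnd'])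
        (by rw [hnd', hfr]) two_ne_zero b (by rw [hb2, aeval_comp]; simpa using hroot)
      rw [hnd', comp_neg_X_leadingCoeff_eq] at hd
      have hd' : (u : Z) * f.leadingCoeff = d ^ 2 := by
        rw [← hd]
        have : ((-1 : Z) ^ f.natDegree) * (-1) ^ f.natDegree = 1 := by rw [← mul_pow]; simp
        linear_combination (-(u : Z) * f.leadingCoeff) * this
      have hc' : (u : Z) * f.coeff 0 = c ^ 2 := by
        rw [← hc]; simp [coeff_zero_eq_eval_zero]
      have h2n : 2 ∣ n := (by norm_num : 2 ∣ 4).trans h4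
      rcases hC with hC | hC
      · rcases hC 2 Nat.prime_two h2n u with h | ⟨-, h⟩
        · exact h ⟨d, hd'⟩
        · exact h h4 ⟨c, hc'⟩
      · rcases hC 2 Nat.prime_two h2n u with h | ⟨-, h⟩
        · exact h ⟨c, hc'⟩
        · exact h h4 ⟨d, hd'⟩
  rw [map_comp, Polynomial.map_pow, map_X, ← hF]
  rw [hF1, mul_comp, C_comp] at main
  exact (irreducible_mul_isUnit hu).1 main
end

section
/- Let K be a field and let f, g ∈ K[X] both have positive degree. Let F be a splitting field of f over K and let α ∈ F be a root of f. Then f(g(X)) = f.comp g is irreducible in K[X] if and only if f is irreducible in K[X] and the polynomial g(X) − α (the image of g under the map K[X] → K(α)[X] minus the constant polynomial α) is irreducible in K(α)[X], where K(α) denotes the intermediate field of F/K generated by α. -/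
open Polynomial IntermediateField

lemma aux_top {K L M : Type*} [Field K] [Field L] [Field M] [Algebra K L] [Algebra L M]
    [Algebra K M] [IsScalarTower K L M] (g : K[X]) (a : L) (ha : K⟮a⟯ = ⊤) (b : M)
    (hb : aeval b g = algebraMap L M a) (hbt : ∀ x : M, ∃ p : L[X], aeval b p = x) :
    K⟮b⟯ = ⊤ := by
  have hroot : b ∈ K⟮b⟯ := mem_adjoin_simple_self K _
  have hL : ∀ x : L, algebraMap L M x ∈ K⟮b⟯ := by
    have h1 : K⟮a⟯ ≤ K⟮b⟯.comap (IsScalarTower.toAlgHom K L M) := by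
      rw [adjoin_simple_le_iff]
      change algebraMap L M a ∈ K⟮b⟯
      rw [← hb, aeval_eq_sum_range]
      exact sum_mem fun i _ => IntermediateField.smul_mem _ (pow_mem hroot i)
    intro x
    exact h1 (ha ▸ mem_top)
  rw [eq_top_iff]
  rintro x -
  obtain ⟨p, rfl⟩ := hbt x
  rw [aeval_eq_sum_range]
  refine sum_mem fun i _ => ?_
  rw [Algebra.smul_def]
  exact mul_mem (hL _) (pow_mem hroot i)

universe u v

lemma aux_ex {L : Type v} [Field L] (q : L[X]) (hq : Irreducible q) :
    ∃ (M : Type v) (_ : Field M) (_ : Algebra L M) (_ : Module.Finite L M) (b : M),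
      aeval b q = 0 ∧ (∀ x : M, ∃ p : L[X], aeval b p = x) ∧
      Module.finrank L M = q.natDegree := by
  have := Fact.mk hq
  refine ⟨AdjoinRoot q, inferInstance, inferInstance,
    (AdjoinRoot.powerBasis hq.ne_zero).finite, AdjoinRoot.root q, AdjoinRoot.eval₂_root q, ?_, ?_⟩
  · intro x
    induction x using AdjoinRoot.induction_on with
    | ih p => exact ⟨p, AdjoinRoot.aeval_eq p⟩
  · rw [(AdjoinRoot.powerBasis hq.ne_zero).finrank, AdjoinRoot.powerBasis_dim]

lemma aux_deg {K : Type u} {L : Type v} [Field K] [Field L] [Algebra K L] [FiniteDimensional K L]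
    (g : K[X]) (a : L) (ha : K⟮a⟯ = ⊤) (q : L[X]) (hq : Irreducible q)
    (hdvd : q ∣ g.map (algebraMap K L) - C a) :
    ∃ (M : Type v) (_ : Field M) (_ : Algebra K M) (_ : Algebra L M) (_ : IsScalarTower K L M)
      (_ : FiniteDimensional K M) (b : M), aeval b g = algebraMap L M a ∧
      (minpoly K b).natDegree = Module.finrank K L * q.natDegree := by
  obtain ⟨M, _, _, _, b, hbq, hbt, hr⟩ := aux_ex q hq
  let _ : Algebra K M := ((algebraMap L M).comp (algebraMap K L)).toAlgebra
  have : IsScalarTower K L M := IsScalarTower.of_algebraMap_eq' rfl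
  have hfinK : FiniteDimensional K M := Module.Finite.trans L _
  have hb : aeval b g = algebraMap L M a := by
    have h0 : aeval b (g.map (algebraMap K L) - C a) = 0 :=
      aeval_eq_zero_of_dvd_aeval_eq_zero hdvd hbq
    rw [map_sub, aeval_map_algebraMap, aeval_C, sub_eq_zero] at h0
    exact h0
  refine ⟨M, inferInstance, inferInstance, inferInstance, inferInstance, hfinK, b, hb, ?_⟩
  rw [← adjoin.finrank (IsIntegral.of_finite _ _), aux_top g a ha b hb hbt, finrank_top',
    ← Module.finrank_mul_finrank K L, hr]

theorem stmt1 {K F : Type*} [Field K] [Field F] [Algebra K F]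
    (f g : Polynomial K) (hf : 0 < f.natDegree) (hg : 0 < g.natDegree)
    [Polynomial.IsSplittingField K F f]
    (α : F) (hα : Polynomial.aeval α f = 0) :
    Irreducible (f.comp g) ↔
      Irreducible f ∧
        Irreducible
          (g.map (algebraMap K K⟮α⟯) - Polynomial.C (IntermediateField.AdjoinSimple.gen K α)) := by
  have hf0 : f ≠ 0 := by rintro rfl; simp at hf
  have hint : IsIntegral K α := isAlgebraic_iff_isIntegral.mp ⟨f, hf0, hα⟩
  have hfd : FiniteDimensional K K⟮α⟯ := adjoin.finiteDimensional hint
  have step1 : Irreducible (f.comp g) → Irreducible f := by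
    intro h
    refine ⟨fun hu => by simp [natDegree_eq_zero_of_isUnit hu] at hf, ?_⟩
    have key : ∀ p : K[X], IsUnit (p.comp g) → p ≠ 0 → IsUnit p := by
      intro p hp hp0
      have h2 := natDegree_eq_zero_of_isUnit hp
      rw [natDegree_comp] at h2
      have h3 : p.natDegree = 0 := by
        rcases Nat.mul_eq_zero.mp h2 with h | h
        · exact h
        · omega
      rw [isUnit_iff_degree_eq_zero, degree_eq_natDegree hp0, h3]; rfl
    rintro p r rfl
    rw [mul_comp] at h
    rcases h.isUnit_or_isUnit rfl with h | h
    · exact Or.inl (key _ h (left_ne_zero_of_mul hf0))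
    · exact Or.inr (key _ h (right_ne_zero_of_mul hf0))
  have main : Irreducible f → (Irreducible (f.comp g) ↔ Irreducible
          (g.map (algebraMap K K⟮α⟯) - C (AdjoinSimple.gen K α))) := by
    intro hfi
    have hrank : Module.finrank K K⟮α⟯ = f.natDegree := by
      rw [adjoin.finrank hint, ← minpoly.eq_of_irreducible hfi hα, natDegree_mul_C]
      simpa using hf0
    have hgen : K⟮AdjoinSimple.gen K α⟯ = ⊤ := by
      apply map_injective K⟮α⟯.val
      rw [adjoin_map, ← AlgHom.fieldRange_eq_map, fieldRange_val, Set.image_singleton]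
      rfl
    have haf : aeval (AdjoinSimple.gen K α) f = 0 := by
      apply (algebraMap K⟮α⟯ F).injective
      rw [← aeval_algebraMap_apply, AdjoinSimple.algebraMap_gen, hα, map_zero]
    generalize AdjoinSimple.gen K α = a at *
    have hdeg : (g.map (algebraMap K K⟮α⟯) - C a).natDegree = g.natDegree := by
      rw [natDegree_sub_C, natDegree_map]
    generalize hh : g.map (algebraMap K K⟮α⟯) - C a = h at *
    have hh0 : h ≠ 0 := by rintro rfl; simp at hdeg; omega
    have hcd : (f.comp g).natDegree = f.natDegree * g.natDegree := natDegree_comp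
    have hc0 : f.comp g ≠ 0 := by
      intro h0
      rw [h0, natDegree_zero] at hcd
      have := Nat.mul_pos hf hg
      omega
    constructor
    · intro hi
      have hu : ¬ IsUnit h := fun hu => by
        have := natDegree_eq_zero_of_isUnit hu
        omega
      obtain ⟨q, hq, hqd⟩ := WfDvdMonoid.exists_irreducible_factor hu hh0
      obtain ⟨M, _, _, _, _, _, b, hb, hbd⟩ := aux_deg g a hgen q hq (hh ▸ hqd)
      have hz : aeval b (f.comp g) = 0 := by
        rw [aeval_comp, hb, aeval_algebraMap_apply, haf, map_zero]
      have h1 := minpoly.eq_of_irreducible hi hz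
      rw [← h1, natDegree_mul_C (by simpa using hc0), hcd, hrank] at hbd
      have h2 := Nat.eq_of_mul_eq_mul_left hf hbd
      exact (associated_of_dvd_of_natDegree_le hqd hh0 (by omega)).irreducible hq
    · intro hi
      obtain ⟨M, _, _, _, _, _, b, hb, hbd⟩ := aux_deg g a hgen h hi (hh ▸ dvd_rfl)
      have hz : aeval b (f.comp g) = 0 := by
        rw [aeval_comp, hb, aeval_algebraMap_apply, haf, map_zero]
      refine (associated_of_dvd_of_natDegree_le (minpoly.dvd K b hz) hc0 ?_).irreducible
        (minpoly.irreducible (IsIntegral.of_finite K b))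
      rw [hbd, hcd, hrank, hdeg]
  exact ⟨fun h => ⟨step1 h, (main (step1 h)).mp h⟩, fun h => (main h.1).mpr h.2⟩
end

section
/- Let Z be a unique factorization domain with field of fractions Q, and let K be a field extension of Q. Let P = ∑_{k=0}^{m} a_k X^k ∈ Z[X] be a primitive polynomial of degree m with a_0 ≠ 0. Let L ∈ Z[X] be monic of positive degree n whose constant coefficient c_0 is relatively prime to a_0 in Z (every common divisor of c_0 and a_0 is a unit), and suppose that the image of L in K[X] factors as ∏_{j=1}^{n} (X − λ_j) with all λ_j ∈ K nonzero. Then the polynomial ∏_{j=1}^{n} P(λ_j X) ∈ K[X] is the image of a polynomial P* ∈ Z[X] under the map Z[X] → K[X], and P* is primitive in Z[X]. -/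
open Polynomial

noncomputable def starPoly {Z : Type*} [CommRing Z] (P L : Polynomial Z) : Polynomial Z :=
  resultant (L.map C) ((P.map C).comp (C X * X)) L.natDegree P.natDegree

lemma starPoly_map {Z F ι : Type*} [Fintype ι] [CommRing Z] [Field F] (φ : Z →+* F)
    (P L : Polynomial Z) (hL : L.Monic) (mu : ι → F)
    (h : L.map φ = ∏ j, (X - C (mu j))) :
    (starPoly P L).map φ = ∏ j, (P.map φ).comp (C (mu j) * X) := by
  have key : (starPoly P L).map φ = resultant ((L.map φ).map C)
      (((P.map φ).map C).comp (C X * X)) L.natDegree P.natDegree := by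
    have e : (starPoly P L).map φ = mapRingHom φ (starPoly P L) := rfl
    rw [e, starPoly, ← resultant_map_map]
    congr 1
    · rw [Polynomial.map_map, Polynomial.map_map]
      congr 1
      ext x : 1
      simp
    · rw [Polynomial.map_comp, Polynomial.map_map, Polynomial.map_map]
      congr 1
      · congr 1
        ext x : 1
        simp
      · simp
  have hd : L.natDegree = (∏ j, (X - C (C (mu j))) : F[X][X]).natDegree := by
    have h1 : (L.map φ).natDegree = L.natDegree := hL.natDegree_map φ
    rw [← h1, h, natDegree_prod_of_monic _ _ (fun i _ => monic_X_sub_C _),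
      natDegree_prod_of_monic _ _ (fun i _ => monic_X_sub_C _)]
    simp
  have hg : (((P.map φ).map C).comp (C X * X) : F[X][X]).natDegree ≤ P.natDegree := by
    refine natDegree_comp_le.trans ?_
    refine (Nat.mul_le_mul (natDegree_map_le.trans natDegree_map_le)
      (natDegree_C_mul_le _ _)).trans ?_
    simp
  have h2 : (L.map φ).map C = (∏ j, (X - C (C (mu j))) : F[X][X]) := by
    rw [h, Polynomial.map_prod]
    simp
  rw [key, h2, hd, resultant_prod_left _ _ _ _ (by simp) hg]
  refine Finset.prod_congr rfl fun j _ => ?_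
  rw [natDegree_X_sub_C, resultant_X_sub_C_left _ _ _ hg]
  rw [eval_comp, eval_map, eval_mul, eval_C, eval_X, comp, X_mul_C]

lemma starPoly_key {Z F : Type*} [CommRing Z] [Field F] [IsAlgClosed F] (φ : Z →+* F)
    (P L : Polynomial Z) (hL : L.Monic) (h : (starPoly P L).map φ = 0) :
    P.map φ = 0 ∨ (φ (L.coeff 0) = 0 ∧ φ (P.coeff 0) = 0) := by
  set l := (L.map φ).roots.toList with hl
  have hf : L.map φ = ∏ j : Fin l.length, (X - C (l.get j)) := by
    have h1 := (IsAlgClosed.splits (L.map φ)).eq_prod_roots_of_monic (hL.map φ)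
    rw [← Multiset.coe_toList (L.map φ).roots, ← hl] at h1
    rw [h1]
    simp only [Multiset.map_coe, Multiset.prod_coe]
    rw [← List.prod_ofFn]
    congr 1
    conv_lhs => rw [← List.ofFn_get l]
    rw [List.map_ofFn]
    rfl
  rw [starPoly_map φ P L hL _ hf, Finset.prod_eq_zero_iff] at h
  obtain ⟨j, -, hj⟩ := h
  by_cases h0 : l.get j = 0
  · right
    constructor
    · have := congrArg (eval 0) hf
      rw [eval_prod, Finset.prod_eq_zero (Finset.mem_univ j) (by simp [-List.get_eq_getElem, h0])] at this
      rwa [← coeff_zero_eq_eval_zero, coeff_map] at this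
    · have := congrArg (eval 0) hj
      rw [eval_comp] at this
      simpa [← coeff_zero_eq_eval_zero] using this
  · left
    have := congrArg (fun q => q.comp (C (l.get j)⁻¹ * X)) hj
    simp only [comp_assoc] at this
    simpa [-List.get_eq_getElem, ← mul_assoc, ← C_mul, h0] using this

theorem stmt2 {Z Q K : Type*} [CommRing Z] [IsDomain Z] [UniqueFactorizationMonoid Z]
    [Field Q] [Algebra Z Q] [IsFractionRing Z Q]
    [Field K] [Algebra Q K] [Algebra Z K] [IsScalarTower Z Q K]
    (P : Polynomial Z) (m : ℕ) (hm : P.natDegree = m) (hP : P.IsPrimitive)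
    (ha0 : P.coeff 0 ≠ 0)
    (L : Polynomial Z) (hL : L.Monic) (n : ℕ) (hn : 0 < n) (hLdeg : L.natDegree = n)
    (hcop : IsRelPrime (L.coeff 0) (P.coeff 0))
    (lam : Fin n → K) (hlam : ∀ j, lam j ≠ 0)
    (hfac : L.map (algebraMap Z K) = ∏ j : Fin n, (X - C (lam j))) :
    ∃ Pstar : Polynomial Z, Pstar.IsPrimitive ∧
      Pstar.map (algebraMap Z K) =
        ∏ j : Fin n, (P.map (algebraMap Z K)).comp (C (lam j) * X) := by
  refine ⟨starPoly P L, ?_, starPoly_map _ P L hL lam hfac⟩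
  intro r hr
  by_contra hu
  obtain ⟨p, hp, hpu, hpd⟩ : ∃ p : Z, (Ideal.span {p}).IsPrime ∧ ¬ IsUnit p ∧ p ∣ r := by
    by_cases h0 : r = 0
    · refine ⟨0, ?_, not_isUnit_zero, by simp [h0]⟩
      rw [Ideal.span_singleton_zero]
      exact Ideal.isPrime_bot
    · obtain ⟨p, hp, hd⟩ := WfDvdMonoid.exists_irreducible_factor hu h0
      exact ⟨p, (Ideal.span_singleton_prime hp.ne_zero).2 hp.prime, hp.not_isUnit, hd⟩
  let A := Z ⧸ Ideal.span {p}
  let F := AlgebraicClosure (FractionRing A)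
  let φ : Z →+* F := ((algebraMap (FractionRing A) F).comp (algebraMap A (FractionRing A))).comp
    (Ideal.Quotient.mk (Ideal.span {p}))
  have hφ : ∀ z, φ z = 0 ↔ p ∣ z := by
    intro z
    rw [← Ideal.mem_span_singleton, ← Ideal.Quotient.eq_zero_iff_mem]
    simp only [φ, RingHom.comp_apply]
    rw [map_eq_zero, IsFractionRing.to_map_eq_zero_iff]
  have hz : (starPoly P L).map φ = 0 := by
    obtain ⟨q, hq⟩ := (map_dvd C hpd).trans hr
    rw [hq, Polynomial.map_mul, map_C, (hφ p).2 dvd_rfl]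
    simp
  rcases starPoly_key φ P L hL hz with h | ⟨h1, h2⟩
  · refine hpu (hP p ?_)
    rw [C_dvd_iff_dvd_coeff]
    intro i
    rw [← hφ, ← coeff_map, h, coeff_zero]
  · exact hpu (hcop ((hφ _).1 h1) ((hφ _).1 h2))
end

section
/- Let Z be a unique factorization domain, let n ≥ 2 be an integer, and let f ∈ Z[X] be irreducible in Z[X] of positive degree m with leading coefficient a. Then f(X^n) is NOT irreducible in Z[X] if and only if at least one of the following holds: (1) there exist a prime p dividing n, a unit u ∈ Zˣ such that u·a is a p-th power in Z, and polynomials S_0, …, S_{p−1} ∈ Z[X] such that (−1)^{m(p−1)}·u·f(X^p) = det M, where M is the p×p matrix over Z[X] whose (i, k) entry is X^{(k−i) mod p}·S_{(k−i) mod p}(X^p); or (2) 4 divides n and there exist a unit u ∈ Zˣ such that u·a is a square in Z and polynomials S_0, S_1 ∈ Z[X] with u·f(X^4) = S_0(X^2)^2 − X^2·S_1(X^2)^2. -/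
open Polynomial
open IntermediateField

theorem aux_four {K : Type*} [Field K] {a s t e : K} (h : Irreducible (X ^ 4 - C a))
    (he : e ^ 2 = 1) (h1 : s ^ 2 + a * t ^ 2 = 0) (h2 : 2 * s * t = e) : False := by
  have ht : t ≠ 0 := by
    rintro rfl
    simp at h2
    subst h2
    simp at he
  have ha : a = - (e * s / t) ^ 2 := by
    field_simp
    linear_combination h1 + s ^ 2 * he
  have h3 : 2 * (e * s / t) = (1 / t) ^ 2 := by
    field_simp
    linear_combination e * h2 + he
  have key : (X ^ 4 - C a : K[X]) =
      (X ^ 2 + C (e * s / t) - C (1 / t) * X) * (X ^ 2 + C (e * s / t) + C (1 / t) * X) := by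
    have h4 : (2 : K[X]) * C (e * s / t) = (C (1 / t)) ^ 2 := by
      rw [← C_pow, ← h3, C_mul, map_ofNat]
    have h5 : C a = - (C (e * s / t)) ^ 2 := by rw [← C_pow, ← C_neg, ← ha]
    rw [h5]
    linear_combination (-X ^ 2) * h4
  have d1 : (X ^ 2 + C (e * s / t) - C (1 / t) * X : K[X]).natDegree = 2 := by
    compute_degree!
  have d2 : (X ^ 2 + C (e * s / t) + C (1 / t) * X : K[X]).natDegree = 2 := by
    compute_degree!
  rcases h.isUnit_or_isUnit key with hu | hu
  · have := natDegree_eq_zero_of_isUnit hu; omega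
  · have := natDegree_eq_zero_of_isUnit hu; omega

theorem aux_integral {K E : Type*} [Field K] [Field E] [Algebra K E] {x : E} {F : K[X]}
    (hF : F ≠ 0) (hx : minpoly K x = F) : IsIntegral K x :=
  not_not.mp fun h ↦ hF (hx.symm.trans (minpoly.eq_zero h))

theorem aux_notsq {K : Type*} [Field K] {a e : K} (h : Irreducible (X ^ 4 - C a))
    (he : e ^ 2 = 1) {E : Type*} [Field E] [Algebra K E] (x : E)
    (hx : minpoly K x = X ^ 2 - C a) (y : K⟮x⟯) :
    y ^ 2 ≠ algebraMap K _ e * AdjoinSimple.gen K x := by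
  intro hy
  have hint := aux_integral (X_pow_sub_C_ne_zero two_pos a) hx
  have hmg : minpoly K (AdjoinSimple.gen K x) = X ^ 2 - C a := by rw [minpoly_gen, hx]
  obtain ⟨q, hq, hyq⟩ := (adjoin.powerBasis hint).exists_eq_aeval y
  rw [adjoin.powerBasis_dim, hx, natDegree_X_pow_sub_C] at hq
  obtain ⟨t, s, rfl⟩ := exists_eq_X_add_C_of_natDegree_le_one (Nat.lt_succ_iff.mp hq)
  rw [adjoin.powerBasis_gen] at hyq
  set g := AdjoinSimple.gen K x
  have hg2 : g ^ 2 = algebraMap K _ a := by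
    have := minpoly.aeval K g
    rw [hmg] at this
    simpa [sub_eq_zero] using this
  simp only [map_add, map_mul, aeval_C, aeval_X] at hyq
  have hz : aeval g (C (2 * s * t - e) * X + C (s ^ 2 + a * t ^ 2)) = 0 := by
    simp only [map_add, map_mul, aeval_C, aeval_X, map_sub, map_pow, map_ofNat]
    rw [hyq] at hy
    linear_combination hy - (algebraMap K _ t) ^ 2 * hg2
  have hP : (C (2 * s * t - e) * X + C (s ^ 2 + a * t ^ 2) : K[X]) = 0 := by
    by_contra hne
    have := natDegree_le_natDegree (minpoly.degree_le_of_ne_zero K g hne hz)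
    rw [hmg, natDegree_X_pow_sub_C] at this
    have := this.trans natDegree_linear_le
    omega
  have c0 := congrArg (coeff · 0) hP
  have c1 := congrArg (coeff · 1) hP
  simp [-map_pow, -map_add, -map_mul, -map_sub, coeff_C] at c0 c1
  exact aux_four h he c0 (by linear_combination c1)

theorem aux_sq_of_four {K : Type*} [Field K] {a : K} (h : Irreducible (X ^ 4 - C a)) :
    Irreducible (X ^ 2 - C a) := by
  apply of_irreducible_expand two_ne_zero
  simpa [← pow_mul] using h

universe u
theorem aux_gen_four {K : Type u} [Field K] {a : K} (h : Irreducible (X ^ 4 - C a))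
    {E : Type u} [Field E] [Algebra K E] (x : E)
    (hx : minpoly K x = X ^ 2 - C a) : Irreducible (X ^ 4 - C (AdjoinSimple.gen K x)) := by
  apply X_pow_mul_sub_C_irreducible (n := 2) (m := 2)
  · apply X_pow_sub_C_irreducible_of_prime Nat.prime_two
    intro b hb
    exact aux_notsq (e := 1) h (by simp) x hx b (by simpa using hb)
  · intro E' _ _ z hz
    apply X_pow_sub_C_irreducible_of_prime Nat.prime_two
    intro b hb
    have hint := aux_integral (X_pow_sub_C_ne_zero two_pos _) hz
    apply aux_notsq (e := -1) h (by simp) x hx (Algebra.norm _ b)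
    rw [← map_pow, hb, ← adjoin.powerBasis_gen hint,
      Algebra.PowerBasis.norm_gen_eq_coeff_zero_minpoly]
    simp [minpoly_gen, hz]

theorem aux_two_pow (k : ℕ) : ∀ {K : Type u} [Field K] {a : K} (_ : Irreducible (X ^ 4 - C a)),
    Irreducible (X ^ (2 ^ (k + 2)) - C a) := by
  induction k with
  | zero => intro K _ a h; simpa using h
  | succ k ih =>
    intro K _ a h
    rw [show 2 ^ (k + 1 + 2) = 2 ^ (k + 2) * 2 by ring]
    apply X_pow_mul_sub_C_irreducible (aux_sq_of_four h)
    intro E _ _ x hx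
    exact ih (aux_gen_four h x hx)

theorem aux_all {K : Type u} [Field K] {a : K} {n : ℕ} (hn : n ≠ 0)
    (hp : ∀ p : ℕ, p.Prime → p ∣ n → Irreducible (X ^ p - C a))
    (h4 : 4 ∣ n → Irreducible (X ^ 4 - C a)) : Irreducible (X ^ n - C a) := by
  obtain ⟨k, r, hr, rfl⟩ := Nat.exists_eq_two_pow_mul_odd hn
  have h2 : Irreducible (X ^ 2 ^ k - C a) := by
    rcases k with _ | _ | k
    · simpa using irreducible_X_sub_C a
    · simpa using hp 2 Nat.prime_two (by simp)
    · exact aux_two_pow k (h4 (Dvd.dvd.mul_right ⟨2 ^ k, by ring⟩ _))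
  rw [mul_comm]
  apply X_pow_mul_sub_C_irreducible h2
  intro E _ _ x hx
  have hint := aux_integral (X_pow_sub_C_ne_zero (by positivity) _) hx
  apply X_pow_sub_C_irreducible_of_odd hr
  intro q hq hqr b hb
  have hqo : Odd q := hr.of_dvd_nat hqr
  have hN : (Algebra.norm K b) ^ q = (-1) ^ (2 ^ k) * (-a) := by
    rw [← map_pow, hb, ← adjoin.powerBasis_gen hint,
      Algebra.PowerBasis.norm_gen_eq_coeff_zero_minpoly]
    simp [minpoly_gen, hx, (pow_pos two_pos k : 0 < 2 ^ k).ne]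
  have hirr := hp q hq (Dvd.dvd.mul_left hqr _)
  rcases Nat.eq_zero_or_pos k with rfl | hk
  · exact pow_ne_of_irreducible_X_pow_sub_C hirr dvd_rfl hq.ne_one (Algebra.norm K b)
      (by rw [hN]; simp)
  · apply pow_ne_of_irreducible_X_pow_sub_C hirr dvd_rfl hq.ne_one (- Algebra.norm K b)
    rw [hqo.neg_pow, hN, Even.neg_one_pow (by simp [Nat.even_pow]; omega)]
    simp

theorem aux_capelli {K : Type u} [Field K] {F : K[X]} (hFm : F.Monic) (hF : Irreducible F)
    {k : ℕ} (hk : k ≠ 0) (hFk : Irreducible (F.comp (X ^ k)))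
    {E : Type u} [Field E] [Algebra K E] (x : E) (hx : minpoly K x = F) :
    Irreducible (X ^ k - C (AdjoinSimple.gen K x)) := by
  have hint := aux_integral hF.ne_zero hx
  set g := AdjoinSimple.gen K x with hg
  have hne : (X ^ k - C g) ≠ 0 := X_pow_sub_C_ne_zero (Nat.pos_of_ne_zero hk) g
  have hnu : ¬ IsUnit (X ^ k - C g) := fun h => by
    have := natDegree_eq_zero_of_isUnit h
    rw [natDegree_X_pow_sub_C] at this
    exact hk this
  obtain ⟨q, hq, hqd⟩ := WfDvdMonoid.exists_irreducible_factor hnu hne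
  have := Fact.mk hq
  let y := AdjoinRoot.root q
  have hy : y ^ k = algebraMap _ _ g := by
    have : aeval y (X ^ k - C g) = 0 :=
      aeval_eq_zero_of_dvd_aeval_eq_zero hqd (AdjoinRoot.eval₂_root q)
    simpa [sub_eq_zero] using this
  have hfin1 : FiniteDimensional K K⟮x⟯ := adjoin.finiteDimensional hint
  have hfin2 : Module.Finite K⟮x⟯ (AdjoinRoot q) := (AdjoinRoot.powerBasis hq.ne_zero).finite
  have hfree : Module.Free K⟮x⟯ (AdjoinRoot q) :=
    Module.Free.of_basis (AdjoinRoot.powerBasis hq.ne_zero).basis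
  have hfin3 : Module.Finite K (AdjoinRoot q) := Module.Finite.trans K⟮x⟯ _
  have hmin : minpoly K y = F.comp (X ^ k) := by
    symm
    apply minpoly.eq_of_irreducible_of_monic hFk
    · rw [aeval_comp, map_pow, aeval_X, hy, aeval_algebraMap_apply]
      have := minpoly.aeval K g
      rw [hg, minpoly_gen, hx] at this
      rw [hg, this, map_zero]
    · exact hFm.comp (monic_X_pow k) (by simpa using hk)
  have hle : (minpoly K y).natDegree ≤ Module.finrank K (AdjoinRoot q) := minpoly.natDegree_le y
  rw [← Module.finrank_mul_finrank K K⟮x⟯ (AdjoinRoot q), adjoin.finrank hint, hx, hmin,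
    natDegree_comp, natDegree_X_pow, (AdjoinRoot.powerBasis hq.ne_zero).finrank,
    AdjoinRoot.powerBasis_dim] at hle
  have := Nat.le_of_mul_le_mul_left hle hF.natDegree_pos
  exact (associated_of_dvd_of_natDegree_le hqd hne
    (by rwa [natDegree_X_pow_sub_C])).irreducible hq

/-- cyclic shift -/
def shiftM (R : Type*) [CommRing R] (p : ℕ) (a : Fin p) : Matrix (Fin p) (Fin p) R :=
  Matrix.of fun i k => if k = i + a then 1 else 0

theorem shiftM_mul (R : Type*) [CommRing R] (p : ℕ) [NeZero p] (a b : Fin p) :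
    shiftM R p a * shiftM R p b = shiftM R p (a + b) := by
  ext i k
  simp only [shiftM, Matrix.mul_apply, Matrix.of_apply]
  rw [Finset.sum_eq_single (i + a)]
  · simp [add_assoc]
  · intro j _ hj; simp [hj]
  · simp

theorem shiftM_zero (R : Type*) [CommRing R] (p : ℕ) [NeZero p] :
    shiftM R p 0 = 1 := by
  ext i k
  simp [shiftM, Matrix.one_apply, eq_comm]

theorem shiftM_pow (R : Type*) [CommRing R] (p : ℕ) [NeZero p] (j : ℕ) :
    shiftM R p 1 ^ j = shiftM R p (Fin.ofNat p j) := by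
  induction j with
  | zero =>
    rw [pow_zero, ← shiftM_zero]; congr 1
  | succ j ih =>
    rw [pow_succ, ih, shiftM_mul]; congr 1
    ext
    simp [Fin.val_add]

theorem shiftM_pow_self (R : Type*) [CommRing R] (p : ℕ) [NeZero p] :
    shiftM R p 1 ^ p = 1 := by
  rw [shiftM_pow, ← shiftM_zero]; congr 1; ext; simp

theorem shiftM_det (R : Type*) [CommRing R] (p : ℕ) [NeZero p] :
    (shiftM R p 1).det = (-1) ^ (p - 1) := by
  obtain ⟨q, rfl⟩ := Nat.exists_eq_succ_of_ne_zero (NeZero.ne p)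
  have : shiftM R (q + 1) 1 = (finRotate (q + 1)).permMatrix R := by
    ext i k
    simp [shiftM, PEquiv.toMatrix_apply, Equiv.toPEquiv_apply, eq_comm]
  erw [this]
  rw [Matrix.det_permutation, sign_finRotate]
  simp

/-- the representation -/
noncomputable def MM {Z : Type*} [CommRing Z] (p : ℕ) [NeZero p] :
    Z[X] →ₐ[Z] Matrix (Fin p) (Fin p) Z[X] :=
  aeval ((X : Z[X]) • shiftM Z[X] p 1)

theorem MM_expand {Z : Type*} [CommRing Z] (p : ℕ) [NeZero p] (h : Z[X]) :
    MM p (expand Z p h) = Matrix.scalar (Fin p) (expand Z p h) := by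
  have : ((MM p).comp (expand Z p) : Z[X] →ₐ[Z] _) =
      ((Algebra.ofId Z[X] (Matrix (Fin p) (Fin p) Z[X])).restrictScalars Z).comp (expand Z p) := by
    ext1
    simp only [AlgHom.comp_apply, expand_X, map_pow]
    simp only [MM, aeval_X, _root_.smul_pow, shiftM_pow_self]
    simp [Algebra.ofId_apply, Algebra.algebraMap_eq_smul_one, _root_.smul_pow]
  have := DFunLike.congr_fun this h
  simp only [AlgHom.comp_apply] at this
  rw [this]; rfl

theorem det_MM_expand {Z : Type*} [CommRing Z] (p : ℕ) [NeZero p] (h : Z[X]) :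
    (MM p (expand Z p h)).det = (expand Z p h) ^ p := by
  rw [MM_expand]; simp

theorem MM_sum {Z : Type*} [CommRing Z] (p : ℕ) [NeZero p] (S : Fin p → Z[X]) :
    MM p (∑ j : Fin p, X ^ (j : ℕ) * expand Z p (S j)) =
      Matrix.of fun i k : Fin p => X ^ ((k - i : Fin p) : ℕ) * (S (k - i)).comp (X ^ p) := by
  rw [map_sum]
  simp only [map_mul, MM_expand, map_pow]
  simp only [MM, aeval_X, _root_.smul_pow, shiftM_pow]
  ext1 i k
  rw [Matrix.sum_apply, Finset.sum_eq_single (k - i)]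
  · simp [shiftM, expand_eq_comp_X_pow, Matrix.mul_diagonal]
  · intro j _ hj
    have : k ≠ i + j := by rintro rfl; simp at hj
    simp [shiftM, Matrix.mul_diagonal, this]
  · simp

theorem exists_decomp {Z : Type*} [CommRing Z] (p : ℕ) [NeZero p] (g : Z[X]) :
    ∃ S : Fin p → Z[X], g = ∑ j : Fin p, X ^ (j : ℕ) * expand Z p (S j) := by
  induction g using Polynomial.induction_on' with
  | add f g hf hg =>
    obtain ⟨S, rfl⟩ := hf
    obtain ⟨T, rfl⟩ := hg
    exact ⟨S + T, by simp [mul_add, Finset.sum_add_distrib]⟩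
  | monomial n a =>
    refine ⟨Pi.single (Fin.ofNat p n) (monomial (n / p) a), ?_⟩
    rw [Finset.sum_eq_single (Fin.ofNat p n)]
    · simp only [Pi.single_eq_same, expand_monomial, X_pow_mul_monomial]
      congr 1
      simp only [Fin.val_ofNat]
      rw [mul_comm]
      rw [Nat.div_add_mod n p]
    · intro j _ hj
      rw [Pi.single_eq_of_ne hj]; simp
    · simp

theorem det_mem_range {Z : Type*} [CommRing Z] (p : ℕ) [NeZero p] (g : Z[X]) :
    ∃ h : Z[X], (MM p g).det = expand Z p h := by
  obtain ⟨S, rfl⟩ := exists_decomp p g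
  rw [MM_sum]
  suffices h : (Matrix.of fun i k : Fin p =>
      X ^ ((k - i : Fin p) : ℕ) * (S (k - i)).comp (X ^ p)).det ∈ (expand Z p).range by
    obtain ⟨h, hh⟩ := h
    exact ⟨h, hh.symm⟩
  rw [← Matrix.det_transpose, Matrix.det_apply]
  refine sum_mem fun σ _ => ?_
  rw [Units.smul_def]
  refine zsmul_mem ?_ _
  simp only [Matrix.transpose_apply, Matrix.of_apply]
  rw [Finset.prod_mul_distrib, Finset.prod_pow_eq_pow_sum]
  refine mul_mem ?_ (prod_mem fun i _ => ⟨S (σ i - i), by simp [expand_eq_comp_X_pow]⟩)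
  have hd : p ∣ ∑ i, ((σ i - i : Fin p) : ℕ) := by
    have h1 : ∑ i, ((σ i - i : Fin p) : ℕ) + ∑ i : Fin p, (i : ℕ) ≡
        0 + ∑ i : Fin p, (i : ℕ) [MOD p] := by
      rw [zero_add, ← Finset.sum_add_distrib]
      conv_rhs => rw [← Equiv.sum_comp σ]
      rw [Nat.ModEq, Finset.sum_nat_mod, Finset.sum_nat_mod (f := fun i => ((σ i : Fin p) : ℕ))]
      congr 1
      refine Finset.sum_congr rfl fun i _ => ?_
      rw [← Fin.val_add, sub_add_cancel]
      exact (Nat.mod_eq_of_lt (σ i).2).symm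
    exact (Nat.modEq_zero_iff_dvd).1 (Nat.ModEq.add_right_cancel' _ h1)
  obtain ⟨c, hc⟩ := hd
  exact ⟨X ^ c, by simp [hc, pow_mul]⟩

theorem MM_apply {Z : Type*} [CommRing Z] (p : ℕ) [NeZero p] (g : Z[X]) (i k : Fin p) :
    MM p g i k = ∑ j ∈ Finset.range (g.natDegree + 1),
      C (g.coeff j * shiftM Z p (Fin.ofNat p j) i k) * X ^ j := by
  rw [MM, aeval_eq_sum_range, Matrix.sum_apply]
  refine Finset.sum_congr rfl fun j _ => ?_
  rw [_root_.smul_pow, shiftM_pow]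
  by_cases h : k = i + Fin.ofNat p j
  · simp [shiftM, smul_eq_C_mul, ← h, -Fin.ofNat_eq_cast]
  · simp [shiftM, h, -Fin.ofNat_eq_cast]

theorem MM_coeff {Z : Type*} [CommRing Z] (p : ℕ) [NeZero p] (g : Z[X]) :
    (MM p g).det.natDegree ≤ p * g.natDegree ∧
    (MM p g).det.coeff (p * g.natDegree) =
      (-1) ^ (g.natDegree * (p - 1)) * g.leadingCoeff ^ p := by
  have hdeg : ∀ i k, (MM p g i k).natDegree ≤ g.natDegree := by
    intro i k
    rw [MM_apply]
    refine natDegree_sum_le_of_forall_le _ _ fun j hj => ?_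
    exact (natDegree_C_mul_X_pow_le _ _).trans (by simpa [Nat.lt_succ_iff] using hj)
  constructor
  · rw [Matrix.det_apply]
    refine natDegree_sum_le_of_forall_le _ _ fun σ _ => ?_
    rw [Units.smul_def]
    refine (natDegree_smul_le _ _).trans ((natDegree_prod_le _ _).trans ?_)
    refine (Finset.sum_le_sum fun i _ => hdeg _ _).trans ?_
    simp
  · have h1 : (MM p g).det.coeff (p * g.natDegree) =
        (g.leadingCoeff • shiftM Z p 1 ^ g.natDegree).det := by
      rw [Matrix.det_apply', Matrix.det_apply', finsetSum_coeff]
      refine Finset.sum_congr rfl fun σ _ => ?_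
      rw [← C_eq_intCast, coeff_C_mul]
      congr 1
      have := coeff_prod_of_natDegree_le (Finset.univ : Finset (Fin p)) (fun i => MM p g (σ i) i)
        g.natDegree (fun i _ => hdeg _ _)
      rw [Finset.card_fin] at this
      rw [this]
      refine Finset.prod_congr rfl fun i _ => ?_
      rw [MM_apply, finsetSum_coeff, shiftM_pow]
      simp only [coeff_C_mul_X_pow]
      simp
    rw [h1, Matrix.det_smul, Matrix.det_pow, shiftM_det, Fintype.card_fin]
    ring

theorem dvd_det {Z : Type*} [CommRing Z] (p : ℕ) [NeZero p] (S : Fin p → Z[X]) :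
    (∑ j : Fin p, X ^ (j : ℕ) * expand Z p (S j)) ∣
      (MM p (∑ j : Fin p, X ^ (j : ℕ) * expand Z p (S j))).det := by
  set g := ∑ j : Fin p, X ^ (j : ℕ) * expand Z p (S j) with hg
  have h1 : (MM p g).mulVec (fun _ => 1) = g • (fun _ => 1) := by
    ext1 i
    rw [hg, MM_sum]
    simp only [Matrix.mulVec, dotProduct, Matrix.of_apply, mul_one, Pi.smul_apply, smul_eq_mul]
    rw [← Equiv.sum_comp (Equiv.subRight i) (fun j : Fin p => X ^ (j : ℕ) * expand Z p (S j))]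
    simp [expand_eq_comp_X_pow]
  have h2 := congrArg (MM p g).adjugate.mulVec h1
  rw [Matrix.mulVec_mulVec, Matrix.adjugate_mul, Matrix.mulVec_smul, Matrix.smul_mulVec,
    Matrix.one_mulVec] at h2
  have h3 := congrFun h2 0
  simp only [Pi.smul_apply, smul_eq_mul, mul_one] at h3
  exact ⟨_, h3⟩

theorem lemA {Z : Type*} [CommRing Z] [IsDomain Z] {p : ℕ} (hp : p.Prime) (F : Z[X]) (v : Z)
    (hv : IsUnit v) (S : Fin p → Z[X])
    (h : C v * F.comp (X ^ p) = Matrix.det (Matrix.of fun i k : Fin p =>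
      X ^ ((k - i : Fin p) : ℕ) * (S (k - i)).comp (X ^ p))) :
    ¬ Irreducible (F.comp (X ^ p)) := by
  intro hirr
  have : NeZero p := ⟨hp.ne_zero⟩
  rw [← MM_sum] at h
  have hd := dvd_det p S
  rw [← h] at hd
  set g := ∑ j : Fin p, X ^ (j : ℕ) * expand Z p (S j) with hg
  have hass : Associated (C v * F.comp (X ^ p)) (F.comp (X ^ p)) :=
    associated_unit_mul_left _ _ (isUnit_C.2 hv)
  have hirr' := hass.symm.irreducible hirr
  have hexp : ∃ q : Z[X], g = expand Z p q := by
    rcases hirr.dvd_iff.1 (hd.trans hass.dvd) with hu | hu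
    · obtain ⟨c, _, hc⟩ := Polynomial.isUnit_iff.1 hu
      exact ⟨C c, by rw [expand_C, hc]⟩
    · obtain ⟨u, hu⟩ := hu
      obtain ⟨c, _, hc⟩ := Polynomial.isUnit_iff.1 u.isUnit
      exact ⟨F * C c, by rw [← hu, ← hc]; simp [expand_eq_comp_X_pow]⟩
  obtain ⟨q, hq⟩ := hexp
  rw [hq, det_MM_expand] at h
  rw [h] at hirr'
  exact not_irreducible_pow hp.ne_one hirr'

theorem prim_comp {Z : Type*} [CommRing Z] {f : Z[X]} (hf : f.IsPrimitive) {k : ℕ} (hk : k ≠ 0) :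
    (f.comp (X ^ k)).IsPrimitive := by
  intro r hr
  apply hf r
  rw [C_dvd_iff_dvd_coeff] at hr ⊢
  intro i
  have := hr (i * k)
  rwa [← expand_eq_comp_X_pow, coeff_expand_mul (Nat.pos_of_ne_zero hk)] at this

theorem exists_monic {Z : Type*} [CommRing Z] [IsDomain Z] [UniqueFactorizationMonoid Z]
    {f : Z[X]} (hf : Irreducible f) (hdeg : 0 < f.natDegree) :
    ∃ (F : (FractionRing Z)[X]) (c : FractionRing Z), F = f.map (algebraMap Z _) * C c ∧
      F.Monic ∧ Irreducible F ∧ F.natDegree = f.natDegree ∧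
      ∀ k, k ≠ 0 → (Irreducible (f.comp (X ^ k)) ↔ Irreducible (F.comp (X ^ k))) := by
  have hinj := IsFractionRing.injective Z (FractionRing Z)
  have hprim := hf.isPrimitive hdeg.ne'
  have hfK : Irreducible (f.map (algebraMap Z (FractionRing Z))) :=
    hprim.irreducible_iff_irreducible_map_fraction_map.1 hf
  have hc : (f.map (algebraMap Z (FractionRing Z))).leadingCoeff⁻¹ ≠ 0 :=
    inv_ne_zero (leadingCoeff_ne_zero.2 hfK.ne_zero)
  refine ⟨_, _, rfl, monic_mul_leadingCoeff_inv hfK.ne_zero,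
    irreducible_mul_leadingCoeff_inv.2 hfK, ?_, ?_⟩
  · rw [natDegree_mul_C hc, natDegree_map_eq_of_injective hinj]
  · intro k hk
    rw [(prim_comp hprim hk).irreducible_iff_irreducible_map_fraction_map (K := FractionRing Z),
      mul_comp, C_comp, map_comp, Polynomial.map_pow, map_X]
    exact (associated_mul_unit_right _ _ (isUnit_C.2 hc.isUnit)).irreducible_iff

theorem lemC {Z : Type*} [CommRing Z] [IsDomain Z] [UniqueFactorizationMonoid Z]
    {f : Z[X]} (hf : Irreducible f) (hdeg : 0 < f.natDegree) {n : ℕ} (hn : n ≠ 0)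
    (hp : ∀ p : ℕ, p.Prime → p ∣ n → Irreducible (f.comp (X ^ p)))
    (h4 : 4 ∣ n → Irreducible (f.comp (X ^ 4))) : Irreducible (f.comp (X ^ n)) := by
  obtain ⟨F, c, -, hFm, hF, -, hk⟩ := exists_monic hf hdeg
  rw [hk n hn]
  apply irreducible_comp hFm (monic_X_pow n) hF
  intro E _ _ x hx
  rw [Polynomial.map_pow, map_X]
  apply aux_all hn
  · intro p pp hpn
    exact aux_capelli hFm hF pp.ne_zero ((hk p pp.ne_zero).1 (hp p pp hpn)) x hx
  · intro h
    exact aux_capelli hFm hF four_ne_zero ((hk 4 four_ne_zero).1 (h4 h)) x hx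

theorem exists_factor {Z : Type*} [CommRing Z] [IsDomain Z] [UniqueFactorizationMonoid Z]
    {f : Z[X]} (hf : Irreducible f) (hdeg : 0 < f.natDegree) {p : ℕ} (hp : p.Prime)
    (hred : ¬ Irreducible (f.comp (X ^ p))) :
    ∃ g : Z[X], g ∣ f.comp (X ^ p) ∧ 0 < g.natDegree ∧ g.natDegree ≤ f.natDegree := by
  obtain ⟨F, c, hFc, hFm, hF, hFd, hk⟩ := exists_monic hf hdeg
  rw [hk p hp.ne_zero] at hred
  have : ¬ ∀ (E : Type _) [Field E] [Algebra (FractionRing Z) E] (x : E)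
      (_ : minpoly (FractionRing Z) x = F), Irreducible
        ((X ^ p : (FractionRing Z)[X]).map (algebraMap _ _) - C (AdjoinSimple.gen (FractionRing Z) x)) :=
    fun h => hred (irreducible_comp hFm (monic_X_pow p) hF h)
  push Not at this
  obtain ⟨E, _, _, x, hx, hirr⟩ := this
  rw [Polynomial.map_pow, map_X] at hirr
  have : ∃ b, b ^ p = AdjoinSimple.gen (FractionRing Z) x := by
    by_contra! hb
    exact hirr (X_pow_sub_C_irreducible_of_prime hp hb)
  obtain ⟨b, hb⟩ := this
  have hint := aux_integral hF.ne_zero hx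
  have hfin := adjoin.finiteDimensional hint
  have hinj := IsFractionRing.injective Z (FractionRing Z)
  have hfn : f.comp (X ^ p) ≠ 0 := by
    rw [← expand_eq_comp_X_pow]
    exact (expand_ne_zero hp.pos).2 hf.ne_zero
  have hroot : aeval b ((f.comp (X ^ p)).map (algebraMap Z (FractionRing Z))) = 0 := by
    have h1 : aeval (AdjoinSimple.gen (FractionRing Z) x) F = 0 := by
      rw [← hx, ← minpoly_gen]; exact minpoly.aeval _ _
    have hc : c ≠ 0 := by rintro rfl; simp at hFc; exact hF.ne_zero hFc
    rw [hFc, map_mul, aeval_C, mul_eq_zero] at h1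
    have h2 := h1.resolve_right (by simpa using hc)
    rw [map_comp, aeval_comp, Polynomial.map_pow, map_X, map_pow, aeval_X, hb, h2]
  have hfac : ∃ g : Z[X], Irreducible g ∧ g ∣ f.comp (X ^ p) ∧
      aeval b (g.map (algebraMap Z (FractionRing Z))) = 0 := by
    obtain ⟨s, hs, hsa⟩ := UniqueFactorizationMonoid.exists_prime_factors _ hfn
    let φ : Z[X] →+* (FractionRing Z)⟮x⟯ :=
      (aeval b).toRingHom.comp (mapRingHom (algebraMap Z (FractionRing Z)))
    have hφ : φ s.prod = 0 := by
      obtain ⟨u, hu⟩ := hsa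
      have : φ (f.comp (X ^ p)) = 0 := hroot
      rw [← hu, map_mul, mul_eq_zero] at this
      exact this.resolve_right ((u.isUnit.map φ).ne_zero)
    rw [map_multiset_prod, Multiset.prod_eq_zero_iff, Multiset.mem_map] at hφ
    obtain ⟨g, hg, hg0⟩ := hφ
    exact ⟨g, (hs g hg).irreducible, (Multiset.dvd_prod hg).trans hsa.dvd, hg0⟩
  obtain ⟨g, hg, hgd, hg0⟩ := hfac
  have hgpos : 0 < g.natDegree := by
    by_contra h0
    rw [eq_C_of_natDegree_eq_zero (by omega : g.natDegree = 0), map_C, aeval_C] at hg0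
    have h1 := hinj ((map_eq_zero_iff _ (algebraMap (FractionRing Z) _).injective).1 hg0 |>.trans
      (map_zero _).symm)
    apply hg.ne_zero
    rw [eq_C_of_natDegree_eq_zero (by omega : g.natDegree = 0), h1, C_0]
  refine ⟨g, hgd, hgpos, ?_⟩
  have hgK : Irreducible (g.map (algebraMap Z (FractionRing Z))) :=
    (hg.isPrimitive hgpos.ne').irreducible_iff_irreducible_map_fraction_map.1 hg
  have h1 := minpoly.eq_of_irreducible hgK hg0
  have h2 := minpoly.natDegree_le (A := FractionRing Z) b
  rw [adjoin.finrank hint, hx, hFd, ← h1, natDegree_mul_C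
    (inv_ne_zero (leadingCoeff_ne_zero.2 hgK.ne_zero)), natDegree_map_eq_of_injective hinj] at h2
  exact h2

theorem lemB {Z : Type*} [CommRing Z] [IsDomain Z] [UniqueFactorizationMonoid Z]
    {f : Z[X]} (hf : Irreducible f) (hdeg : 0 < f.natDegree) {p : ℕ} (hp : p.Prime)
    (hred : ¬ Irreducible (f.comp (X ^ p))) :
    ∃ u : Zˣ, (∃ c : Z, (u : Z) * f.leadingCoeff = c ^ p) ∧
      ∃ S : Fin p → Polynomial Z,
        C ((-1 : Z) ^ (f.natDegree * (p - 1)) * (u : Z)) * f.comp (X ^ p) =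
          Matrix.det (Matrix.of fun i k : Fin p =>
            X ^ ((k - i : Fin p) : ℕ) * (S (k - i)).comp (X ^ p)) := by
  have : NeZero p := ⟨hp.ne_zero⟩
  obtain ⟨g, ⟨k, hk⟩, hg0, hgm⟩ := exists_factor hf hdeg hp hred
  obtain ⟨S, hS⟩ := exists_decomp p g
  obtain ⟨h, hh⟩ := det_mem_range p g
  obtain ⟨h', hh'⟩ := det_mem_range p k
  obtain ⟨hd1, hd2⟩ := MM_coeff p g
  have hgne : g ≠ 0 := by rintro rfl; simp at hg0
  rw [hh, mul_comm p, coeff_expand_mul hp.pos] at hd2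
  rw [hh, natDegree_expand, mul_comm p] at hd1
  have hd1 := Nat.le_of_mul_le_mul_right hd1 hp.pos
  have hhd : h.natDegree = g.natDegree := by
    apply le_antisymm hd1
    apply le_natDegree_of_ne_zero
    rw [hd2]
    exact mul_ne_zero (pow_ne_zero _ (neg_ne_zero.2 one_ne_zero))
      (pow_ne_zero _ (leadingCoeff_ne_zero.2 hgne))
  have hdvd : h ∣ f ^ p := by
    refine ⟨h', expand_injective hp.pos ?_⟩
    rw [map_mul, ← hh, ← hh', ← Matrix.det_mul, ← map_mul, ← hk, ← expand_eq_comp_X_pow,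
      det_MM_expand, map_pow]
  obtain ⟨j, -, hj⟩ := (dvd_prime_pow hf.prime p).1 hdvd
  have hjd : h.natDegree = j * f.natDegree := by
    rw [natDegree_eq_of_degree_eq (degree_eq_degree_of_associated hj), natDegree_pow]
  have hj1 : j = 1 := by
    have h1 : j ≠ 0 := by rintro rfl; omega
    have h2 : j < 2 := by
      by_contra h3
      have := Nat.mul_le_mul_right f.natDegree (not_lt.1 h3)
      omega
    omega
  subst hj1
  rw [pow_one] at hj
  rw [one_mul] at hjd
  obtain ⟨w, hw⟩ := hj.symm
  obtain ⟨v, hv, hvw⟩ := Polynomial.isUnit_iff.1 w.isUnit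
  obtain ⟨v, rfl⟩ := hv
  rw [← hvw] at hw
  have hsgn : ((-1 : Z) ^ (f.natDegree * (p - 1))) * ((-1 : Z) ^ (f.natDegree * (p - 1))) = 1 := by
    rw [← mul_pow]; simp
  refine ⟨(-1) ^ (f.natDegree * (p - 1)) * v, ⟨g.leadingCoeff, ?_⟩, S, ?_⟩
  · rw [← hhd, coeff_natDegree, hjd, ← hw, leadingCoeff_mul, leadingCoeff_C] at hd2
    push_cast
    rw [mul_assoc, mul_comm (v : Z), hd2, ← mul_assoc, hsgn, one_mul]
  · rw [← MM_sum, ← hS, hh, ← hw]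
    push_cast
    rw [← mul_assoc, hsgn, one_mul, map_mul, expand_C, expand_eq_comp_X_pow, mul_comm]

theorem det_two {Z : Type*} [CommRing Z] (S : Fin 2 → Z[X]) :
    Matrix.det (Matrix.of fun i k : Fin 2 =>
      X ^ ((k - i : Fin 2) : ℕ) * (S (k - i)).comp (X ^ 2)) =
    ((S 0).comp (X ^ 2)) ^ 2 - X ^ 2 * ((S 1).comp (X ^ 2)) ^ 2 := by
  rw [Matrix.det_fin_two]
  simp only [Matrix.of_apply, show (0 - 0 : Fin 2) = 0 from rfl, show (1 - 1 : Fin 2) = 0 from rfl,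
    show (0 - 1 : Fin 2) = 1 from rfl, show (1 - 0 : Fin 2) = 1 from rfl, Fin.val_zero, Fin.val_one]
  ring


theorem stmt4 {Z : Type*} [CommRing Z] [IsDomain Z] [UniqueFactorizationMonoid Z]
    (n : ℕ) (hn : 2 ≤ n) (f : Polynomial Z) (hf : Irreducible f) (hdeg : 0 < f.natDegree) :
    ¬ Irreducible (f.comp (X ^ n)) ↔
      ((∃ p : ℕ, p.Prime ∧ p ∣ n ∧ ∃ u : Zˣ,
          (∃ c : Z, (u : Z) * f.leadingCoeff = c ^ p) ∧
          ∃ S : Fin p → Polynomial Z,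
            C ((-1 : Z) ^ (f.natDegree * (p - 1)) * (u : Z)) * f.comp (X ^ p) =
              Matrix.det (Matrix.of fun i k : Fin p =>
                X ^ ((k - i : Fin p) : ℕ) * (S (k - i)).comp (X ^ p))) ∨
        (4 ∣ n ∧ ∃ u : Zˣ,
          (∃ c : Z, (u : Z) * f.leadingCoeff = c ^ 2) ∧
          ∃ S₀ S₁ : Polynomial Z,
            C ((u : Z)) * f.comp (X ^ 4) =
              (S₀.comp (X ^ 2)) ^ 2 - X ^ 2 * (S₁.comp (X ^ 2)) ^ 2)) := by
  have hcc : ∀ a b : ℕ, (f.comp (X ^ a)).comp (X ^ b) = f.comp (X ^ (b * a)) := by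
    intro a b
    rw [comp_assoc, X_pow_comp, ← pow_mul]
  have hup : ∀ k : ℕ, k ∣ n → ¬ Irreducible (f.comp (X ^ k)) → ¬ Irreducible (f.comp (X ^ n)) := by
    rintro k ⟨r, rfl⟩ h h'
    apply h
    have hr : r ≠ 0 := by rintro rfl; simp at hn
    apply of_irreducible_expand hr
    rwa [expand_eq_comp_X_pow, hcc, mul_comm]
  constructor
  · intro hred
    by_contra hcon
    push Not at hcon
    obtain ⟨h1, h2⟩ := hcon
    apply hred
    have hpr : ∀ p : ℕ, p.Prime → p ∣ n → Irreducible (f.comp (X ^ p)) := by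
      intro p hp hpn
      by_contra hirr
      obtain ⟨u, ⟨c, hc⟩, S, hS⟩ := lemB hf hdeg hp hirr
      exact h1 p hp hpn u ⟨c, hc⟩ S hS
    refine lemC hf hdeg (by omega) hpr ?_
    intro h4
    by_contra hirr
    have hf2 := hpr 2 Nat.prime_two (dvd_trans (by norm_num) h4)
    have hd2 : (f.comp (X ^ 2)).natDegree = f.natDegree * 2 := by
      rw [natDegree_comp, natDegree_X_pow]
    have hcc2 := hcc 2 2
    norm_num at hcc2
    obtain ⟨u, ⟨c, hc⟩, S, hS⟩ := lemB hf2 (by omega) Nat.prime_two (by rwa [hcc2])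
    have hl : (f.comp (X ^ 2)).leadingCoeff = f.leadingCoeff := by
      rw [leadingCoeff_comp (by simp)]; simp
    rw [hl] at hc
    rw [det_two, hcc2, hd2, Even.neg_one_pow (by simp), one_mul] at hS
    exact h2 h4 u ⟨c, hc⟩ (S 0) (S 1) hS
  · rintro (⟨p, hp, hpn, u, -, S, hS⟩ | ⟨h4, u, -, S₀, S₁, hS⟩)
    · refine hup p hpn (lemA hp f _ ?_ S hS)
      exact ((isUnit_one.neg).pow _).mul u.isUnit
    · apply hup 4 h4
      have hcc2 := hcc 2 2
      norm_num at hcc2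
      rw [← hcc2]
      refine lemA Nat.prime_two _ u u.isUnit ![S₀, S₁] ?_
      rw [det_two, hcc2, hS]
      simp
end

section
/- Let F be a field, p a prime number, and g ∈ F[X] an irreducible polynomial of degree d ≥ 1. If P ∈ F[X] has degree d and P divides g(X^p) in F[X], then P is irreducible in F[X]. -/
open Polynomial

theorem stmt5 {F : Type*} [Field F] (p : ℕ) (hp : p.Prime)
    (g : Polynomial F) (hg : Irreducible g) (d : ℕ) (hd : 1 ≤ d) (hgd : g.natDegree = d)
    (P : Polynomial F) (hP : P.natDegree = d) (hdvd : P ∣ g.comp (X ^ p)) :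
    Irreducible P := by
  have hP0 : P ≠ 0 := by
    rintro rfl
    simp at hP
    omega
  obtain ⟨Q, hQ, hQP⟩ := exists_irreducible_of_natDegree_pos (f := P) (by omega)
  refine (associated_of_dvd_of_natDegree_le hQP hP0 ?_).irreducible hQ
  haveI := Fact.mk hQ
  haveI : Module.Finite F (AdjoinRoot Q) := (AdjoinRoot.powerBasis hQ.ne_zero).finite
  have hfr : Module.finrank F (AdjoinRoot Q) = Q.natDegree := by
    rw [(AdjoinRoot.powerBasis hQ.ne_zero).finrank, AdjoinRoot.powerBasis_dim]
  have hroot : aeval ((AdjoinRoot.root Q) ^ p) g = 0 := by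
    have h : aeval (AdjoinRoot.root Q) (g.comp (X ^ p)) = 0 := by
      rw [AdjoinRoot.aeval_eq]
      exact AdjoinRoot.mk_eq_zero.2 (hQP.trans hdvd)
    simpa [aeval_comp] using h
  have hint : IsIntegral F ((AdjoinRoot.root Q) ^ p) := Algebra.IsIntegral.isIntegral _
  have hass := (minpoly.irreducible hint).associated_of_dvd hg (minpoly.dvd F _ hroot)
  have h1 := natDegree_eq_of_degree_eq (degree_eq_degree_of_associated hass)
  have h2 := minpoly.natDegree_le (A := F) ((AdjoinRoot.root Q) ^ p)
  omega
end

section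
/- Let Z be a unique factorization domain, let f ∈ Z[X] be irreducible in Z[X] of positive degree, and let s ≥ 1 be an integer. Then f(X^{2^s}) is not irreducible in Z[X] if and only if f(X^2) is not irreducible in Z[X], or s ≥ 2 and f(X^4) is not irreducible in Z[X]. -/
open Polynomial

lemma aux_alg {L : Type*} [Field L] {a p q r s : L} (h1 : p^2+(2*q*s+r^2)*a=0)
    (h2 : 2*p*q+2*r*s*a=1) (h3 : q^2+2*p*r+s^2*a=0) (h4 : 2*p*s+2*q*r=0) :
    ∃ x : L, a = -4*x^4 := by
  obtain ⟨A, hA⟩ : ∃ A, A = p^2+r^2*a := ⟨_, rfl⟩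
  obtain ⟨B, hB⟩ : ∃ B, B = 2*p*r := ⟨_, rfl⟩
  obtain ⟨D, hD⟩ : ∃ D, D = q^2+s^2*a := ⟨_, rfl⟩
  obtain ⟨E, hE⟩ : ∃ E, E = 2*q*s := ⟨_, rfl⟩
  have e1 : A + E*a = 0 := by rw [hA, hE]; linear_combination h1
  have e2 : B + D = 0 := by rw [hB, hD]; linear_combination h3
  have e3 : 4*A*D+4*B*E*a = 1 := by
    have : 4*A*D+4*B*E*a = (2*p*q+2*r*s*a)^2+(2*p*s+2*q*r)^2*a := by
      rw [hA, hB, hD, hE]; ring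
    rw [this, h2, h4]; ring
  have e4 : 4*(A*E+B*D) = 0 := by
    have : 4*(A*E+B*D) = 2*(2*p*q+2*r*s*a)*(2*p*s+2*q*r) := by
      rw [hA, hB, hD, hE]; ring
    rw [this, h4]; ring
  have e5 : (2*A)^2+(2*B)^2*a = 0 := by
    linear_combination 4*A*e1 + 4*B*a*e2 - a*e4
  have e6 : 8*A*B = -1 := by
    linear_combination 4*A*e2 - e3 +4*B*e1
  refine ⟨2*A, ?_⟩
  linear_combination (-a)*(8*A*B-1)*e6 + 16*A^2*e5

lemma aux_not_irr {L : Type*} [Field L] {a x : L} (h : a = -4*x^4) :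
    ¬ Irreducible (X^4 - C a) := by
  intro hi
  have e : X^4 - C a = (X^2+C (2*x)*X+C (2*x^2)) * (X^2+C (-2*x)*X+C (2*x^2)) := by
    rw [h]; simp only [map_mul, map_pow, map_neg, map_ofNat]; ring
  have hd : ∀ b c : L, ¬ IsUnit (X^2+C b*X+C c) := fun b c hu => by
    have h1 := natDegree_eq_zero_of_isUnit hu
    have h2 : (X^2+C b*X+C c).natDegree = 2 := by compute_degree!
    omega
  rcases hi.isUnit_or_isUnit e with h | h
  · exact hd _ _ h
  · exact hd _ _ h

lemma aux_eight {L : Type*} [Field L] {a : L} (h : Irreducible (X^4 - C a)) :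
    Irreducible (X^8 - C a) := by
  have key := X_pow_mul_sub_C_irreducible (n := 2) (m := 4) (a := a) h ?_
  · simpa using key
  intro E _ _ β hβ
  have hint : IsIntegral L β := by
    by_contra hc
    rw [minpoly.eq_zero hc] at hβ
    exact X_pow_sub_C_ne_zero (by norm_num) a hβ.symm
  have hβ4 : β^4 = algebraMap L E a := by
    have := minpoly.aeval L β
    rw [hβ] at this
    simpa [sub_eq_zero] using this
  apply X_pow_sub_C_irreducible_of_prime Nat.prime_two
  rintro ⟨γ, hγ⟩ hb
  have hb' : γ^2 = β := congrArg Subtype.val hb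
  have : γ ∈ (Algebra.adjoin L {β}) := by
    rw [← IntermediateField.adjoin_simple_toSubalgebra_of_isAlgebraic hint.isAlgebraic]; exact hγ
  rw [Algebra.adjoin_singleton_eq_range_aeval] at this
  obtain ⟨P, hP⟩ := this
  have hm : (X^4 - C a).Monic := monic_X_pow_sub_C a (by norm_num)
  have hP2 : aeval β (P %ₘ (X^4 - C a)) = γ := by
    have h0 : aeval β (X^4 - C a) = 0 := by simp [hβ4]
    rw [aeval_modByMonic_eq_self_of_root h0]; exact hP
  have hdeg : (P %ₘ (X^4 - C a)).natDegree < 4 := by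
    have := natDegree_modByMonic_lt P hm (by
      intro h1
      exact h.not_isUnit (h1 ▸ isUnit_one))
    simpa using this
  generalize P %ₘ (X^4 - C a) = Q at hP2 hdeg
  rw [aeval_eq_sum_range' hdeg] at hP2
  simp only [Finset.sum_range_succ, Finset.sum_range_zero, Algebra.smul_def] at hP2
  generalize Q.coeff 0 = p at hP2
  generalize Q.coeff 1 = q at hP2
  generalize Q.coeff 2 = r at hP2
  generalize Q.coeff 3 = s at hP2
  have hR : aeval β (C (p^2+(2*q*s+r^2)*a) + C (2*p*q+2*r*s*a-1) * X
      + C (q^2+2*p*r+s^2*a) * X^2 + C (2*p*s+2*q*r)*X^3) = 0 := by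
    simp only [map_add, map_mul, map_sub, map_pow, aeval_C, aeval_X, map_one, map_ofNat]
    rw [← hβ4]
    rw [← hP2] at hb'
    linear_combination hb'
  have hR0 := minpoly.dvd L β hR
  rw [hβ] at hR0
  have hz := eq_zero_of_dvd_of_natDegree_lt hR0 (by
    rw [natDegree_X_pow_sub_C]
    refine lt_of_le_of_lt (b := 3) ?_ (by norm_num)
    compute_degree)
  have c0 := congrArg (coeff · 0) hz
  have c1 := congrArg (coeff · 1) hz
  have c2 := congrArg (coeff · 2) hz
  have c3 := congrArg (coeff · 3) hz
  simp only [coeff_add, coeff_C_mul, coeff_X_pow, coeff_X, coeff_C, coeff_zero] at c0 c1 c2 c3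
  norm_num at c0 c1 c2 c3
  obtain ⟨x, hx⟩ := aux_alg (a := a) (p := p) (q := q) (r := r) (s := s) (by linear_combination c0) (by linear_combination c1)
    (by linear_combination c2) (by linear_combination c3)
  exact aux_not_irr hx h

open IntermediateField in
lemma aux_down {K E : Type*} [Field K] [Field E] [Algebra K E] (f : K[X]) (n : ℕ) (hn : 0 < n)
    (hf : Irreducible f) (hfm : f.Monic)
    (h : Irreducible (expand K n f)) (x : E) (hx : minpoly K x = f) :
    Irreducible (X^n - C (AdjoinSimple.gen K x)) := by
  have hint : IsIntegral K x := by
    by_contra hc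
    rw [minpoly.eq_zero hc] at hx
    exact hf.ne_zero hx.symm
  set y := AdjoinSimple.gen K x with hy
  have hfy : aeval y f = 0 := by
    rw [← hx, ← minpoly_gen K x]; exact minpoly.aeval _ _
  have hu : ¬ IsUnit (X^n - C y) := fun hu => by
    have := natDegree_eq_zero_of_isUnit hu
    rw [natDegree_X_pow_sub_C] at this; omega
  obtain ⟨q, hq, hqd⟩ := WfDvdMonoid.exists_irreducible_factor hu (X_pow_sub_C_ne_zero hn y)
  have : Fact (Irreducible q) := ⟨hq⟩
  set β := AdjoinRoot.root q
  have hβ : β^n = algebraMap K⟮x⟯ (AdjoinRoot q) y := by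
    obtain ⟨t, ht⟩ := hqd
    have h2 : aeval β (X^n - C y) = 0 := by
      rw [ht, map_mul]; simp [β]
    simpa [sub_eq_zero] using h2
  have hr : aeval β (expand K n f) = 0 := by
    rw [expand_aeval, hβ, aeval_algebraMap_apply, hfy, map_zero]
  have hmin := minpoly.eq_of_irreducible_of_monic h hr (hfm.expand hn)
  have : FiniteDimensional K K⟮x⟯ := adjoin.finiteDimensional hint
  have : FiniteDimensional K⟮x⟯ (AdjoinRoot q) := (AdjoinRoot.powerBasis hq.ne_zero).finite
  have : FiniteDimensional K (AdjoinRoot q) := FiniteDimensional.trans K K⟮x⟯ _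
  have : Module.Free K⟮x⟯ (AdjoinRoot q) := Module.Free.of_basis (AdjoinRoot.powerBasis hq.ne_zero).basis
  have hle := minpoly.natDegree_le (A := K) β
  rw [← hmin, natDegree_expand, ← Module.finrank_mul_finrank K K⟮x⟯, adjoin.finrank hint, hx,
    (AdjoinRoot.powerBasis hq.ne_zero).finrank, AdjoinRoot.powerBasis_dim] at hle
  have hnq : n ≤ q.natDegree := by
    have := hf.natDegree_pos
    exact Nat.le_of_mul_le_mul_left hle this
  have has : Associated q (X^n - C y) :=
    associated_of_dvd_of_natDegree_le hqd (X_pow_sub_C_ne_zero hn y) (by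
      rwa [natDegree_X_pow_sub_C])
  exact has.irreducible hq

lemma aux_field_monic {K : Type*} [Field K] (f : K[X]) (hf : Irreducible f) (hfm : f.Monic)
    (h : Irreducible (expand K 4 f)) : Irreducible (expand K 8 f) := by
  rw [expand_eq_comp_X_pow]
  refine irreducible_comp hfm (monic_X_pow 8) hf ?_
  intro E _ _ x hx
  simpa using aux_eight (aux_down f 4 (by norm_num) hf hfm h x hx)

lemma aux_field {K : Type*} [Field K] (f : K[X])
    (h : Irreducible (expand K 4 f)) : Irreducible (expand K 8 f) := by
  have hf := of_irreducible_expand (by norm_num) h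
  have hu : IsUnit (C (f.leadingCoeff⁻¹)) := by
    rw [isUnit_C]; simpa using hf.ne_zero
  have e : ∀ n, Irreducible (expand K n (f * C (f.leadingCoeff⁻¹))) ↔
      Irreducible (expand K n f) := fun n => by
    rw [map_mul, expand_C, irreducible_mul_isUnit hu]
  rw [← e]
  refine aux_field_monic _ ?_ (monic_mul_leadingCoeff_inv hf.ne_zero) ((e 4).2 h)
  rwa [irreducible_mul_isUnit hu]

lemma aux_prim {Z : Type*} [CommRing Z] [IsDomain Z] {f : Z[X]} (hf : f.IsPrimitive) {n : ℕ}
    (hn : 0 < n) : (expand Z n f).IsPrimitive := by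
  intro r hr
  apply hf r
  rw [C_dvd_iff_dvd_coeff] at hr ⊢
  intro i
  have := hr (i * n)
  rwa [coeff_expand_mul hn] at this

lemma aux_Z {Z : Type*} [CommRing Z] [IsDomain Z] [UniqueFactorizationMonoid Z]
    (f : Z[X]) (hdeg : 0 < f.natDegree)
    (h : Irreducible (expand Z 4 f)) : Irreducible (expand Z 8 f) := by
  have hf := of_irreducible_expand (by norm_num) h
  have hp : f.IsPrimitive := hf.isPrimitive hdeg.ne'
  rw [(aux_prim hp (by norm_num)).irreducible_iff_irreducible_map_fraction_map
    (K := FractionRing Z), map_expand] at h ⊢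
  exact aux_field _ h

lemma aux_all_s8 {Z : Type*} [CommRing Z] [IsDomain Z] [UniqueFactorizationMonoid Z]
    (f : Z[X]) (hdeg : 0 < f.natDegree)
    (h : Irreducible (expand Z 4 f)) (k : ℕ) : Irreducible (expand Z (2^(k+2)) f) := by
  induction k with
  | zero => simpa using h
  | succ k ih =>
    have e : ∀ m, expand Z (2^(k+m)) f = expand Z (2^m) (expand Z (2^k) f) := fun m => by
      rw [expand_expand, ← pow_add, add_comm]
    have := aux_Z (expand Z (2^k) f) (by rw [natDegree_expand]; positivity)
      (by simpa [e] using ih)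
    rw [show k+1+2 = k+3 by ring, e]
    simpa using this

theorem stmt8 {Z : Type*} [CommRing Z] [IsDomain Z] [UniqueFactorizationMonoid Z]
    (f : Polynomial Z) (hf : Irreducible f) (hdeg : 0 < f.natDegree)
    (s : ℕ) (hs : 1 ≤ s) :
    ¬ Irreducible (f.comp (X ^ 2 ^ s)) ↔
      (¬ Irreducible (f.comp (X ^ 2)) ∨ (2 ≤ s ∧ ¬ Irreducible (f.comp (X ^ 4)))) := by
  simp only [← expand_eq_comp_X_pow]
  rcases Nat.lt_or_ge s 2 with h | h
  · obtain rfl : s = 1 := by omega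
    simp
  · obtain ⟨k, rfl⟩ := Nat.exists_eq_add_of_le' h
    have h42 : Irreducible (expand Z 4 f) → Irreducible (expand Z 2 f) := fun h4 => by
      refine of_irreducible_expand (p := 2) (by norm_num) ?_
      rw [expand_expand]; exact h4
    have hk : Irreducible (expand Z (2^(k+2)) f) → Irreducible (expand Z 4 f) := fun h4 => by
      refine of_irreducible_expand (p := 2^k) (by positivity) ?_
      rw [expand_expand]
      rwa [pow_add] at h4
    have := aux_all_s8 f hdeg
    constructor
    · intro h1
      exact Or.inr ⟨h, fun h4 => h1 (this h4 k)⟩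
    · rintro (h1 | ⟨-, h1⟩) h2
      · exact h1 (h42 (hk h2))
      · exact h1 (hk h2)
end

section
/- Let Z be a unique factorization domain, let f ∈ Z[X] be irreducible in Z[X] of positive degree m with leading coefficient a, and let s ≥ 1 be an integer. Then f(X^{2^s}) is not irreducible in Z[X] if and only if there exist polynomials S_0, S_1 ∈ Z[X] and a unit u ∈ Zˣ with u·a a square in Z such that either (−1)^m·u·f(X) = S_0(X)^2 − X·S_1(X)^2, or else s ≥ 2 and u·f(X^2) = S_0(X)^2 − X·S_1(X)^2. -/
open Polynomial

namespace Stmt10Aux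

variable {Z : Type*} [CommRing Z]

lemma conj_expand (p : Z[X]) : (expand Z 2 p).comp (-X) = expand Z 2 p := by
  rw [expand_eq_comp_X_pow, comp_assoc]; simp

lemma expand_neg (p : Z[X]) :
    expand Z 2 (expand Z 2 (p)) = (expand Z 2 (expand Z 2 p)).comp (-X) := (conj_expand _).symm

lemma conj_conj (p : Z[X]) : (p.comp (-X)).comp (-X) = p := by
  rw [comp_assoc]; simp

lemma decomp (p : Z[X]) : ∃ A B : Z[X], p = expand Z 2 A + X * expand Z 2 B := by
  induction p using Polynomial.induction_on' with
  | add p q hp hq =>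
    obtain ⟨A, B, h⟩ := hp
    obtain ⟨A', B', h'⟩ := hq
    refine ⟨A + A', B + B', ?_⟩
    rw [map_add, map_add, h, h']
    ring
  | monomial n a =>
    obtain ⟨k, hk | hk⟩ := Nat.even_or_odd' n
    · refine ⟨monomial k a, 0, ?_⟩
      simp [hk, expand_monomial, mul_comm]
    · refine ⟨0, monomial k a, ?_⟩
      simp [hk, expand_monomial, mul_comm, monomial_mul_X]

lemma dvd_of_expand {G q : Z[X]} (h : expand Z 2 G ∣ expand Z 2 q) : G ∣ q := by
  obtain ⟨r, hr⟩ := h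
  obtain ⟨A, B, rfl⟩ := decomp r
  refine ⟨A, ?_⟩
  have h2 : expand Z 2 q = expand Z 2 (G * A) + X * expand Z 2 (G * B) := by
    rw [hr]; simp only [map_mul]; ring
  ext n
  have := congrArg (fun p => coeff p (2 * n)) h2
  simp only [coeff_add] at this
  rw [mul_comm 2 n, coeff_expand_mul (by norm_num), coeff_expand_mul (by norm_num)] at this
  rw [this]
  rcases n with _ | n
  · simp
  · have e : (n + 1) * 2 = (2 * n + 1) + 1 := by ring
    rw [e, coeff_X_mul, coeff_expand (by norm_num), if_neg (by omega), add_zero]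

lemma expand_dvd' {G q : Z[X]} (h : G ∣ q) : expand Z 2 G ∣ expand Z 2 q := by
  obtain ⟨r, rfl⟩ := h
  rw [map_mul]
  exact dvd_mul_right _ _

lemma norm_eq (A B : Z[X]) :
    (expand Z 2 A + X * expand Z 2 B) * (expand Z 2 A + X * expand Z 2 B).comp (-X)
      = expand Z 2 (A ^ 2 - X * B ^ 2) := by
  simp only [add_comp, mul_comp, conj_expand, X_comp, map_sub, map_mul, map_pow, expand_X]
  ring

lemma isUnit_conj {g : Z[X]} (h : IsUnit (g.comp (-X))) : IsUnit g := by
  have := h.map (compRingHom (-X : Z[X]))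
  rwa [coe_compRingHom_apply, conj_conj] at this

lemma dvd_conj {F g : Z[X]} (hF : F.comp (-X) = F) (h : F ∣ g.comp (-X)) : F ∣ g := by
  have := map_dvd (compRingHom (-X : Z[X])) h
  rwa [coe_compRingHom_apply, coe_compRingHom_apply, conj_conj, hF] at this

lemma lemB {F S₀ S₁ : Z[X]} (v : Z) (hF : ¬ IsUnit F) (hv : IsUnit v)
    (h : C v * F = S₀ ^ 2 - X * S₁ ^ 2) [IsDomain Z] : ¬ Irreducible (expand Z 2 F) := by
  intro hi
  have hn := norm_eq S₀ S₁
  rw [← h, map_mul, expand_C] at hn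
  have hcv : IsUnit (C v) := hv.map C
  have h1 : Irreducible ((expand Z 2 S₀ + X * expand Z 2 S₁) *
      (expand Z 2 S₀ + X * expand Z 2 S₁).comp (-X)) := by
    rw [hn]; exact (irreducible_isUnit_mul hcv).2 hi
  have hu : IsUnit (expand Z 2 S₀ + X * expand Z 2 S₁) := by
    rcases h1.isUnit_or_isUnit rfl with h | h
    · exact h
    · exact isUnit_conj h
  apply h1.not_isUnit
  exact hu.mul (hu.map (compRingHom (-X : Z[X])))

lemma lemA [IsDomain Z] [UniqueFactorizationMonoid Z] {F : Z[X]} (hF : Irreducible F)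
    (h : ¬ Irreducible (expand Z 2 F)) :
    ∃ (S₀ S₁ : Z[X]) (u : Zˣ), (∃ c : Z, (u : Z) * F.leadingCoeff = c ^ 2) ∧
      C ((-1 : Z) ^ F.natDegree * (u : Z)) * F = S₀ ^ 2 - X * S₁ ^ 2 := by
  have hnu : ¬ IsUnit (expand Z 2 F) := fun hu =>
    hF.not_isUnit ((isLocalHom_expand Z (by norm_num : 0 < 2)).map_nonunit _ hu)
  have : ∃ g k : Z[X], expand Z 2 F = g * k ∧ ¬ IsUnit g ∧ ¬ IsUnit k := by
    by_contra hc
    push Not at hc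
    exact h ⟨hnu, fun {a b} hab => or_iff_not_imp_left.2 (fun ha => hc a b hab ha)⟩
  obtain ⟨g, k, hgk, hg, hk⟩ := this
  obtain ⟨A, B, hA⟩ := decomp g
  obtain ⟨A', B', hA'⟩ := decomp k
  have n1 := norm_eq A B
  have n2 := norm_eq A' B'
  rw [← hA] at n1
  rw [← hA'] at n2
  set P := A ^ 2 - X * B ^ 2 with hP
  set Q := A' ^ 2 - X * B' ^ 2 with hQ
  have hPQ : F ^ 2 = P * Q := by
    apply expand_injective (R := Z) (n := 2) (by norm_num)
    rw [map_mul, ← n1, ← n2, map_pow, sq]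
    nth_rewrite 2 [← conj_expand]
    rw [hgk, mul_comp]; ring
  have hPu : ¬ IsUnit P := fun hu => hg (by
    have := hu.map (expand Z 2)
    rw [← n1] at this
    exact isUnit_of_mul_isUnit_left this)
  have hQu : ¬ IsUnit Q := fun hu => hk (by
    have := hu.map (expand Z 2)
    rw [← n2] at this
    exact isUnit_of_mul_isUnit_left this)
  have hFp : Prime F := hF.prime
  obtain ⟨i, hi, has⟩ := (dvd_prime_pow hFp 2).1 (Dvd.intro _ hPQ.symm : P ∣ F ^ 2)
  have hi1 : i = 1 := by
    interval_cases i
    · simp [associated_one_iff_isUnit] at has; exact absurd has hPu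
    · rfl
    · exfalso
      obtain ⟨w, hw⟩ := has
      rw [hPQ] at hw
      have hP0 : P ≠ 0 := by
        rintro h0
        rw [h0, zero_mul] at hPQ
        exact hFp.ne_zero (pow_eq_zero_iff (by norm_num) |>.1 hPQ)
      exact hQu (by rw [← mul_left_cancel₀ hP0 hw]; exact w.isUnit)
  subst hi1
  rw [pow_one] at has
  obtain ⟨w, hw⟩ := has.symm
  obtain ⟨v, hv, hvw⟩ := Polynomial.isUnit_iff.1 w.isUnit
  obtain ⟨v, rfl⟩ := hv
  rw [← hvw] at hw
  have hdP : P.natDegree = F.natDegree := by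
    rw [← hw, natDegree_mul_C v.ne_zero]
  have hnX : (-X : Z[X]).natDegree = 1 := by simp
  have hdg : g.natDegree = F.natDegree := by
    have h1 := congrArg natDegree n1
    have hg0 : g ≠ 0 := by
      rintro rfl
      apply hF.ne_zero
      apply expand_injective (R := Z) (n := 2) (by norm_num)
      rw [hgk]; simp
    have hg0' : g.comp (-X) ≠ 0 := by
      intro h0
      apply hg0
      rw [← conj_conj g, h0, zero_comp]
    rw [natDegree_mul hg0 hg0', natDegree_comp, hnX, natDegree_expand, hdP] at h1
    omega
  have hlc : (-1 : Z) ^ F.natDegree * g.leadingCoeff ^ 2 = v * F.leadingCoeff := by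
    have h1 := congrArg leadingCoeff n1
    rw [leadingCoeff_mul, leadingCoeff_comp (by rw [hnX]; norm_num), hdg,
      leadingCoeff_expand (by norm_num), ← hw, leadingCoeff_mul, leadingCoeff_C] at h1
    rw [leadingCoeff_neg, leadingCoeff_X] at h1
    rw [mul_comm (v : Z), ← h1]; ring
  have hs : ((-1 : Z) ^ F.natDegree) * (-1 : Z) ^ F.natDegree = 1 := by
    rw [← mul_pow]; simp
  refine ⟨A, B, (-1) ^ F.natDegree * v, ⟨g.leadingCoeff, ?_⟩, ?_⟩
  · push_cast
    rw [mul_assoc, ← hlc, ← mul_assoc, hs, one_mul]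
  · push_cast
    rw [← mul_assoc, hs, one_mul, ← hP, ← hw, mul_comm]

set_option maxHeartbeats 1000000 in
lemma lemD [IsDomain Z] [UniqueFactorizationMonoid Z] {H : Z[X]} (hd : 0 < H.natDegree)
    (hF : Irreducible (expand Z 2 (expand Z 2 H))) (v : Z) (hv : IsUnit v) (S₀ S₁ : Z[X])
    (h : C v * expand Z 2 (expand Z 2 H) = S₀ ^ 2 - X * S₁ ^ 2) : False := by
  set G := expand Z 2 H with hG
  set F := expand Z 2 G with hFG
  have hFp : Prime F := hF.prime
  have hcv : IsUnit (C v) := hv.map C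
  have hFd : F.natDegree = 4 * H.natDegree := by
    rw [hFG, hG, natDegree_expand, natDegree_expand]; ring
  have hFc : F.comp (-X) = F := conj_expand _
  have hGc : G.comp (-X) = G := conj_expand _
  clear_value F G
  by_cases h2 : (2 : Z) = 0
  · have h2' : (2 : Z[X]) = 0 := by
      have h3 : (C (2 : Z) : Z[X]) = C 0 := by rw [h2]
      rwa [C_0] at h3
    have hder := congrArg derivative h
    have e : derivative F = 0 := by
      rw [hFG, derivative_expand]
      simp [h2']
    have hS : S₁ ^ 2 = 0 := by
      simp only [derivative_mul, derivative_C, e, derivative_sub, derivative_pow, derivative_X] at hder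
      simp [h2, h2'] at hder
      simpa using hder
    have hS1 : S₁ = 0 := by simpa using hS
    rw [hS1] at h
    have h' : C v * F = S₀ * S₀ := by rw [h]; ring
    have hi : Irreducible (S₀ * S₀) := by
      rw [← h']; exact (irreducible_isUnit_mul hcv).2 hF
    rcases hi.isUnit_or_isUnit rfl with h | h <;> exact hi.not_isUnit (h.mul h)
  · have hF2 : ¬ F ∣ 2 := by
      intro hd2
      have h20 : (C (2 : Z)) ≠ 0 := by simpa using h2
      have := natDegree_le_of_dvd (show F ∣ C 2 from hd2) h20
      rw [natDegree_C] at this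
      omega
    have hFX : ¬ F ∣ X := by
      intro hdX
      have := natDegree_le_of_dvd hdX X_ne_zero
      rw [natDegree_X] at this
      omega
    obtain ⟨A, B, hA⟩ := decomp S₀
    obtain ⟨A', B', hA'⟩ := decomp S₁
    have n0 := norm_eq A B
    have n1 := norm_eq A' B'
    rw [← hA] at n0
    rw [← hA'] at n1
    set P := A ^ 2 - X * B ^ 2 with hP
    set Q := A' ^ 2 - X * B' ^ 2 with hQ
    have hc := congrArg (fun p => p.comp (-X)) h
    simp only [mul_comp, C_comp, hFc, sub_comp, pow_comp, X_comp] at hc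
    have d1 : F ∣ expand Z 2 (P ^ 2 + X * Q ^ 2) := by
      simp only [map_add, map_mul, map_pow, expand_X, ← n0, ← n1]
      refine ⟨C v * (S₀.comp (-X)) ^ 2 + C v * X * S₁ ^ 2, ?_⟩
      linear_combination (-(S₀.comp (-X)) ^ 2) * h - X * S₁ ^ 2 * hc
    have d2 : G ∣ P ^ 2 + X * Q ^ 2 := dvd_of_expand (hFG ▸ d1)
    have d3 : G ∣ (P.comp (-X)) ^ 2 - X * (Q.comp (-X)) ^ 2 := by
      apply dvd_conj hGc
      simp only [sub_comp, mul_comp, pow_comp, X_comp, conj_conj]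
      convert d2 using 1; ring
    have d4 := expand_dvd' d3
    rw [← norm_eq, ← hFG] at d4
    set M := expand Z 2 (P.comp (-X)) + X * expand Z 2 (Q.comp (-X)) with hM
    have d5 : F ∣ M := by
      rcases hFp.dvd_or_dvd d4 with h | h
      · exact h
      · exact dvd_conj hFc h
    have d6 : F ∣ M.comp (-X) := by
      apply dvd_conj hFc; rwa [conj_conj]
    have e6 : M.comp (-X) = expand Z 2 (P.comp (-X)) - X * expand Z 2 (Q.comp (-X)) := by
      rw [hM]; simp only [add_comp, mul_comp, X_comp, conj_expand]; ring
    rw [e6] at d6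
    have key : ∀ (T R : Z[X]), T * T.comp (-X) = expand Z 2 R → F ∣ expand Z 2 (R.comp (-X)) →
        F ∣ T := by
      intro T R hT hd
      have : F ∣ T * T.comp (-X) := by
        have g1 : G ∣ R.comp (-X) := dvd_of_expand (by rw [← hFG]; exact hd)
        have g2 : G ∣ R := dvd_conj hGc g1
        have g3 : expand Z 2 G ∣ expand Z 2 R := expand_dvd' g2
        rw [hT]
        rw [hFG]; exact g3
      rcases hFp.dvd_or_dvd this with h | h
      · exact h
      · exact dvd_conj hFc h
    have f0 : F ∣ S₀ := by
      apply key _ _ n0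
      have : F ∣ 2 * expand Z 2 (P.comp (-X)) := by
        convert dvd_add d5 d6 using 1; rw [hM]; ring
      exact (hFp.dvd_or_dvd this).resolve_left hF2
    have f1 : F ∣ S₁ := by
      apply key _ _ n1
      have : F ∣ 2 * (X * expand Z 2 (Q.comp (-X))) := by
        convert dvd_sub d5 d6 using 1; rw [hM]; ring
      exact (hFp.dvd_or_dvd ((hFp.dvd_or_dvd this).resolve_left hF2)).resolve_left hFX
    obtain ⟨a, ha⟩ := f0
    obtain ⟨b, hb⟩ := f1
    have : C v = F * (a ^ 2 - X * b ^ 2) := by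
      apply mul_right_cancel₀ hFp.ne_zero
      rw [h, ha, hb]; ring
    exact hF.not_isUnit (isUnit_of_dvd_unit ⟨_, this⟩ hcv)

end Stmt10Aux

open Stmt10Aux in
theorem stmt10 {Z : Type*} [CommRing Z] [IsDomain Z] [UniqueFactorizationMonoid Z]
    (f : Polynomial Z) (hf : Irreducible f) (hdeg : 0 < f.natDegree)
    (s : ℕ) (hs : 1 ≤ s) :
    ¬ Irreducible (f.comp (X ^ 2 ^ s)) ↔
      ∃ (S₀ S₁ : Polynomial Z) (u : Zˣ),
        (∃ c : Z, (u : Z) * f.leadingCoeff = c ^ 2) ∧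
          (C ((-1 : Z) ^ f.natDegree * (u : Z)) * f = S₀ ^ 2 - X * S₁ ^ 2 ∨
            (2 ≤ s ∧ C ((u : Z)) * f.comp (X ^ 2) = S₀ ^ 2 - X * S₁ ^ 2)) := by
  rw [← expand_eq_comp_X_pow, ← expand_eq_comp_X_pow]
  constructor
  · intro h
    clear hs
    induction s with
    | zero => simp [hf] at h
    | succ t ih =>
      by_cases ht : Irreducible (expand Z (2 ^ t) f)
      · rw [pow_succ', ← expand_expand] at h
        obtain ⟨S₀, S₁, u, ⟨c, hc⟩, hS⟩ := lemA ht h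
        rw [leadingCoeff_expand (by positivity)] at hc
        rcases t with _ | _ | t
        · refine ⟨S₀, S₁, u, ⟨c, hc⟩, Or.inl ?_⟩
          simpa using hS
        · refine ⟨S₀, S₁, u, ⟨c, hc⟩, Or.inr ⟨by omega, ?_⟩⟩
          simpa [natDegree_expand, pow_mul'] using hS
        · exfalso
          rw [show 2 ^ (t + 1 + 1) = 2 * (2 * 2 ^ t) by ring, ← expand_expand,
            ← expand_expand] at ht hS
          refine lemD ?_ ht _ ?_ S₀ S₁ hS
          · rw [natDegree_expand]; positivity
          · exact (((isUnit_one (M := Z)).neg).pow _).mul u.isUnit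
      · obtain ⟨S₀, S₁, u, hc, hS⟩ := ih ht
        refine ⟨S₀, S₁, u, hc, hS.imp id (fun h => ⟨by omega, h.2⟩)⟩
  · rintro ⟨S₀, S₁, u, -, hS | ⟨h2, hS⟩⟩ hi
    · have := lemB _ hf.not_isUnit ((((isUnit_one (M := Z)).neg).pow _).mul u.isUnit) hS
      apply this
      obtain ⟨t, rfl⟩ := Nat.exists_eq_add_of_le' hs
      rw [pow_succ, ← expand_expand] at hi
      exact of_irreducible_expand (by positivity) hi
    · have hnu : ¬ IsUnit (expand Z 2 f) := fun hu =>
        hf.not_isUnit ((isLocalHom_expand Z (by norm_num : 0 < 2)).map_nonunit _ hu)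
      apply lemB _ hnu u.isUnit hS
      obtain ⟨t, rfl⟩ := Nat.exists_eq_add_of_le' h2
      rw [show 2 ^ (t + 2) = 2 ^ t * (2 * 2) by ring, ← expand_expand, ← expand_expand] at hi
      exact of_irreducible_expand (by positivity) hi
end

section
/- Let Z be a unique factorization domain, let f ∈ Z[X] be irreducible in Z[X] of positive degree with leading coefficient a, and let s ≥ 1 be an integer. Then f(X^{3^s}) is not irreducible in Z[X] if and only if there exist polynomials S_0, S_1, S_2 ∈ Z[X] and a unit u ∈ Zˣ with u·a a cube in Z such that u·f(X) = S_0(X)^3 + X·S_1(X)^3 + X^2·S_2(X)^3 − 3·X·S_0(X)·S_1(X)·S_2(X). -/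
open Polynomial

noncomputable def nrm {R : Type*} [CommRing R] (S₀ S₁ S₂ : R[X]) : R[X] :=
  S₀ ^ 3 + X * S₁ ^ 3 + X ^ 2 * S₂ ^ 3 - 3 * X * S₀ * S₁ * S₂

noncomputable def cmb {R : Type*} [CommRing R] (S₀ S₁ S₂ : R[X]) : R[X] :=
  expand R 3 S₀ + X * expand R 3 S₁ + X ^ 2 * expand R 3 S₂

lemma coeff_cmb {R : Type*} [CommRing R] (S₀ S₁ S₂ : R[X]) (k : ℕ) :
    (cmb S₀ S₁ S₂).coeff (3 * k) = S₀.coeff k ∧ (cmb S₀ S₁ S₂).coeff (3 * k + 1) = S₁.coeff k ∧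
    (cmb S₀ S₁ S₂).coeff (3 * k + 2) = S₂.coeff k := by
  have e : ∀ n : ℕ, (X * expand R 3 S₁).coeff n = if n % 3 = 1 then S₁.coeff (n / 3) else 0 := by
    rintro (_ | n)
    · simp
    · rw [coeff_X_mul, coeff_expand (by norm_num)]
      split_ifs
      · congr 1; omega
      · omega
      · omega
      · rfl
  have e2 : ∀ n : ℕ, (X ^ 2 * expand R 3 S₂).coeff n = if n % 3 = 2 then S₂.coeff (n / 3) else 0 := by
    intro n
    rw [coeff_X_pow_mul', coeff_expand (by norm_num)]
    split_ifs
    all_goals first | rfl | omega | (congr 1; omega)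
  unfold cmb
  simp only [coeff_add, e, e2, coeff_expand (show 0 < 3 by norm_num)]
  refine ⟨?_, ?_, ?_⟩
  · rw [if_pos (by omega), if_neg (by omega), if_neg (by omega)]; simp
  · rw [if_neg (by omega), if_pos (by omega), if_neg (by omega)]; simp; congr 1; omega
  · rw [if_neg (by omega), if_neg (by omega), if_pos (by omega)]; simp; congr 1; omega

lemma exists_cmb {R : Type*} [CommRing R] (G : R[X]) : ∃ S₀ S₁ S₂, G = cmb S₀ S₁ S₂ := by
  refine ⟨contract 3 G, contract 3 (divX G), contract 3 (divX (divX G)), ?_⟩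
  ext n
  have h := coeff_cmb (contract 3 G) (contract 3 (divX G)) (contract 3 (divX (divX G))) (n / 3)
  simp only [coeff_contract (show 3 ≠ 0 by norm_num), coeff_divX] at h
  have : n % 3 < 3 := Nat.mod_lt _ (by norm_num)
  obtain h' | h' | h' : n = 3 * (n/3) ∨ n = 3 * (n/3) + 1 ∨ n = 3 * (n/3) + 2 := by omega
  · rw [h', h.1]; congr 1; omega
  · rw [h', h.2.1]; congr 1; omega
  · rw [h', h.2.2]; congr 1; omega

lemma nrm_aux {R : Type*} [CommRing R] (S₀ S₁ S₂ : R[X]) (m : ℕ) (h0 : S₀.natDegree ≤ m)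
    (h1 : S₁.natDegree ≤ m) (h2 : S₂.natDegree ≤ m) :
    (nrm S₀ S₁ S₂).natDegree ≤ 3 * m + 2 ∧ (nrm S₀ S₁ S₂).coeff (3 * m + 2) = S₂.coeff m ^ 3 := by
  have a0 : (S₀ ^ 3).natDegree ≤ 3 * m := natDegree_pow_le_of_le 3 h0
  have a1 : (S₁ ^ 3).natDegree ≤ 3 * m := natDegree_pow_le_of_le 3 h1
  have a2 : (S₂ ^ 3).natDegree ≤ 3 * m := natDegree_pow_le_of_le 3 h2
  have a3 : (3 * S₀ * S₁ * S₂).natDegree ≤ 3 * m := by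
    have : (3 : R[X]) = C 3 := (map_ofNat C 3).symm
    have := natDegree_mul_le_of_le (natDegree_mul_le_of_le (natDegree_mul_le_of_le
      (show (3 : R[X]).natDegree ≤ 0 by rw [this, natDegree_C]) h0) h1) h2
    omega
  have b1 : (X * S₁ ^ 3).natDegree ≤ 3 * m + 1 := by
    have := natDegree_mul_le_of_le (natDegree_X_le (R := R)) a1
    omega
  have b3 : (X * (3 * S₀ * S₁ * S₂)).natDegree ≤ 3 * m + 1 := by
    have := natDegree_mul_le_of_le (natDegree_X_le (R := R)) a3
    omega
  have b2 : (X ^ 2 * S₂ ^ 3).natDegree ≤ 3 * m + 2 := by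
    have := natDegree_mul_le_of_le (natDegree_X_pow_le (R := R) 2) a2
    omega
  have e : nrm S₀ S₁ S₂ = S₀ ^ 3 + X * S₁ ^ 3 + X ^ 2 * S₂ ^ 3 - X * (3 * S₀ * S₁ * S₂) := by
    unfold nrm; ring
  rw [e]
  constructor
  · refine natDegree_sub_le_of_le (natDegree_add_le_of_degree_le (natDegree_add_le_of_degree_le ?_ ?_) ?_) ?_ |>.trans (max_self _).le <;> omega
  · rw [coeff_sub, coeff_add, coeff_add, coeff_eq_zero_of_natDegree_lt (p := S₀ ^ 3) (by omega),
      coeff_eq_zero_of_natDegree_lt (p := X * S₁ ^ 3) (by omega),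
      coeff_eq_zero_of_natDegree_lt (p := X * (3 * S₀ * S₁ * S₂)) (by omega), coeff_X_pow_mul,
      mul_comm 3 m, mul_comm m 3]
    simp [coeff_pow_of_natDegree_le h2]

lemma nrm_shift {R : Type*} [CommRing R] (S₀ S₁ S₂ : R[X]) :
    nrm (X * S₂) S₀ S₁ = X * nrm S₀ S₁ S₂ := by unfold nrm; ring

lemma nrm_deg {R : Type*} [CommRing R] (S₀ S₁ S₂ : R[X]) (n : ℕ)
    (h : (cmb S₀ S₁ S₂).natDegree ≤ n) :
    (nrm S₀ S₁ S₂).natDegree ≤ n ∧ (nrm S₀ S₁ S₂).coeff n = (cmb S₀ S₁ S₂).coeff n ^ 3 := by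
  have hz : ∀ k, n < k → (cmb S₀ S₁ S₂).coeff k = 0 := fun k hk =>
    coeff_eq_zero_of_natDegree_lt (by omega)
  have c0 := fun k => (coeff_cmb S₀ S₁ S₂ k).1
  have c1 := fun k => (coeff_cmb S₀ S₁ S₂ k).2.1
  have c2 := fun k => (coeff_cmb S₀ S₁ S₂ k).2.2
  have d0 : S₀.natDegree ≤ n / 3 := natDegree_le_iff_coeff_eq_zero.2 fun k hk => by
    rw [← c0]; exact hz _ (by omega)
  have d1 : S₁.natDegree ≤ n / 3 := natDegree_le_iff_coeff_eq_zero.2 fun k hk => by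
    rw [← c1]; exact hz _ (by omega)
  have d2 : S₂.natDegree ≤ n / 3 := natDegree_le_iff_coeff_eq_zero.2 fun k hk => by
    rw [← c2]; exact hz _ (by omega)
  have sh : ∀ (S : R[X]) (m : ℕ), (∀ k, m ≤ k → S.coeff k = 0) → (X * S).natDegree ≤ m := by
    intro S m hS
    refine natDegree_le_iff_coeff_eq_zero.2 fun k hk => ?_
    obtain ⟨k, rfl⟩ : ∃ j, k = j + 1 := ⟨k - 1, by omega⟩
    rw [coeff_X_mul]; exact hS _ (by omega)
  have un : ∀ (P : R[X]) (m : ℕ), (X * P).natDegree ≤ m + 1 → P.natDegree ≤ m := by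
    intro P m hP
    refine natDegree_le_iff_coeff_eq_zero.2 fun k hk => ?_
    rw [← coeff_X_mul]; exact coeff_eq_zero_of_natDegree_lt (by omega)
  have d2' : n % 3 ≠ 2 → (X * S₂).natDegree ≤ n / 3 := fun hn => sh _ _ fun k hk => by
    rw [← c2]; exact hz _ (by omega)
  have d1' : n % 3 = 0 → (X * S₁).natDegree ≤ n / 3 := fun hn => sh _ _ fun k hk => by
    rw [← c1]; exact hz _ (by omega)
  have hd : n = 3 * (n / 3) + n % 3 := by omega
  have : n % 3 < 3 := Nat.mod_lt _ (by norm_num)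
  generalize n / 3 = m at *
  obtain h' | h' | h' : n % 3 = 0 ∨ n % 3 = 1 ∨ n % 3 = 2 := by omega
  · obtain rfl : n = 3 * m := by omega
    have := nrm_aux (X * S₁) (X * S₂) S₀ m (d1' h') (d2' (by omega)) d0
    rw [nrm_shift, nrm_shift] at this
    refine ⟨un _ _ (un _ _ this.1), ?_⟩
    rw [c0, ← this.2, coeff_X_mul, coeff_X_mul]
  · obtain rfl : n = 3 * m + 1 := by omega
    have := nrm_aux (X * S₂) S₀ S₁ m (d2' (by omega)) d0 d1
    rw [nrm_shift] at this
    refine ⟨un _ _ this.1, ?_⟩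
    rw [c1, ← this.2, coeff_X_mul]
  · obtain rfl : n = 3 * m + 2 := by omega
    have := nrm_aux S₀ S₁ S₂ m d0 d1 d2
    exact ⟨this.1, by rw [this.2, c2]⟩

lemma nrm_fac {R : Type*} [CommRing R] (S₀ S₁ S₂ : R[X]) : cmb S₀ S₁ S₂ ∣ expand R 3 (nrm S₀ S₁ S₂) := by
  refine ⟨expand R 3 S₀ ^ 2 + X ^ 2 * expand R 3 S₁ ^ 2 + X ^ 4 * expand R 3 S₂ ^ 2
    - X * expand R 3 S₀ * expand R 3 S₁ - X ^ 2 * expand R 3 S₀ * expand R 3 S₂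
    - X ^ 3 * expand R 3 S₁ * expand R 3 S₂, ?_⟩
  unfold cmb nrm
  have : (3 : R[X]) = C 3 := (map_ofNat C 3).symm
  simp only [map_add, map_sub, map_mul, map_pow, expand_X, this, expand_C]
  rw [← this]
  ring

lemma nrm_ne {R : Type*} [CommRing R] [IsDomain R] (S₀ S₁ S₂ : R[X]) (h : cmb S₀ S₁ S₂ ≠ 0) :
    nrm S₀ S₁ S₂ ≠ 0 ∧ (nrm S₀ S₁ S₂).natDegree = (cmb S₀ S₁ S₂).natDegree ∧
    (nrm S₀ S₁ S₂).leadingCoeff = (cmb S₀ S₁ S₂).leadingCoeff ^ 3 := by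
  obtain ⟨h1, h2⟩ := nrm_deg S₀ S₁ S₂ _ le_rfl
  have h3 : (nrm S₀ S₁ S₂).coeff (cmb S₀ S₁ S₂).natDegree ≠ 0 := by
    rw [h2]; exact pow_ne_zero _ (leadingCoeff_ne_zero.2 h)
  have h4 := natDegree_eq_of_le_of_coeff_ne_zero h1 h3
  refine ⟨fun h => h3 (by rw [h, coeff_zero]), h4, ?_⟩
  rw [leadingCoeff, h4, h2, leadingCoeff]

lemma map_nrm {R S : Type*} [CommRing R] [CommRing S] (φ : R →+* S) (S₀ S₁ S₂ : R[X]) :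
    (nrm S₀ S₁ S₂).map φ = nrm (S₀.map φ) (S₁.map φ) (S₂.map φ) := by
  simp [nrm]

lemma map_cmb {R S : Type*} [CommRing R] [CommRing S] (φ : R →+* S) (S₀ S₁ S₂ : R[X]) :
    (cmb S₀ S₁ S₂).map φ = cmb (S₀.map φ) (S₁.map φ) (S₂.map φ) := by
  simp [cmb, map_expand]

lemma nrm_prim {R : Type*} [CommRing R] [IsDomain R] [UniqueFactorizationMonoid R] (S₀ S₁ S₂ : R[X])
    (h : (cmb S₀ S₁ S₂).IsPrimitive) : (nrm S₀ S₁ S₂).IsPrimitive := by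
  have hne := (nrm_ne _ _ _ h.ne_zero).1
  intro r hr
  by_contra hu
  have hr0 : r ≠ 0 := by
    rintro rfl
    rw [C_0, zero_dvd_iff] at hr
    exact hne hr
  obtain ⟨p, hp, hpr⟩ := WfDvdMonoid.exists_irreducible_factor hu hr0
  have hpp := hp.prime
  have hI : (Ideal.span {p}).IsPrime := (Ideal.span_singleton_prime hpp.ne_zero).2 hpp
  have key : ∀ P : R[X], C p ∣ P ↔ P.map (Ideal.Quotient.mk (Ideal.span {p})) = 0 := by
    intro P
    rw [C_dvd_iff_dvd_coeff, Polynomial.ext_iff]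
    simp [Ideal.Quotient.eq_zero_iff_mem, Ideal.mem_span_singleton]
  have h1 := (key _).1 ((map_dvd C hpr).trans hr)
  have h2 : (cmb S₀ S₁ S₂).map (Ideal.Quotient.mk (Ideal.span {p})) = 0 := by
    by_contra h3
    rw [map_cmb] at h3
    rw [map_nrm] at h1
    exact (nrm_ne _ _ _ h3).1 h1
  exact hp.not_isUnit (h p ((key _).2 h2))

lemma bwd {Z : Type*} [CommRing Z] [IsDomain Z] (f : Z[X]) (hdeg : 0 < f.natDegree)
    (s : ℕ) (hs : 1 ≤ s) (S₀ S₁ S₂ : Z[X]) (u : Zˣ) (h : C (u : Z) * f = nrm S₀ S₁ S₂) :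
    ¬ Irreducible (f.comp (X ^ 3 ^ s)) := by
  intro hi
  rw [← expand_eq_comp_X_pow] at hi
  obtain ⟨t, rfl⟩ : ∃ t, s = t + 1 := ⟨s - 1, by omega⟩
  rw [pow_succ, ← expand_expand] at hi
  have hi := of_irreducible_expand (by positivity) hi
  have hu : IsUnit (C (u : Z)) := isUnit_C.2 u.isUnit
  have hf0 : f ≠ 0 := by rintro rfl; simp at hdeg
  have hc : cmb S₀ S₁ S₂ ≠ 0 := by
    intro h0
    have hd := fun k => coeff_cmb S₀ S₁ S₂ k
    simp only [h0, coeff_zero] at hd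
    have e0 : S₀ = 0 := by ext k; simp [← (hd k).1]
    have e1 : S₁ = 0 := by ext k; simp [← (hd k).2.1]
    have e2 : S₂ = 0 := by ext k; simp [← (hd k).2.2]
    have : nrm S₀ S₁ S₂ = 0 := by simp [nrm, e0, e1, e2]
    rw [this] at h
    exact mul_ne_zero hu.ne_zero hf0 h
  have hn := (nrm_ne _ _ _ hc).2.1
  rw [← h, natDegree_C_mul u.ne_zero] at hn
  have hd := nrm_fac S₀ S₁ S₂
  rw [← h, map_mul, expand_C, hu.dvd_mul_left] at hd
  rcases hi.dvd_iff.1 hd with h1 | h1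
  · have := natDegree_eq_zero_of_isUnit h1
    omega
  · have := natDegree_eq_of_degree_eq (degree_eq_degree_of_associated h1)
    rw [natDegree_expand] at this
    omega

lemma exists_prim {Z K L : Type*} [CommRing Z] [IsDomain Z] [UniqueFactorizationMonoid Z] [Field K]
    [Algebra Z K] [IsFractionRing Z K] [Field L] [Algebra K L] (b : L) (hb : IsIntegral K b) :
    ∃ G : Z[X], G.IsPrimitive ∧ G.natDegree ≤ (minpoly K b).natDegree ∧
      aeval b (G.map (algebraMap Z K)) = 0 := by
  classical
  let : NormalizedGCDMonoid Z := Nonempty.some inferInstance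
  obtain ⟨c, hc, h⟩ := IsLocalization.integerNormalization_spec (nonZeroDivisors Z) (minpoly K b)
  set P := IsLocalization.integerNormalization (nonZeroDivisors Z) (minpoly K b)
  have hinj := IsFractionRing.injective Z K
  have hc0 : algebraMap Z K c ≠ 0 := by
    rw [Ne, FaithfulSMul.algebraMap_eq_zero_iff]; exact nonZeroDivisors.ne_zero hc
  have h' : P.map (algebraMap Z K) = C (algebraMap Z K c) * minpoly K b := by
    rw [h, ← algebraMap_smul K c (minpoly K b), smul_eq_C_mul]
  have hP : P ≠ 0 := by
    intro h0
    rw [h0, Polynomial.map_zero] at h'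
    exact mul_ne_zero (C_ne_zero.2 hc0) (minpoly.ne_zero hb) h'.symm
  refine ⟨P.primPart, P.isPrimitive_primPart, ?_, ?_⟩
  · rw [natDegree_primPart, ← natDegree_map_eq_of_injective hinj P, h', natDegree_C_mul hc0]
  · have h1 : aeval b (P.map (algebraMap Z K)) = 0 := by rw [h']; simp
    rw [P.eq_C_content_mul_primPart, Polynomial.map_mul, map_mul, map_C, aeval_C] at h1
    refine (mul_eq_zero.1 h1).resolve_left ?_
    simpa [content_eq_zero_iff] using hP

lemma fwd_core {Z K L : Type*} [CommRing Z] [IsDomain Z] [UniqueFactorizationMonoid Z] [Field K]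
    [Algebra Z K] [IsFractionRing Z K] [Field L] [Algebra K L] (f : Z[X]) (hf : f.IsPrimitive)
    (b : L) (hb : IsIntegral K b) (hd : (minpoly K b).natDegree ≤ f.natDegree)
    (hdvd : ∀ P : K[X], aeval (b ^ 3) P = 0 → f.map (algebraMap Z K) ∣ P) :
    ∃ (S₀ S₁ S₂ : Z[X]) (u : Zˣ), (∃ c : Z, (u : Z) * f.leadingCoeff = c ^ 3) ∧
      C (u : Z) * f = nrm S₀ S₁ S₂ := by
  obtain ⟨G, hG, hGd, hGb⟩ := exists_prim (Z := Z) b hb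
  obtain ⟨S₀, S₁, S₂, rfl⟩ := exists_cmb G
  obtain ⟨hn0, hnd, hnl⟩ := nrm_ne _ _ _ hG.ne_zero
  have hnp := nrm_prim _ _ _ hG
  have h1 : aeval (b ^ 3) ((nrm S₀ S₁ S₂).map (algebraMap Z K)) = 0 := by
    rw [← expand_aeval, ← map_expand]
    obtain ⟨q, hq⟩ := nrm_fac S₀ S₁ S₂
    rw [hq, Polynomial.map_mul, map_mul, hGb, zero_mul]
  obtain ⟨q, hq⟩ := hf.dvd_of_fraction_map_dvd_fraction_map (K := K) (hdvd _ h1)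
  have hq0 : q ≠ 0 := by rintro rfl; exact hn0 (by rw [hq, mul_zero])
  have hqd : q.natDegree = 0 := by
    have := congrArg natDegree hq
    rw [natDegree_mul hf.ne_zero hq0] at this
    omega
  rw [eq_C_of_natDegree_eq_zero hqd] at hq
  obtain ⟨u, hu⟩ := hnp (q.coeff 0) (Dvd.intro_left _ hq.symm)
  rw [← hu, mul_comm] at hq
  refine ⟨S₀, S₁, S₂, u, ⟨(cmb S₀ S₁ S₂).leadingCoeff, ?_⟩, hq.symm⟩
  rw [← hnl, hq, leadingCoeff_mul, leadingCoeff_C]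

lemma comp_prim {Z : Type*} [CommRing Z] (f : Z[X]) (hf : f.IsPrimitive)
    (n : ℕ) (hn : 0 < n) : (f.comp (X ^ n)).IsPrimitive := by
  intro r hr
  refine hf r ?_
  rw [C_dvd_iff_dvd_coeff] at hr ⊢
  intro i
  have := hr (i * n)
  rwa [← expand_eq_comp_X_pow, coeff_expand_mul hn] at this

open IntermediateField in
lemma fwd {Z : Type*} (K : Type*) [CommRing Z] [IsDomain Z] [UniqueFactorizationMonoid Z]
    [Field K] [Algebra Z K] [IsFractionRing Z K] (f : Z[X])
    (hf : Irreducible f) (hdeg : 0 < f.natDegree) (s : ℕ)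
    (h : ¬ Irreducible (f.comp (X ^ 3 ^ s))) :
    ∃ (S₀ S₁ S₂ : Z[X]) (u : Zˣ), (∃ c : Z, (u : Z) * f.leadingCoeff = c ^ 3) ∧
      C (u : Z) * f = nrm S₀ S₁ S₂ := by
  have hp : f.IsPrimitive := hf.isPrimitive hdeg.ne'
  have hinj := IsFractionRing.injective Z K
  set F := f.map (algebraMap Z K) with hF
  have hFi : Irreducible F := (hp.irreducible_iff_irreducible_map_fraction_map).1 hf
  by_contra hno
  apply h
  rw [(comp_prim f hp (3 ^ s) (by positivity)).irreducible_iff_irreducible_map_fraction_map (K := K),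
    Polynomial.map_comp, Polynomial.map_pow, map_X, ← hF]
  have hl : F.leadingCoeff ≠ 0 := leadingCoeff_ne_zero.2 hFi.ne_zero
  have hu : IsUnit (C F.leadingCoeff⁻¹) := isUnit_C.2 (isUnit_iff_ne_zero.2 (inv_ne_zero hl))
  have hass : Associated F (F * C F.leadingCoeff⁻¹) := associated_mul_unit_right _ _ hu
  have hmain : Irreducible ((F * C F.leadingCoeff⁻¹).comp (X ^ 3 ^ s)) := by
    refine irreducible_comp (monic_mul_leadingCoeff_inv hFi.ne_zero) (monic_X_pow _)
      (hass.irreducible hFi) ?_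
    intro E _ _ x hx
    rw [Polynomial.map_pow, map_X]
    refine X_pow_sub_C_irreducible_of_prime_pow Nat.prime_three (by norm_num) s ?_
    intro b hb
    apply hno
    have hxi : IsIntegral K x := by
      by_contra hni
      rw [minpoly.eq_zero hni] at hx
      exact (hass.irreducible hFi).ne_zero hx.symm
    have : FiniteDimensional K K⟮x⟯ := adjoin.finiteDimensional hxi
    have hdF : F.natDegree = f.natDegree := natDegree_map_eq_of_injective hinj f
    refine fwd_core (K := K) f hp b (IsIntegral.of_finite K b) ?_ ?_
    · refine (minpoly.natDegree_le b).trans ?_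
      rw [adjoin.finrank hxi, hx, ← hdF, natDegree_mul_C (inv_ne_zero hl)]
    · intro P hP
      rw [hb] at hP
      have := minpoly.dvd K _ hP
      rw [minpoly_gen, hx] at this
      exact hass.dvd.trans this
  rw [mul_comp, C_comp] at hmain
  exact (associated_mul_unit_right _ _ hu).symm.irreducible hmain

theorem stmt11 {Z : Type*} [CommRing Z] [IsDomain Z] [UniqueFactorizationMonoid Z]
    (f : Polynomial Z) (hf : Irreducible f) (hdeg : 0 < f.natDegree)
    (s : ℕ) (hs : 1 ≤ s) :
    ¬ Irreducible (f.comp (X ^ 3 ^ s)) ↔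
      ∃ (S₀ S₁ S₂ : Polynomial Z) (u : Zˣ),
        (∃ c : Z, (u : Z) * f.leadingCoeff = c ^ 3) ∧
          C ((u : Z)) * f =
            S₀ ^ 3 + X * S₁ ^ 3 + X ^ 2 * S₂ ^ 3 - 3 * X * S₀ * S₁ * S₂ := by
  constructor
  · exact fwd (FractionRing Z) f hf hdeg s
  · rintro ⟨S₀, S₁, S₂, u, -, h⟩
    exact bwd f hdeg s hs S₀ S₁ S₂ u h
end

section
/- Let Z be a unique factorization domain of characteristic p, where p is a prime number, and let f ∈ Z[X] be irreducible in Z[X] of positive degree. Then f(X^p) is not irreducible in Z[X] if and only if there exist a unit u ∈ Zˣ and an irreducible polynomial P ∈ Z[X] such that u·f(X^p) = P(X)^p. -/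
open Polynomial

theorem stmt12 {Z : Type*} [CommRing Z] [IsDomain Z] [UniqueFactorizationMonoid Z]
    (p : ℕ) (hp : p.Prime) [CharP Z p]
    (f : Polynomial Z) (hf : Irreducible f) (hdeg : 0 < f.natDegree) :
    ¬ Irreducible (f.comp (X ^ p)) ↔
      ∃ (u : Zˣ) (P : Polynomial Z), Irreducible P ∧ C ((u : Z)) * f.comp (X ^ p) = P ^ p := by
  haveI : Fact p.Prime := ⟨hp⟩
  haveI : ExpChar Z p := ExpChar.prime hp
  rw [← expand_eq_comp_X_pow]
  constructor
  · intro hg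
    have hg0 : expand Z p f ≠ 0 := (expand_ne_zero hp.pos).2 hf.ne_zero
    have hgu : ¬ IsUnit (expand Z p f) := by
      intro h
      haveI := isLocalHom_expand Z hp.pos
      exact hf.not_isUnit (isUnit_of_map_unit (expand Z p) f h)
    obtain ⟨P, hP, h, hPh⟩ := WfDvdMonoid.exists_irreducible_factor hgu hg0
    have e : ∀ q : Z[X], expand Z p (map (frobenius Z p) q) = q ^ p := fun q => by
      rw [← map_expand, map_frobenius_expand]
    have h1 : f ^ p = map (frobenius Z p) P * map (frobenius Z p) h := by
      apply expand_injective hp.pos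
      rw [map_mul, e, e, map_pow, hPh, mul_pow]
    obtain ⟨i, hi, hQ⟩ := (dvd_prime_pow hf.prime p).1 ⟨_, h1⟩
    have h2 : Associated (P ^ p) (expand Z p f ^ i) := by
      have := hQ.map (expand Z p)
      rwa [e, map_pow] at this
    have hi0 : i ≠ 0 := by
      rintro rfl
      rw [pow_zero, associated_one_iff_isUnit, isUnit_pow_iff hp.ne_zero] at h2
      exact hP.not_isUnit h2
    have h3 : expand Z p f ∣ P ^ p := (dvd_pow_self _ hi0).trans h2.symm.dvd
    obtain ⟨k, hk, hgk⟩ := (dvd_prime_pow hP.prime p).1 h3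
    have h4 : Associated (P ^ p) (P ^ (k * i)) := by
      rw [pow_mul]
      exact h2.trans (hgk.pow_pow)
    have h5 : p = k * i := le_antisymm
      ((pow_dvd_pow_iff hP.ne_zero hP.not_isUnit).1 h4.dvd)
      ((pow_dvd_pow_iff hP.ne_zero hP.not_isUnit).1 h4.symm.dvd)
    rcases (Nat.dvd_prime hp).1 ⟨i, h5⟩ with rfl | rfl
    · rw [pow_one] at hgk
      exact absurd (hgk.symm.irreducible hP) hg
    · obtain ⟨v, hv⟩ := hgk
      obtain ⟨r, hr, hrv⟩ := Polynomial.isUnit_iff.1 v.isUnit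
      refine ⟨hr.unit, P, hP, ?_⟩
      rw [IsUnit.unit_spec, hrv, mul_comm, hv]
  · rintro ⟨u, P, hP, h⟩ hg
    have h1 : Irreducible (P ^ p) := by
      rw [← h]
      exact (irreducible_isUnit_mul (isUnit_C.2 u.isUnit)).2 hg
    exact not_irreducible_pow hp.ne_one h1
end

section
/- Let Z be a unique factorization domain of characteristic p, where p is a prime number, let f ∈ Z[X] be irreducible in Z[X] of positive degree, and let s ≥ 1 be an integer. Then f(X^{p^s}) is not irreducible in Z[X] if and only if there exists a unit u ∈ Zˣ such that every coefficient of u·f is a p-th power in Z. -/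
open Polynomial

lemma aux_one {Z : Type*} [CommRing Z] [IsDomain Z] [UniqueFactorizationMonoid Z]
    (p : ℕ) (hp : p.Prime) [CharP Z p]
    (f : Polynomial Z) (hf : Irreducible f)
    (h : ¬ Irreducible (expand Z p f)) :
      ∃ u : Zˣ, ∀ k : ℕ, ∃ c : Z, (u : Z) * f.coeff k = c ^ p := by
  haveI : Fact p.Prime := ⟨hp⟩
  have hinj := expand_injective (R := Z) hp.pos
  have key : ∀ g : Z[X], expand Z p (map (frobenius Z p) g) = g ^ p := by
    intro g
    rw [← map_frobenius_expand, map_expand]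
  have hpr : Prime f := hf.prime
  have hF0 : expand Z p f ≠ 0 := fun h0 => hf.ne_zero (hinj (by simpa using h0))
  have hFu : ¬ IsUnit (expand Z p f) := by
    intro hu
    apply hf.not_isUnit
    obtain ⟨r, hr, hr'⟩ := Polynomial.isUnit_iff.1 hu
    refine Polynomial.isUnit_iff.2 ⟨r, hr, hinj ?_⟩
    rw [expand_C, hr']
  rw [irreducible_iff] at h
  push Not at h
  obtain ⟨g, k, hgk, hg, hk⟩ := h hFu
  have hGH : f ^ p = map (frobenius Z p) g * map (frobenius Z p) k := by
    apply hinj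
    rw [map_mul, key, key, map_pow, hgk, mul_pow]
  obtain ⟨i, hi, v, hv⟩ := (dvd_prime_pow hpr p).1 ⟨_, hGH⟩
  obtain ⟨r, hr, hrv⟩ := Polynomial.isUnit_iff.1 v.isUnit
  obtain ⟨r, rfl⟩ := hr
  have hgp : g ^ p * C (r : Z) = expand Z p f ^ i := by
    rw [← key, ← map_pow, ← hv, map_mul, ← hrv, expand_C]
  have hi0 : i ≠ 0 := by
    rintro rfl
    rw [pow_zero] at hgp
    exact hg ((isUnit_pow_iff hp.ne_zero).1 (IsUnit.of_mul_eq_one _ hgp))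
  have hip : i ≠ p := by
    rintro rfl
    rw [hgk, mul_pow] at hgp
    have hg0 : g ^ i ≠ 0 := pow_ne_zero _ (by rintro rfl; simp [hgk] at hF0)
    have := mul_left_cancel₀ hg0 hgp
    apply hk
    rw [← isUnit_pow_iff hp.ne_zero, ← this]
    exact Polynomial.isUnit_C.2 r.isUnit
  have hcop : Nat.Coprime i p := by
    exact (Nat.coprime_of_lt_prime hi0 (lt_of_le_of_ne hi hip) hp).symm
  obtain ⟨a, ha⟩ := Nat.exists_mul_mod_eq_one_of_coprime hcop hp.one_lt
  obtain ⟨b, hb⟩ : ∃ b, i * a = 1 + p * b := ⟨i * a / p, by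
    have := Nat.mod_add_div (i * a) p; omega⟩
  have e1 : (g ^ a) ^ p * C ((r ^ a : Zˣ) : Z) = expand Z p f * (expand Z p f ^ b) ^ p := by
    have := congrArg (· ^ a) hgp
    simp only [mul_pow, ← pow_mul, hb] at this
    rw [← pow_mul, mul_comm a p, Units.val_pow_eq_pow_val, C_pow, this, ← pow_mul]
    ring
  have hdvd : (expand Z p f ^ b) ^ p ∣ (g ^ a) ^ p := by
    have hu : IsUnit (C ((r ^ a : Zˣ) : Z)) := Polynomial.isUnit_C.2 (Units.isUnit _)
    rw [← hu.dvd_mul_right, e1]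
    exact dvd_mul_left _ _
  have hdvd2 : expand Z p f ^ b ∣ g ^ a := by
    skip
    exact (IsIntegrallyClosed.pow_dvd_pow_iff hp.ne_zero).1 hdvd
  obtain ⟨q, hq⟩ := hdvd2
  have e2 : q ^ p * C ((r ^ a : Zˣ) : Z) = expand Z p f := by
    apply mul_right_cancel₀ (pow_ne_zero p (pow_ne_zero b hF0))
    rw [← e1, hq]; ring
  have e3 : map (frobenius Z p) q * C ((r ^ a : Zˣ) : Z) = f := by
    apply hinj
    rw [map_mul, key, expand_C, e2]
  refine ⟨(r ^ a)⁻¹, fun n => ⟨q.coeff n, ?_⟩⟩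
  rw [← e3, coeff_mul_C, coeff_map, frobenius_def, mul_comm, mul_assoc, Units.mul_inv, mul_one]

lemma aux_s {Z : Type*} [CommRing Z] [IsDomain Z] [UniqueFactorizationMonoid Z]
    (p : ℕ) (hp : p.Prime) [CharP Z p] (s : ℕ) :
    ∀ (f : Polynomial Z) (_ : Irreducible f) (_ : ¬ Irreducible (expand Z (p ^ s) f)),
      ∃ u : Zˣ, ∀ k : ℕ, ∃ c : Z, (u : Z) * f.coeff k = c ^ p := by
  induction s with
  | zero => intro f hf h; simp at h; exact absurd hf h
  | succ s ih =>
    intro f hf h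
    by_cases h1 : Irreducible (expand Z p f)
    · rw [pow_succ, expand_mul] at h
      obtain ⟨u, hu⟩ := ih _ h1 h
      refine ⟨u, fun k => ?_⟩
      have := hu (k * p)
      rwa [coeff_expand_mul hp.pos] at this
    · exact aux_one p hp f hf h1

theorem stmt13 {Z : Type*} [CommRing Z] [IsDomain Z] [UniqueFactorizationMonoid Z]
    (p : ℕ) (hp : p.Prime) [CharP Z p]
    (f : Polynomial Z) (hf : Irreducible f) (hdeg : 0 < f.natDegree)
    (s : ℕ) (hs : 1 ≤ s) :
    ¬ Irreducible (f.comp (X ^ p ^ s)) ↔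
      ∃ u : Zˣ, ∀ k : ℕ, ∃ c : Z, (u : Z) * f.coeff k = c ^ p := by
  rw [← expand_eq_comp_X_pow]
  refine ⟨aux_s p hp s f hf, ?_⟩
  rintro ⟨u, hu⟩ hirr
  haveI : Fact p.Prime := ⟨hp⟩
  obtain ⟨s, rfl⟩ : ∃ t, s = t + 1 := ⟨s - 1, by omega⟩
  rw [pow_succ', expand_mul] at hirr
  have h1 : Irreducible (expand Z p f) := by
    rw [← expand_mul, mul_comm, expand_mul] at hirr
    exact of_irreducible_expand (pow_ne_zero _ hp.ne_zero) hirr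
  choose c hc using hu
  let q : Z[X] := ∑ k ∈ Finset.range (f.natDegree + 1), monomial k (c k)
  have hq : map (frobenius Z p) q = C (u : Z) * f := by
    conv_rhs => rw [f.as_sum_range]
    simp only [q, Polynomial.map_sum, map_monomial, Finset.mul_sum, C_mul_monomial, hc,
      frobenius_def]
  have hq2 : q ^ p = C (u : Z) * expand Z p f := by
    rw [← map_frobenius_expand, map_expand, hq, map_mul, expand_C]
  have hu : IsUnit (C (u : Z)) := Polynomial.isUnit_C.2 u.isUnit
  have : Irreducible (q ^ p) := by
    rw [hq2]
    exact (irreducible_isUnit_mul hu).2 h1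
  exact not_irreducible_pow hp.ne_one this
end

section
/- Let Z be a unique factorization domain and let f ∈ Z[X] be a nonconstant polynomial, irreducible in Z[X], with leading coefficient a and nonzero constant coefficient b. If a is not a unit of Z or b is not a unit of Z, then the set of prime numbers p such that f(X^p) is not irreducible in Z[X] is finite. -/
open Polynomial

lemma aux_det {R : Type*} [CommRing R] [IsDomain R] {n : ℕ} (M : Matrix (Fin n) (Fin n) R)
    (hM : IsNilpotent M) (b : R) : (Matrix.scalar (Fin n) b + M).det = b ^ n := by
  have h1 := Matrix.isNilpotent_charpoly_sub_pow_of_isNilpotent (M := -M) hM.neg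
  have h2 := sub_eq_zero.mp h1.eq_zero
  have h3 := congrArg (Polynomial.eval b) h2
  rw [Matrix.eval_charpoly] at h3
  simpa using h3

lemma aux_norm (Z : Type*) [CommRing Z] [IsDomain Z] (p : ℕ) (hp : 0 < p) :
    ∃ N : Z[X] →* Z[X], (∀ f, N (expand Z p f) = f ^ p) ∧ (∀ g, IsUnit (N g) → IsUnit g) ∧
      ∀ g, (N g).coeff 0 = g.coeff 0 ^ p := by
  set q : Z[X][X] := X ^ p - C X with hq
  have hmonic : q.Monic := monic_X_pow_sub_C _ hp.ne'
  have hdegq : q.natDegree = p := natDegree_X_pow_sub_C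
  let S := AdjoinRoot q
  let pb : PowerBasis Z[X] S := AdjoinRoot.powerBasis' hmonic
  have hdim : pb.dim = p := by
    rw [← hdegq]; rfl
  let r : S := AdjoinRoot.root q
  have hr : r ^ p = algebraMap Z[X] S X := by
    have h := AdjoinRoot.eval₂_root q
    rw [hq] at h
    simp only [eval₂_sub, eval₂_pow, eval₂_X, eval₂_C] at h
    exact sub_eq_zero.mp h
  let φ : Z[X] →ₐ[Z] S := aeval r
  have hφ : ∀ f, φ (expand Z p f) = algebraMap Z[X] S f := by
    intro f
    have : φ.comp (expand Z p) = IsScalarTower.toAlgHom Z Z[X] S := by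
      ext
      simp [φ, hr]
    exact DFunLike.congr_fun this f
  let ψ : S →+* Z[X] := AdjoinRoot.lift (expand Z p : Z[X] →+* Z[X]) X (by simp [hq])
  have hψ : ∀ g, ψ (φ g) = g := by
    intro g
    have hψr : ψ r = X := AdjoinRoot.lift_root _
    have hψC : ∀ x : Z, ψ (algebraMap Z S x) = C x := fun x =>
      (AdjoinRoot.lift_of (x := (C x : Z[X])) _).trans (expand_C p x)
    have : ψ.comp (φ : Z[X] →+* S) = RingHom.id _ := by
      ext x
      · simp [φ, hψC]
      · simp [φ, hψr]
    exact DFunLike.congr_fun this g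
  refine ⟨(Algebra.norm Z[X]).comp (φ : Z[X] →* S), ?_, ?_, ?_⟩
  · intro f
    have : Algebra.norm Z[X] (φ (expand Z p f)) = f ^ p := by
      rw [hφ, Algebra.norm_algebraMap_of_basis pb.basis, Fintype.card_fin, hdim]
    exact this
  · intro g hg
    have hg' : IsUnit (Algebra.norm Z[X] (φ g)) := hg
    have : Module.Free Z[X] S := Module.Free.of_basis pb.basis
    have : Module.Finite Z[X] S := Module.Finite.of_basis pb.basis
    rw [Algebra.norm_apply, ← LinearMap.isUnit_iff_isUnit_det] at hg'
    rw [Module.End.isUnit_iff] at hg'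
    obtain ⟨y, hy⟩ := hg'.2 1
    have hu : IsUnit (φ g) := IsUnit.of_mul_eq_one y hy
    rw [← hψ g]
    exact hu.map ψ
  · intro g
    have : (Algebra.norm Z[X] (φ g)).coeff 0 = g.coeff 0 ^ p := by
      let L : S →+* Matrix (Fin pb.dim) (Fin pb.dim) Z :=
        (constantCoeff.mapMatrix).comp (Algebra.leftMulMatrix pb.basis : S →+* _)
      have hL : (Algebra.norm Z[X] (φ g)).coeff 0 = (L (φ g)).det := by
        rw [Algebra.norm_eq_matrix_det pb.basis]
        exact RingHom.map_det (constantCoeff : Z[X] →+* Z) _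
      have hLalg : ∀ c : Z[X], L (algebraMap Z[X] S c) = Matrix.scalar _ (c.coeff 0) := by
        intro c
        have : Algebra.leftMulMatrix pb.basis (algebraMap Z[X] S c) = Matrix.scalar _ c := by
          rw [AlgHom.commutes]; rfl
        simp only [L, RingHom.comp_apply, RingHom.coe_coe, this]
        ext i j
        by_cases h : i = j <;> simp [Matrix.diagonal, h]
      have hnil : IsNilpotent (L r) := by
        refine ⟨p, ?_⟩
        rw [← map_pow, hr, hLalg]
        simp
      have hg : φ g = algebraMap Z[X] S (C (g.coeff 0)) + φ (divX g) * r := by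
        conv_lhs => rw [← divX_mul_X_add g]
        rw [map_add, map_mul, add_comm]
        congr 1
        · simp only [φ, aeval_C]; rfl
        · simp [φ]
      rw [hL, hg, map_add, hLalg, map_mul, aux_det, hdim, coeff_C_zero]
      refine Commute.isNilpotent_mul_left ?_ hnil
      show _ * _ = _ * _
      rw [← map_mul, ← map_mul, mul_comm]
    exact this

lemma aux_main {Z : Type*} [CommRing Z] [IsDomain Z] [UniqueFactorizationMonoid Z]
    (f : Polynomial Z) (hf : Irreducible f)
    (hb : f.coeff 0 ≠ 0) (h : ¬ IsUnit (f.coeff 0)) :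
    {p : ℕ | p.Prime ∧ ¬ Irreducible (expand Z p f)}.Finite := by
  obtain ⟨π, hπ, hdvd⟩ := WfDvdMonoid.exists_irreducible_factor h hb
  have hπp : Prime π := hπ.prime
  have hfin : FiniteMultiplicity π (f.coeff 0) := FiniteMultiplicity.of_prime_left hπp hb
  have hm : multiplicity π (f.coeff 0) ≠ 0 := by
    intro h0
    exact (multiplicity_eq_zero.mp h0) hdvd
  refine (Nat.divisors (multiplicity π (f.coeff 0))).finite_toSet.subset ?_
  rintro p ⟨hp, hirr⟩
  rw [Finset.mem_coe, Nat.mem_divisors]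
  refine ⟨?_, hm⟩
  obtain ⟨N, h1, h2, h3⟩ := aux_norm Z p hp.pos
  by_contra hnd
  apply hirr
  refine ⟨fun hu => ?_, ?_⟩
  · have := hu.map N
    rw [h1] at this
    exact hf.not_isUnit ((isUnit_pow_iff hp.ne_zero).mp this)
  · intro g k hgk
    have hN : N g * N k = f ^ p := by rw [← map_mul, ← hgk, h1]
    obtain ⟨i, hi, hass⟩ := (dvd_prime_pow hf.prime p).mp (Dvd.intro _ hN)
    obtain ⟨u, hu⟩ := hass.symm
    have hcoeff : Associated (f.coeff 0 ^ i) (g.coeff 0 ^ p) := by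
      have hc := congrArg (Polynomial.constantCoeff) hu
      rw [map_mul, map_pow] at hc
      simp only [constantCoeff_apply] at hc
      rw [h3] at hc
      have huu : IsUnit ((u : Z[X]).coeff 0) := u.isUnit.map constantCoeff
      exact ⟨huu.unit, hc⟩
    have hmul : i * multiplicity π (f.coeff 0) = p * multiplicity π (g.coeff 0) := by
      have hgfin : FiniteMultiplicity π (g.coeff 0) := by
        refine FiniteMultiplicity.of_prime_left hπp ?_
        intro h0
        rw [h0, zero_pow hp.ne_zero, associated_zero_iff_eq_zero] at hcoeff
        exact hb (eq_zero_of_pow_eq_zero hcoeff)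
      rw [← hfin.multiplicity_pow hπp, ← hgfin.multiplicity_pow hπp]
      exact multiplicity_eq_of_associated_right hcoeff
    have hpi : p ∣ i := ((hp.dvd_mul).mp (Dvd.intro _ hmul.symm)).resolve_right hnd
    rcases Nat.eq_zero_or_pos i with h0 | h0
    · left
      apply h2
      rw [← hu, h0]; simp
    · right
      have hip : i = p := le_antisymm hi (Nat.le_of_dvd h0 hpi)
      apply h2
      rw [← hu, hip, mul_assoc] at hN
      have := mul_left_cancel₀ (pow_ne_zero p hf.ne_zero) (hN.trans (mul_one _).symm)
      exact IsUnit.of_mul_eq_one_right _ this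

lemma aux_mirror {Z : Type*} [CommRing Z] [IsDomain Z] (f : Z[X]) :
    Irreducible f.mirror ↔ Irreducible f := by
  let e : Z[X] ≃* Z[X] :=
    { toFun := mirror, invFun := mirror, left_inv := mirror_mirror, right_inv := mirror_mirror,
      map_mul' := fun a b => mirror_mul_of_domain a b }
  exact MulEquiv.irreducible_iff e

lemma aux_expand {Z : Type*} [CommRing Z] [IsDomain Z] (f : Z[X]) (hb : f.coeff 0 ≠ 0)
    (p : ℕ) (hp : 0 < p) : (expand Z p f).mirror = expand Z p f.mirror := by
  have ht : f.natTrailingDegree = 0 := natTrailingDegree_eq_zero.mpr (Or.inr hb)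
  have ht' : (expand Z p f).natTrailingDegree = 0 := by
    apply natTrailingDegree_eq_zero.mpr (Or.inr _)
    simpa [coeff_expand hp] using hb
  ext n
  rw [coeff_mirror, ht', coeff_expand hp, coeff_expand hp, coeff_mirror, ht, natDegree_expand,
    add_zero, add_zero]
  by_cases hn : n ≤ f.natDegree * p
  · rw [revAt_le hn]
    simp only [Nat.dvd_sub_iff_right hn (Dvd.intro_left _ rfl)]
    split_ifs with hd
    · obtain ⟨m, rfl⟩ := hd
      rw [mul_comm] at hn
      have hm : m ≤ f.natDegree := Nat.le_of_mul_le_mul_right (by linarith) hp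
      rw [Nat.mul_div_cancel_left _ hp, revAt_le hm, mul_comm, ← Nat.mul_sub,
        Nat.mul_div_cancel_left _ hp]
    · rfl
  · rw [revAt_eq_self_of_lt (not_le.mp hn)]
    split_ifs with hd
    · obtain ⟨m, rfl⟩ := hd
      have hm : f.natDegree < m := by
        by_contra hc
        apply hn
        rw [mul_comm]
        exact Nat.mul_le_mul_right _ (not_lt.mp hc)
      rw [Nat.mul_div_cancel_left _ hp, revAt_eq_self_of_lt hm]
    · rfl

theorem stmt14 {Z : Type*} [CommRing Z] [IsDomain Z] [UniqueFactorizationMonoid Z]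
    (f : Polynomial Z) (hf : Irreducible f) (hdeg : 0 < f.natDegree)
    (hb : f.coeff 0 ≠ 0)
    (h : ¬ IsUnit f.leadingCoeff ∨ ¬ IsUnit (f.coeff 0)) :
    {p : ℕ | p.Prime ∧ ¬ Irreducible (f.comp (X ^ p))}.Finite := by
  simp only [← expand_eq_comp_X_pow]
  rcases h with h | h
  · have ht : f.natTrailingDegree = 0 := natTrailingDegree_eq_zero.mpr (Or.inr hb)
    have h0 : f.mirror.coeff 0 = f.leadingCoeff := by
      rw [coeff_mirror, ht]; simp
    refine (aux_main f.mirror ((aux_mirror f).mpr hf) ?_ ?_).subset ?_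
    · rw [h0]; exact leadingCoeff_ne_zero.mpr hf.ne_zero
    · rwa [h0]
    · rintro p ⟨hp, hi⟩
      refine ⟨hp, ?_⟩
      rwa [← aux_expand f hb p hp.pos, aux_mirror]
  · exact aux_main f hf hb h
end

section
/- Let Z be a unique factorization domain whose group of units Zˣ is finite, with field of fractions Q, and let f ∈ Z[X] be a nonconstant polynomial, irreducible in Z[X], with nonzero constant coefficient. If the image of f in Q[X] does not divide the k-th cyclotomic polynomial over Q (Polynomial.cyclotomic k Q) for any integer k ≥ 1, then the set of prime numbers p such that f(X^p) is not irreducible in Z[X] is finite. -/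
open Polynomial

theorem exists_hom_rat {A ι : Type*} [AddCommGroup A] [Finite ι] (a : ι → A)
    (ha : ∀ i, ∀ k : ℕ, 0 < k → k • a i ≠ 0) : ∃ φ : A →+ ℚ, ∀ i, φ (a i) ≠ 0 := by
  obtain ⟨g, hg⟩ := Module.exists_dual_forall_apply_ne_zero (K := ℚ)
    (fun i => TensorProduct.mk ℤ ℚ A 1 (a i)) (by
      intro i hi
      rw [IsLocalizedModule.eq_zero_iff (nonZeroDivisors ℤ)] at hi
      obtain ⟨s, hs⟩ := hi
      have hs0 : (s : ℤ) ≠ 0 := nonZeroDivisors.coe_ne_zero s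
      have hs' : (s : ℤ) • a i = 0 := hs
      refine ha i (s : ℤ).natAbs (Int.natAbs_pos.2 hs0) ?_
      rw [← natCast_zsmul]
      rcases Int.natAbs_eq (s : ℤ) with h | h
      · rw [← h]; exact hs'
      · rw [h, neg_smul, neg_eq_zero] at hs'
        exact hs')
  exact ⟨g.toAddMonoidHom.comp (TensorProduct.mk ℤ ℚ A 1).toAddMonoidHom, hg⟩

theorem comb_sum {L ι : Type*} [Field L] [Fintype ι] (b c : ι → Lˣ)
    (hj : ∀ j < 2 * 2 ^ Fintype.card ι,
      ∏ i, (1 - (b i : L) ^ j) = ∏ i, (1 - (c i : L) ^ j)) (F : Lˣ → L) :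
    ∑ S ∈ (Finset.univ : Finset ι).powerset, (-1) ^ S.card * F (∏ i ∈ S, b i) =
    ∑ S ∈ (Finset.univ : Finset ι).powerset, (-1) ^ S.card * F (∏ i ∈ S, c i) := by
  classical
  set P := (Finset.univ : Finset ι).powerset with hP
  set T : Finset Lˣ := P.image (fun S => ∏ i ∈ S, b i) ∪ P.image (fun S => ∏ i ∈ S, c i)
    with hT
  have hcard : T.card ≤ 2 * 2 ^ Fintype.card ι := by
    refine (Finset.card_union_le _ _).trans ?_
    have h1 : P.card = 2 ^ Fintype.card ι := by simp [hP]
    have := Finset.card_image_le (s := P) (f := fun S => ∏ i ∈ S, b i)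
    have := Finset.card_image_le (s := P) (f := fun S => ∏ i ∈ S, c i)
    omega
  have hinj : Set.InjOn (fun u : Lˣ => (u : L)) T := Units.val_injective.injOn
  set G := Lagrange.interpolate T (fun u : Lˣ => (u : L)) F with hG
  have hdeg : G.natDegree < 2 * 2 ^ Fintype.card ι := by
    have h := Lagrange.degree_interpolate_lt (r := F) hinj
    by_cases h0 : G = 0
    · rw [h0]; simp
    · have : G.natDegree < T.card := (Polynomial.natDegree_lt_iff_degree_lt h0).2 h
      omega
  have hev : ∀ u ∈ T, F u = G.eval (u : L) := fun u hu =>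
    (Lagrange.eval_interpolate_at_node (r := F) hinj hu).symm
  have expand : ∀ (d : ι → Lˣ), ∑ S ∈ P, (-1) ^ S.card * G.eval ((∏ i ∈ S, d i : Lˣ) : L) =
      ∑ j ∈ Finset.range (2 * 2 ^ Fintype.card ι), G.coeff j * ∏ i, (1 - (d i : L) ^ j) := by
    intro d
    simp_rw [Finset.prod_sub, Polynomial.eval_eq_sum_range' hdeg, Finset.mul_sum]
    rw [Finset.sum_comm]
    refine Finset.sum_congr rfl fun j _ => Finset.sum_congr rfl fun S _ => ?_
    simp [Finset.prod_pow]
    ring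
  have e1 : ∀ S ∈ P, (-1 : L) ^ S.card * F (∏ i ∈ S, b i) =
      (-1) ^ S.card * G.eval ((∏ i ∈ S, b i : Lˣ) : L) := fun S hS => by
    rw [hev _ (Finset.mem_union_left _ (Finset.mem_image_of_mem _ hS))]
  have e2 : ∀ S ∈ P, (-1 : L) ^ S.card * F (∏ i ∈ S, c i) =
      (-1) ^ S.card * G.eval ((∏ i ∈ S, c i : Lˣ) : L) := fun S hS => by
    rw [hev _ (Finset.mem_union_right _ (Finset.mem_image_of_mem _ hS))]
  rw [Finset.sum_congr rfl e1, Finset.sum_congr rfl e2, expand, expand]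
  exact Finset.sum_congr rfl fun j hj' => by rw [hj j (Finset.mem_range.1 hj')]

theorem comb_false {L ι : Type*} [Field L] [Fintype ι] [Nonempty ι] (b c : ι → Lˣ)
    (p q : ℕ) (hp : 0 < p) (hpq : p < q) (h : ∀ i, b i ^ p = c i ^ q)
    (hnt : ∀ i, ∀ k : ℕ, 0 < k → b i ^ k ≠ 1)
    (hj : ∀ j < 2 * 2 ^ Fintype.card ι,
      ∏ i, (1 - (b i : L) ^ j) = ∏ i, (1 - (c i : L) ^ j)) : False := by
  classical
  obtain ⟨φ, hφ, i0, hi0⟩ : ∃ φ : Additive Lˣ →+ ℚ, (∀ i, φ (Additive.ofMul (b i)) ≠ 0) ∧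
      ∃ i, 0 < φ (Additive.ofMul (b i)) := by
    obtain ⟨φ, hφ⟩ := exists_hom_rat (fun i => Additive.ofMul (b i)) (by
      intro i k hk h0
      exact hnt i k hk (by simpa using congrArg Additive.toMul h0))
    obtain ⟨i⟩ := ‹Nonempty ι›
    rcases lt_or_gt_of_ne (hφ i) with hlt | hgt
    · exact ⟨-φ, fun i => by simpa using hφ i, i, by simpa using hlt⟩
    · exact ⟨φ, hφ, i, hgt⟩
  set r : ι → ℚ := fun i => φ (Additive.ofMul (b i)) with hr
  have hq0 : (0 : ℚ) < q := by exact_mod_cast hp.trans hpq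
  have hp0 : (0 : ℚ) < p := by exact_mod_cast hp
  have hpq' : (p : ℚ) < q := by exact_mod_cast hpq
  have hc : ∀ i, φ (Additive.ofMul (c i)) = p / q * r i := by
    intro i
    have := congrArg (fun u => φ (Additive.ofMul u)) (h i)
    simp only [ofMul_pow, map_nsmul, nsmul_eq_mul] at this
    rw [hr]; field_simp; linarith
  have hvb : ∀ S : Finset ι, φ (Additive.ofMul (∏ i ∈ S, b i)) = ∑ i ∈ S, r i := by
    intro S; rw [ofMul_prod, map_sum]
  have hvc : ∀ S : Finset ι, φ (Additive.ofMul (∏ i ∈ S, c i)) = p / q * ∑ i ∈ S, r i := by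
    intro S; rw [ofMul_prod, map_sum, Finset.mul_sum]; exact Finset.sum_congr rfl fun i _ => hc i
  set T := Finset.univ.filter (fun i => 0 < r i) with hT
  set M := ∑ i ∈ T, r i with hM
  have hMpos : 0 < M := Finset.sum_pos (fun i hi => (Finset.mem_filter.1 hi).2)
    ⟨i0, Finset.mem_filter.2 ⟨Finset.mem_univ _, hi0⟩⟩
  have hsum : ∀ S : Finset ι, M - ∑ i ∈ S, r i = ∑ i,
      (if 0 < r i then (if i ∈ S then 0 else r i) else (if i ∈ S then - r i else 0)) := by
    intro S
    have h1 : M = ∑ i, if 0 < r i then r i else 0 := by rw [hM, hT, Finset.sum_filter]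
    have h2 : ∑ i ∈ S, r i = ∑ i, if i ∈ S then r i else 0 := by simp
    rw [h1, h2, ← Finset.sum_sub_distrib]
    refine Finset.sum_congr rfl fun i _ => ?_
    split_ifs <;> simp
  have hnn : ∀ S : Finset ι, ∀ i, (0 : ℚ) ≤
      (if 0 < r i then (if i ∈ S then 0 else r i) else (if i ∈ S then - r i else 0)) := by
    intro S i
    split_ifs <;> linarith
  have hle : ∀ S : Finset ι, ∑ i ∈ S, r i ≤ M := by
    intro S
    have := Finset.sum_nonneg (fun i (_ : i ∈ Finset.univ) => hnn S i)
    rw [← hsum] at this; linarith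
  have heq : ∀ S : Finset ι, ∑ i ∈ S, r i = M → S = T := by
    intro S hS
    have h0 := hsum S
    rw [hS, sub_self, eq_comm, Finset.sum_eq_zero_iff_of_nonneg (fun i _ => hnn S i)] at h0
    ext i
    have h1 := h0 i (Finset.mem_univ _)
    have h2 : r i ≠ 0 := hφ i
    simp only [hT, Finset.mem_filter, Finset.mem_univ, true_and]
    split_ifs at h1 <;> simp_all
  have key := comb_sum b c hj (fun u => if φ (Additive.ofMul u) = M then 1 else 0)
  simp only [hvb, hvc] at key
  rw [Finset.sum_eq_single T, if_pos hM.symm, mul_one, Finset.sum_eq_zero] at key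
  · simp at key
  · intro S _
    rw [if_neg, mul_zero]
    intro hS
    have h1 := hle S
    have h2 : (p : ℚ) / q < 1 := (div_lt_one hq0).2 hpq'
    have h3 : (0 : ℚ) < p / q := by positivity
    nlinarith
  · intro S _ hS
    rw [if_neg (fun h => hS (heq S h)), mul_zero]
  · intro h; simp at h

theorem norm_finite {Z Q S : Type*} [CommRing Z] [IsDomain Z] [UniqueFactorizationMonoid Z]
    [Field Q] [Algebra Z Q] [IsFractionRing Z Q] [Finite Zˣ]
    [Field S] [Algebra Q S] [FiniteDimensional Q S] (γ : S) (hγ : γ ≠ 0) :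
    {N : Q | ∃ y : S, ∃ p : ℕ, 0 < p ∧ 1 - (1 - y) ^ p = γ ∧ Algebra.norm Q y = N}.Finite := by
  classical
  let _ : StrongNormalizationMonoid Z := UniqueFactorizationMonoid.strongNormalizationMonoid
  let _ : NormalizedGCDMonoid Z := UniqueFactorizationMonoid.toNormalizedGCDMonoid Z
  let _ : Algebra Z S := ((algebraMap Q S).comp (algebraMap Z Q)).toAlgebra
  have : IsScalarTower Z Q S := IsScalarTower.of_algebraMap_eq (fun _ => rfl)
  let _ : Fintype Zˣ := Fintype.ofFinite _
  have hdiv : ∀ c : Z, c ≠ 0 → {d : Z | d ∣ c}.Finite := fun c hc =>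
    Set.finite_coe_iff.1 (@Finite.of_fintype _ (UniqueFactorizationMonoid.fintypeSubtypeDvd c hc))
  have halg : IsAlgebraic Z γ := by
    rw [IsFractionRing.isAlgebraic_iff Z Q S]
    exact Algebra.IsAlgebraic.isAlgebraic γ
  obtain ⟨h, h0, hh⟩ := halg.exists_nonzero_coeff_and_aeval_eq_zero (mem_nonZeroDivisors_of_ne_zero hγ)
  have hne : h ≠ 0 := by rintro rfl; simp at h0
  have hlc : h.leadingCoeff ≠ 0 := leadingCoeff_ne_zero.2 hne
  set n := Module.finrank Q S with hn
  refine (((hdiv _ h0).prod ((hdiv _ hlc).prod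
    ((Set.finite_Iic n).prod (Set.finite_Iic n)))).image
    (fun t : Z × Z × ℕ × ℕ =>
      ((-1) ^ t.2.2.1 * (algebraMap Z Q t.1 / algebraMap Z Q t.2.1)) ^ t.2.2.2 : _ → Q)).subset ?_
  rintro N ⟨y, p, hp, hy, rfl⟩
  have hint : IsIntegral Q y := Algebra.IsIntegral.isIntegral y
  set m := minpoly Q y with hm
  have hmm : m.Monic := minpoly.monic hint
  -- primitive integral multiple
  obtain ⟨g, u, hgp, hu, hg⟩ : ∃ (g : Z[X]) (u : Q), g.IsPrimitive ∧ u ≠ 0 ∧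
      g.map (algebraMap Z Q) = C u * m := by
    obtain ⟨b, hb, hbm⟩ := IsLocalization.integerNormalization_spec (nonZeroDivisors Z) m
    set g0 := IsLocalization.integerNormalization (nonZeroDivisors Z) m with hg0
    have hb0 : algebraMap Z Q b ≠ 0 := by
      simpa using nonZeroDivisors.ne_zero hb
    have hbm' : g0.map (algebraMap Z Q) = C (algebraMap Z Q b) * m := by
      rw [hbm, ← algebraMap_smul Q b m, smul_eq_C_mul]
    have hg0' : g0 ≠ 0 := by
      intro h
      rw [h, Polynomial.map_zero, eq_comm, mul_eq_zero] at hbm'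
      rcases hbm' with h | h
      · exact hb0 (C_eq_zero.1 h)
      · exact hmm.ne_zero h
    have hc : algebraMap Z Q g0.content ≠ 0 := by
      simpa [content_eq_zero_iff] using hg0'
    refine ⟨g0.primPart, (algebraMap Z Q g0.content)⁻¹ * algebraMap Z Q b,
      g0.isPrimitive_primPart, mul_ne_zero (inv_ne_zero hc) hb0, ?_⟩
    have h1 := congrArg (Polynomial.map (algebraMap Z Q)) g0.eq_C_content_mul_primPart
    rw [hbm', Polynomial.map_mul, Polynomial.map_C] at h1
    rw [C_mul, mul_assoc, h1, ← mul_assoc, ← C_mul, inv_mul_cancel₀ hc, C_1, one_mul]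
  set H := h.comp (1 - (1 - X) ^ p) with hH
  have hgH : g ∣ H := by
    refine hgp.dvd_of_fraction_map_dvd_fraction_map (K := Q) ?_
    rw [hg]
    refine (isUnit_C.2 hu.isUnit).mul_left_dvd.2 (minpoly.dvd Q y ?_)
    rw [aeval_map_algebraMap, hH, aeval_comp]
    simpa [hy] using hh
  have hd0 : g.coeff 0 ∣ h.coeff 0 := by
    obtain ⟨k, hk⟩ := hgH
    have : H.coeff 0 = h.coeff 0 := by
      rw [coeff_zero_eq_eval_zero, hH, eval_comp, coeff_zero_eq_eval_zero]; simp
    rw [← this, hk, mul_coeff_zero]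
    exact dvd_mul_right _ _
  have hX : (1 - X : Z[X]) = -(X - C 1) := by simp
  have hX' : ((1 - X : Z[X]) ^ p).natDegree = p := by
    rw [natDegree_pow, hX, natDegree_neg, natDegree_X_sub_C, mul_one]
  have hdegp : (1 : Z[X]).degree < ((1 - X : Z[X]) ^ p).degree := by
    rw [degree_one]
    exact natDegree_pos_iff_degree_pos.1 (by rw [hX']; exact hp)
  have hdl : g.leadingCoeff ∣ h.leadingCoeff := by
    have h1 : g.leadingCoeff ∣ H.leadingCoeff := leadingCoeff_dvd_leadingCoeff hgH
    have h2 : (1 - (1 - X : Z[X]) ^ p).natDegree ≠ 0 := by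
      rw [natDegree_sub_eq_right_of_natDegree_lt, hX']
      · exact hp.ne'
      · rw [hX', natDegree_one]; exact hp
    rw [hH, leadingCoeff_comp h2, leadingCoeff_sub_of_degree_lt' hdegp, leadingCoeff_pow, hX,
      leadingCoeff_neg, leadingCoeff_X_sub_C] at h1
    refine (IsUnit.dvd_mul_right ?_).1 h1
    exact ((isUnit_one.neg.pow p).neg).pow _
  have hul : algebraMap Z Q g.leadingCoeff = u := by
    rw [← leadingCoeff_map_of_injective (IsFractionRing.injective Z Q), hg, leadingCoeff_mul,
      leadingCoeff_C, hmm.leadingCoeff, mul_one]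
  have hu0 : algebraMap Z Q (g.coeff 0) = u * m.coeff 0 := by
    rw [← coeff_map, hg, coeff_C_mul]
  refine ⟨(g.coeff 0, g.leadingCoeff, m.natDegree,
    Module.finrank (IntermediateField.adjoin Q {y}) S), ⟨hd0, hdl, ?_, ?_⟩, ?_⟩
  · exact minpoly.natDegree_le y
  · exact Module.finrank_top_le_finrank_of_isScalarTower Q (IntermediateField.adjoin Q {y}) S
  · simp only
    rw [hul, hu0, mul_div_cancel_left₀ _ hu, Algebra.norm_eq_norm_adjoin]
    congr 1
    have h3 := Algebra.PowerBasis.norm_gen_eq_coeff_zero_minpoly (IntermediateField.adjoin.powerBasis hint)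
    rw [IntermediateField.adjoin.powerBasis_gen, IntermediateField.minpoly_gen] at h3
    rw [h3, IntermediateField.adjoin.powerBasis_dim]

theorem roots_finite {Z Q S : Type*} [CommRing Z] [IsDomain Z] [UniqueFactorizationMonoid Z]
    [Field Q] [Algebra Z Q] [IsFractionRing Z Q] [Finite Zˣ]
    [Field S] [Algebra Q S] [FiniteDimensional Q S] [Algebra.IsSeparable Q S]
    (a : S) (ha0 : a ≠ 0) (ha : ∀ k : ℕ, 0 < k → a ^ k ≠ 1) :
    {p : ℕ | 0 < p ∧ ∃ b : S, b ^ p = a}.Finite := by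
  classical
  by_contra hinf
  have hinf : Set.Infinite {p : ℕ | 0 < p ∧ ∃ b : S, b ^ p = a} := hinf
  let L := AlgebraicClosure Q
  choose! b hb using fun (p : ℕ) (hp : p ∈ {p : ℕ | 0 < p ∧ ∃ b : S, b ^ p = a}) => hp.2
  set J := 2 * 2 ^ Fintype.card (S →ₐ[Q] L) with hJ
  let T : Fin J → Set Q := fun j => if (j : ℕ) = 0 then {0} else
    {N : Q | ∃ y : S, ∃ p : ℕ, 0 < p ∧ 1 - (1 - y) ^ p = 1 - a ^ (j : ℕ) ∧ Algebra.norm Q y = N}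
  have hT : ∀ j, (T j).Finite := by
    intro j
    by_cases hj : (j : ℕ) = 0
    · simp only [T, if_pos hj]; exact Set.finite_singleton _
    · simp only [T, hj, if_false]
      exact norm_finite (Z := Z) _ (sub_ne_zero.2 (Ne.symm (ha _ (Nat.pos_of_ne_zero hj))))
  obtain ⟨p, hp, q, hq, hpq, heq⟩ := hinf.exists_ne_map_eq_of_mapsTo
    (f := fun p (j : Fin J) => Algebra.norm Q (1 - b p ^ (j : ℕ)))
    (t := Set.pi Set.univ T) (by
      intro p hp j _
      by_cases hj : (j : ℕ) = 0
      · simp only [T, if_pos hj, hj, pow_zero, sub_self, Set.mem_singleton_iff]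
        exact Algebra.norm_zero
      · simp only [T, hj, if_false]
        refine ⟨_, p, hp.1, ?_, rfl⟩
        rw [sub_sub_cancel, ← pow_mul, mul_comm, pow_mul, hb p hp]) (Set.Finite.pi' hT |>.subset (by
          intro f hf j; exact hf j trivial))
  have main : ∀ p q : ℕ, 0 < p → p < q → b p ^ p = a → b q ^ q = a →
      (fun (j : Fin J) => Algebra.norm Q (1 - b p ^ (j : ℕ))) =
      (fun (j : Fin J) => Algebra.norm Q (1 - b q ^ (j : ℕ))) → False := by
    intro p q hp hpq h1 h2 h3
    have hbp : b p ≠ 0 := by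
      intro h; rw [h, zero_pow hp.ne'] at h1; exact ha0 h1.symm
    have hbq : b q ≠ 0 := by
      intro h; rw [h, zero_pow (hp.trans hpq).ne'] at h2; exact ha0 h2.symm
    have : Nonempty (S →ₐ[Q] L) := ⟨IsAlgClosed.lift⟩
    refine comb_false (L := L) (ι := S →ₐ[Q] L)
      (fun σ => Units.mk0 (σ (b p)) (by simpa using hbp))
      (fun σ => Units.mk0 (σ (b q)) (by simpa using hbq)) p q hp hpq ?_ ?_ ?_
    · intro σ
      ext
      simp only [Units.val_pow_eq_pow_val, Units.val_mk0, ← map_pow, h1, h2]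
    · intro σ k hk h
      have h' := congrArg Units.val h
      simp only [Units.val_pow_eq_pow_val, Units.val_mk0, ← map_pow, Units.val_one] at h'
      have h4 : b p ^ k = 1 := σ.injective (h'.trans (map_one σ).symm)
      exact ha k hk (by rw [← h1, ← pow_mul, mul_comm, pow_mul, h4, one_pow])
    · intro j hj
      have h5 := congrArg (algebraMap Q L) (congrFun h3 ⟨j, hj⟩)
      simp only [Algebra.norm_eq_prod_embeddings, map_sub, map_one, map_pow] at h5
      simpa using h5
  rcases lt_or_gt_of_ne hpq with h | h
  · exact main p q hp.1 h (hb p hp) (hb q hq) heq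
  · exact main q p hq.1 h (hb q hq) (hb p hp) heq.symm

theorem roots_finite' {Z Q K : Type*} [CommRing Z] [IsDomain Z] [UniqueFactorizationMonoid Z]
    [Field Q] [Algebra Z Q] [IsFractionRing Z Q] [Finite Zˣ]
    [Field K] [Algebra Q K] [FiniteDimensional Q K]
    (a : K) (ha0 : a ≠ 0) (ha : ∀ k : ℕ, 0 < k → a ^ k ≠ 1) :
    {p : ℕ | 0 < p ∧ ∃ b : K, b ^ p = a}.Finite := by
  obtain ⟨e, he, hmem⟩ : ∃ e : ℕ, 0 < e ∧ ∀ x : K, ∃ s : separableClosure Q K,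
      algebraMap (separableClosure Q K) K s = x ^ e := by
    refine ⟨_, ?_, fun x => IsPurelyInseparable.exponent_def (separableClosure Q K) x⟩
    exact pow_pos (expChar_pos (separableClosure Q K) _) _
  obtain ⟨s, hs⟩ := hmem a
  have hinj := (algebraMap (separableClosure Q K) K).injective
  refine (roots_finite (Z := Z) (Q := Q) s ?_ ?_).subset ?_
  · rintro rfl
    rw [map_zero] at hs
    exact pow_ne_zero e ha0 hs.symm
  · intro k hk h
    apply ha (e * k) (Nat.mul_pos he hk)
    rw [pow_mul, ← hs, ← map_pow, h, map_one]
  · rintro p ⟨hp, b, hb⟩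
    obtain ⟨t, ht⟩ := hmem b
    refine ⟨hp, t, hinj ?_⟩
    rw [map_pow, ht, hs, ← pow_mul, mul_comm, pow_mul, hb]

theorem stmt15 {Z Q : Type*} [CommRing Z] [IsDomain Z] [UniqueFactorizationMonoid Z]
    [Field Q] [Algebra Z Q] [IsFractionRing Z Q] [Finite Zˣ]
    (f : Polynomial Z) (hf : Irreducible f) (hdeg : 0 < f.natDegree)
    (hb : f.coeff 0 ≠ 0)
    (hcyc : ∀ k : ℕ, 1 ≤ k → ¬ f.map (algebraMap Z Q) ∣ Polynomial.cyclotomic k Q) :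
    {p : ℕ | p.Prime ∧ ¬ Irreducible (f.comp (X ^ p))}.Finite := by
  classical
  let _ : StrongNormalizationMonoid Z := UniqueFactorizationMonoid.strongNormalizationMonoid
  let _ : NormalizedGCDMonoid Z := UniqueFactorizationMonoid.toNormalizedGCDMonoid Z
  have hprim : f.IsPrimitive := hf.isPrimitive hdeg.ne'
  set fQ := f.map (algebraMap Z Q) with hfQ
  have hirr : Irreducible fQ := (hprim.irreducible_iff_irreducible_map_fraction_map).1 hf
  set c : Q := fQ.leadingCoeff⁻¹ with hc
  have hc0 : c ≠ 0 := inv_ne_zero (leadingCoeff_ne_zero.2 hirr.ne_zero)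
  have hcu : IsUnit (C c : Q[X]) := isUnit_C.2 hc0.isUnit
  set F := fQ * C c with hF
  have hFm : F.Monic := monic_mul_leadingCoeff_inv hirr.ne_zero
  have hFa : Associated fQ F := associated_mul_unit_right _ _ hcu
  have hFi : Irreducible F := hFa.irreducible hirr
  have _ : Fact (Irreducible F) := ⟨hFi⟩
  let K := AdjoinRoot F
  have : FiniteDimensional Q K := (AdjoinRoot.powerBasis hFi.ne_zero).finite
  let a : K := AdjoinRoot.root F
  have hmin : minpoly Q a = F := by
    rw [AdjoinRoot.minpoly_root hFi.ne_zero, hFm.leadingCoeff, inv_one, C_1, mul_one]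
  have hroot : aeval a F = 0 := by
    have h := minpoly.aeval Q a
    rwa [hmin] at h
  have ha0 : a ≠ 0 := by
    intro h
    have h1 : F.coeff 0 = 0 := by
      rw [h] at hroot
      rw [← coeff_zero_eq_aeval_zero'] at hroot
      simpa using hroot
    rw [hF, mul_coeff_zero, coeff_C_zero, mul_eq_zero, hfQ, coeff_map] at h1
    rcases h1 with h1 | h1
    · exact hb (IsFractionRing.injective Z Q (by rw [h1, map_zero]))
    · exact hc0 h1
  have ha : ∀ k : ℕ, 0 < k → a ^ k ≠ 1 := by
    intro k hk h
    have h1 : F ∣ X ^ k - 1 := by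
      rw [← hmin]
      exact minpoly.dvd Q a (by simp [h])
    rw [← prod_cyclotomic_eq_X_pow_sub_one hk, hFi.prime.dvd_finsetProd_iff] at h1
    obtain ⟨d, hd, hdv⟩ := h1
    exact hcyc d (Nat.pos_of_mem_divisors hd) (hFa.dvd.trans hdv)
  refine (roots_finite' (Z := Z) (Q := Q) a ha0 ha).subset ?_
  rintro p ⟨hp, hnot⟩
  refine ⟨hp.pos, ?_⟩
  by_contra hno
  push Not at hno
  apply hnot
  have hcomp : Irreducible (F.comp (X ^ p)) := by
    refine irreducible_comp hFm (monic_X_pow p) hFi ?_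
    intro E _ _ x hx
    have hxint : IsIntegral Q x := by
      by_contra hcon
      rw [minpoly.eq_zero hcon] at hx
      exact hFi.ne_zero hx.symm
    rw [Polynomial.map_pow, map_X]
    refine X_pow_sub_C_irreducible_of_prime hp ?_
    intro b hbp
    let pb := IntermediateField.adjoin.powerBasis hxint
    have hpb : minpoly Q pb.gen = F := by
      rw [IntermediateField.adjoin.powerBasis_gen, IntermediateField.minpoly_gen, hx]
    let φ := pb.lift a (by rw [hpb]; exact hroot)
    have hφ : φ (IntermediateField.AdjoinSimple.gen Q x) = a := by
      have h1 : φ pb.gen = a := pb.lift_gen a _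
      have h2 : pb.gen = IntermediateField.AdjoinSimple.gen Q x :=
        IntermediateField.adjoin.powerBasis_gen hxint
      rw [← h2, h1]
    exact hno (φ b) (by rw [← map_pow, hbp, hφ])
  have hprim' : (f.comp (X ^ p)).IsPrimitive := by
    rw [← expand_eq_comp_X_pow]
    intro r hr
    refine hprim r ?_
    rw [C_dvd_iff_dvd_coeff] at hr ⊢
    intro i
    have := hr (i * p)
    rwa [coeff_expand_mul hp.pos] at this
  rw [hprim'.irreducible_iff_irreducible_map_fraction_map (K := Q), map_comp, Polynomial.map_pow,
    map_X]
  rw [hF, mul_comp, C_comp] at hcomp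
  exact (associated_mul_unit_right _ _ hcu).symm.irreducible hcomp
end

section
/- Let Z = ℤ[i] be the ring of Gaussian integers and let f ∈ Z[X] be a monic polynomial of positive degree that is irreducible in Z[X] and whose constant coefficient equals 8i. Then for every positive integer n that is relatively prime to 6, f(X^n) is irreducible in Z[X]. -/
open Polynomial

lemma aux_pow (y : GaussianInt) (p : ℕ) (hp : p.Prime) (h6 : ¬ p ∣ 6) (m : ℕ)
    (h : y ^ p = (-1) ^ m * (8 * Zsqrtd.sqrtd)) : False := by
  have h1 : (Zsqrtd.norm y).natAbs ^ p = 2 ^ 6 := by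
    have h2 := congrArg (fun z => (Zsqrtd.normMonoidHom z : ℤ).natAbs) h
    have h3 : Zsqrtd.norm (8 * Zsqrtd.sqrtd : GaussianInt) = 64 := by decide
    have h4 : Zsqrtd.norm (-1 : GaussianInt) = 1 := by decide
    simp only [map_pow, map_mul] at h2
    rw [← map_mul] at h2
    change (Zsqrtd.norm y ^ p).natAbs
      = (Zsqrtd.norm (-1 : GaussianInt) ^ m * Zsqrtd.norm (8 * Zsqrtd.sqrtd : GaussianInt)).natAbs at h2
    rw [h3, h4, Int.natAbs_pow] at h2
    simpa using h2
  have hd : (Zsqrtd.norm y).natAbs ∣ 2 ^ 6 := h1 ▸ dvd_pow_self _ hp.ne_zero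
  obtain ⟨k, -, hk⟩ := (Nat.dvd_prime_pow Nat.prime_two).1 hd
  rw [hk, ← pow_mul] at h1
  exact h6 ⟨k, by rw [mul_comm]; exact (Nat.pow_right_injective le_rfl h1).symm⟩

theorem stmt17 (f : Polynomial GaussianInt) (hmonic : f.Monic) (hdeg : 0 < f.natDegree)
    (hf : Irreducible f) (hconst : f.coeff 0 = 8 * Zsqrtd.sqrtd)
    (n : ℕ) (hn : 0 < n) (hcop : Nat.Coprime n 6) :
    Irreducible (f.comp (X ^ n)) := by
  let K := FractionRing GaussianInt
  have hodd : Odd n := by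
    rw [← Nat.not_even_iff_odd, even_iff_two_dvd]
    intro h
    have := Nat.dvd_gcd h (by norm_num : 2 ∣ 6)
    rw [hcop] at this
    omega
  have hXm : (X ^ n : GaussianInt[X]).natDegree ≠ 0 := by simp; omega
  have hcm : (f.comp (X ^ n)).Monic := hmonic.comp (monic_X_pow n) hXm
  have hfK := (hmonic.irreducible_iff_irreducible_map_fraction_map (K := K)).1 hf
  rw [hcm.irreducible_iff_irreducible_map_fraction_map (K := K), Polynomial.map_comp]
  simp only [Polynomial.map_pow, map_X]
  refine irreducible_comp (hmonic.map _) (monic_X_pow n) hfK ?_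
  intro E _ _ x hx
  simp only [Polynomial.map_pow, map_X]
  refine X_pow_sub_C_irreducible_of_odd hodd ?_
  intro p hp hpn b hb
  have hint : IsIntegral K x := minpoly.ne_zero_iff.mp (hx.trans_ne hfK.ne_zero)
  have hN := congrArg (Algebra.norm K) hb
  rw [map_pow, ← IntermediateField.adjoin.powerBasis_gen hint,
    Algebra.PowerBasis.norm_gen_eq_coeff_zero_minpoly,
    IntermediateField.adjoin.powerBasis_gen hint, IntermediateField.minpoly_gen, hx, coeff_map, hconst] at hN
  set m := (IntermediateField.adjoin.powerBasis hint).dim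
  have hN' : (Algebra.norm K b) ^ p
      = algebraMap GaussianInt K ((-1) ^ m * (8 * Zsqrtd.sqrtd)) := by
    rw [hN, map_mul _ ((-1) ^ m), map_pow, map_neg, map_one]
  obtain ⟨y, hy⟩ := IsIntegrallyClosed.exists_algebraMap_eq_of_isIntegral_pow (R := GaussianInt)
    (K := K) hp.pos (hN' ▸ isIntegral_algebraMap)
  rw [← hy, ← map_pow] at hN'
  refine aux_pow y p hp ?_ m (IsFractionRing.injective GaussianInt K hN')
  intro h
  have := Nat.dvd_gcd hpn h
  rw [hcop] at this
  exact hp.one_lt.ne' (Nat.dvd_one.1 this)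
end

section
/- For every integer m ≥ 2 and every prime number p, there is no integer c with c^p = m!, and there is no integer c with c^p = −m!. In other words, neither m! nor −m! is a p-th power in ℤ for any prime p. -/
theorem aux_sq (q : ℕ) (hq : q.Prime) (k : ℕ) (hk : k < q) : ¬ q ^ 2 ∣ (q + k).factorial := by
  induction k with
  | zero =>
    intro h
    rw [add_zero, ← Nat.mul_factorial_pred hq.ne_zero, pow_two] at h
    have h2 := Nat.dvd_of_mul_dvd_mul_left hq.pos h
    have := (hq.dvd_factorial).1 h2
    have := hq.pos
    omega
  | succ k ih =>
    intro h
    apply ih (by omega)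
    rw [← add_assoc, Nat.factorial_succ] at h
    refine Nat.Coprime.dvd_of_dvd_mul_left (Nat.Coprime.pow_left 2 ?_) h
    rw [hq.coprime_iff_not_dvd]
    intro h3
    rw [add_assoc, Nat.dvd_add_right (dvd_refl q)] at h3
    have := Nat.le_of_dvd (by omega) h3
    omega

theorem aux_nat (m : ℕ) (hm : 2 ≤ m) (p : ℕ) (hp : p.Prime) (c : ℕ) :
    c ^ p ≠ m.factorial := by
  intro h
  obtain ⟨q, hq, h1, h2⟩ := Nat.exists_prime_lt_and_le_two_mul (m / 2) (by omega)
  have h3 := aux_sq q hq (m - q) (by omega)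
  rw [show q + (m - q) = m by omega, ← h] at h3
  have h4 : q ∣ c ^ p := by
    rw [h, hq.dvd_factorial]
    omega
  exact h3 ((pow_dvd_pow_of_dvd (hq.dvd_of_dvd_pow h4) 2).trans (pow_dvd_pow c hp.two_le))

theorem stmt18 (m : ℕ) (hm : 2 ≤ m) (p : ℕ) (hp : p.Prime) :
    (¬ ∃ c : ℤ, c ^ p = (m.factorial : ℤ)) ∧ (¬ ∃ c : ℤ, c ^ p = -(m.factorial : ℤ)) := by
  constructor
  · rintro ⟨c, hc⟩
    apply aux_nat m hm p hp c.natAbs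
    rw [← Int.natAbs_pow, hc, Int.natAbs_natCast]
  · rintro ⟨c, hc⟩
    apply aux_nat m hm p hp c.natAbs
    rw [← Int.natAbs_pow, hc, Int.natAbs_neg, Int.natAbs_natCast]
end
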